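/- Fix integers n ≥ 2 and d ≥ 2. Let H(X) ∈ ℤ[X₁,…,Xₙ] be irreducible over ℚ, and set F(Y,X) = Y^d − H(X). Suppose there is no σ ∈ GL_n(ℚ) and no proper subset I ⊊ {1,…,n} such that H(σ(X)) lies in ℚ[(X_i)_{i∈I}] (i.e. H(σ(X)) depends only on the variables indexed by I). Then there exists an integer e(n) ≥ 1 depending only on n such that for every ε > 0 there is a constant C, depending only on n, deg F and ε, with N(F,B) ≤ C · (log(‖F‖+2))^{e(n)} · B^{n−1+1/(n+1)+ε} for all real B ≥ 1. -/

import Mathlib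

open Polynomial

noncomputable section

/-- The rational function field `ℚ(X₁,…,Xₙ)`. -/
abbrev RF (n : ℕ) := FractionRing (MvPolynomial (Fin n) ℚ)

/-- Base change a polynomial `F ∈ ℤ[Y,X₁,…,Xₙ]` (written as a polynomial in `Y`
with coefficients in `ℤ[X₁,…,Xₙ]`) to `ℚ[Y,X₁,…,Xₙ]`. -/
def toQ {n : ℕ} (F : Polynomial (MvPolynomial (Fin n) ℤ)) :
    Polynomial (MvPolynomial (Fin n) ℚ) :=
  F.map (MvPolynomial.map (Int.castRingHom ℚ))

/-- View a polynomial in `ℚ[X][Y]` as a polynomial in `ℚ(X)[Y]`. -/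
def toFracQ {n : ℕ} (F : Polynomial (MvPolynomial (Fin n) ℚ)) : Polynomial (RF n) :=
  F.map (algebraMap (MvPolynomial (Fin n) ℚ) (RF n))

/-- View a polynomial in `ℤ[X][Y]` as a polynomial in `ℚ(X)[Y]`. -/
def toFrac {n : ℕ} (F : Polynomial (MvPolynomial (Fin n) ℤ)) : Polynomial (RF n) :=
  toFracQ (toQ F)

/-- The degree of `F(Y,X)` in the variable `Xᵢ`. -/
def degX {n : ℕ} {R : Type*} [CommSemiring R]
    (F : Polynomial (MvPolynomial (Fin n) R)) (i : Fin n) : ℕ :=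
  F.support.sup fun k => (F.coeff k).degreeOf i

/-- The total degree of `F(Y,X₁,…,Xₙ)` as a polynomial in `n+1` variables. -/
def totalDeg {n : ℕ} {R : Type*} [CommSemiring R]
    (F : Polynomial (MvPolynomial (Fin n) R)) : ℕ :=
  F.support.sup fun k => k + (F.coeff k).totalDegree

/-- `‖g‖`: the maximum absolute value of a coefficient of `g ∈ ℤ[X₁,…,Xₙ]`. -/
def mvNorm {n : ℕ} (g : MvPolynomial (Fin n) ℤ) : ℕ :=
  g.support.sup fun m => (g.coeff m).natAbs

/-- `‖F‖`: the maximum absolute value of a coefficient of `F ∈ ℤ[Y,X₁,…,Xₙ]`. -/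
def polyNorm {n : ℕ} (F : Polynomial (MvPolynomial (Fin n) ℤ)) : ℕ :=
  F.support.sup fun k => mvNorm (F.coeff k)

/-- The counting function
`N(F,B) = #{x ∈ ℤⁿ ∩ [−B,B]ⁿ : ∃ y ∈ ℤ, F(y,x) = 0}`. -/
def NFB {n : ℕ} (F : Polynomial (MvPolynomial (Fin n) ℤ)) (B : ℝ) : ℕ :=
  Set.ncard {x : Fin n → ℤ | (∀ i, |(x i : ℝ)| ≤ B) ∧
    ∃ y : ℤ, Polynomial.eval y (F.map (MvPolynomial.eval x)) = 0}

/-- `F ∈ ℤ[Y,X₁,…,Xₙ]` is absolutely irreducible: irreducible over `ℚ̄`. -/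
def AbsIrred {n : ℕ} (F : Polynomial (MvPolynomial (Fin n) ℤ)) : Prop :=
  Irreducible (F.map (MvPolynomial.map (Int.castRingHom (AlgebraicClosure ℚ))))

/-- `G` has positive degree in `Y` and in each variable `Xᵢ`. -/
def AllPosDeg {n : ℕ} (G : Polynomial (MvPolynomial (Fin n) ℤ)) : Prop :=
  0 < G.natDegree ∧ ∀ i : Fin n, 0 < degX G i

/-- A field extension `M` of `ℚ(X₁,…,Xₙ)` is an `n`-genuine extension: every
`G ∈ ℤ[Y,X₁,…,Xₙ]` irreducible over `ℚ(X)` with `M ≅ ℚ(X)[Y]/(G)` has positive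
degree in each of `Y, X₁, …, Xₙ`. -/
def IsGenuineExt (n : ℕ) (M : Type*) [Field M] [Algebra (RF n) M] : Prop :=
  ∀ G : Polynomial (MvPolynomial (Fin n) ℤ), Irreducible (toFrac G) →
    Nonempty (AdjoinRoot (toFrac G) ≃ₐ[RF n] M) → AllPosDeg G

/-- A field extension `M` of `ℚ(X₁,…,Xₙ)` is strongly `n`-genuine: every
intermediate field strictly containing `ℚ(X)` is `n`-genuine. -/
def IsStronglyGenuineExt (n : ℕ) (M : Type*) [Field M] [Algebra (RF n) M] : Prop :=
  ∀ M' : IntermediateField (RF n) M, M' ≠ ⊥ → IsGenuineExt n M'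

/-- The extension `ℚ(X)[Y]/(Fq)` presented by `Fq ∈ ℚ[X][Y]` is `n`-genuine. -/
def GenuineExtOfQ {n : ℕ} (Fq : Polynomial (MvPolynomial (Fin n) ℚ)) : Prop :=
  ∀ G : Polynomial (MvPolynomial (Fin n) ℤ), Irreducible (toFrac G) →
    Nonempty (AdjoinRoot (toFrac G) ≃ₐ[RF n] AdjoinRoot (toFracQ Fq)) → AllPosDeg G

/-- The extension `ℚ(X)[Y]/(Fq)` presented by `Fq ∈ ℚ[X][Y]` is strongly
`n`-genuine: for any field `M` isomorphic over `ℚ(X)` to `ℚ(X)[Y]/(Fq)`, every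
intermediate field strictly containing `ℚ(X)` is `n`-genuine. -/
def StronglyGenuineExtOfQ {n : ℕ} (Fq : Polynomial (MvPolynomial (Fin n) ℚ)) : Prop :=
  ∀ (M : Type) [Field M] [Algebra (RF n) M],
    Nonempty (AdjoinRoot (toFracQ Fq) ≃ₐ[RF n] M) → IsStronglyGenuineExt n M

/-- An absolutely irreducible `F ∈ ℤ[Y,X₁,…,Xₙ]` is an `n`-genuine polynomial. -/
def IsGenuinePoly {n : ℕ} (F : Polynomial (MvPolynomial (Fin n) ℤ)) : Prop :=
  AbsIrred F ∧ GenuineExtOfQ (toQ F)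

/-- An absolutely irreducible `F ∈ ℤ[Y,X₁,…,Xₙ]` is a strongly `n`-genuine polynomial. -/
def IsStronglyGenuinePoly {n : ℕ} (F : Polynomial (MvPolynomial (Fin n) ℤ)) : Prop :=
  AbsIrred F ∧ StronglyGenuineExtOfQ (toQ F)

/-- The ring map `ℚ[X₁,…,Xₙ] → ℚ[X₁,…,Xₙ]` induced by the linear substitution
`Xᵢ ↦ Σⱼ σᵢⱼ Xⱼ`. -/
def lsubMv {n : ℕ} (σ : Matrix (Fin n) (Fin n) ℚ) :
    MvPolynomial (Fin n) ℚ →+* MvPolynomial (Fin n) ℚ :=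
  (MvPolynomial.aeval (R := ℚ)
    fun i => ∑ j, MvPolynomial.C (σ i j) * MvPolynomial.X j).toRingHom

/-- `F_σ(Y,X) := F(Y,σ(X))` for a linear change of variables `σ`. -/
def applyGL {n : ℕ} (σ : Matrix (Fin n) (Fin n) ℚ)
    (Fq : Polynomial (MvPolynomial (Fin n) ℚ)) : Polynomial (MvPolynomial (Fin n) ℚ) :=
  Fq.map (lsubMv σ)

/-- `F` is `(1,n)`-allowable: absolutely irreducible, monic in `Y`, and
`ℚ(X)[Y]/(F_σ)` is an `n`-genuine extension for every `σ ∈ GLₙ(ℚ)`. -/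
def IsAllowable {n : ℕ} (F : Polynomial (MvPolynomial (Fin n) ℤ)) : Prop :=
  AbsIrred F ∧ F.Monic ∧
    ∀ σ : Matrix (Fin n) (Fin n) ℚ, IsUnit σ.det → GenuineExtOfQ (applyGL σ (toQ F))

/-- `F` is strongly `(1,n)`-allowable: absolutely irreducible, monic in `Y`, and
`ℚ(X)[Y]/(F_σ)` is a strongly `n`-genuine extension for every `σ ∈ GLₙ(ℚ)`. -/
def IsStronglyAllowable {n : ℕ} (F : Polynomial (MvPolynomial (Fin n) ℤ)) : Prop :=
  AbsIrred F ∧ F.Monic ∧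
    ∀ σ : Matrix (Fin n) (Fin n) ℚ, IsUnit σ.det → StronglyGenuineExtOfQ (applyGL σ (toQ F))

/-- `F` has the form (1.2) with parameter `m`:
`F = Y^{md} + f₁(X) Y^{m(d-1)} + ⋯ + f_{d-1}(X) Y^m + f_d(X)` with `f_d ≠ 0`. -/
def HasForm (n m : ℕ) (F : Polynomial (MvPolynomial (Fin n) ℤ)) : Prop :=
  ∃ (d : ℕ) (f : ℕ → MvPolynomial (Fin n) ℤ), 1 ≤ d ∧ f d ≠ 0 ∧
    F = Polynomial.X ^ (m * d) +
      ∑ j ∈ Finset.Icc 1 d, Polynomial.C (f j) * Polynomial.X ^ (m * (d - j))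

/-- `P` has a linear factor in `Y`: `P = (Y − Q(X))·H̃(Y,X)`. -/
def HasLinearFactorY {n : ℕ} {R : Type*} [CommRing R]
    (P : Polynomial (MvPolynomial (Fin n) R)) : Prop :=
  ∃ (Q : MvPolynomial (Fin n) R) (H : Polynomial (MvPolynomial (Fin n) R)),
    P = (Polynomial.X - Polynomial.C Q) * H

/-- The canonical map `ℚ[X₁,…,Xₙ] → ℚ(X)[Y]/(F)`. -/
def structMap {n : ℕ} (F : Polynomial (MvPolynomial (Fin n) ℤ)) :
    MvPolynomial (Fin n) ℚ →+* AdjoinRoot (toFrac F) :=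
  (algebraMap (RF n) (AdjoinRoot (toFrac F))).comp
    (algebraMap (MvPolynomial (Fin n) ℚ) (RF n))

/-- `z ∈ ℚ(X)[Y]/(F)` lies in the subfield `ℚ((Xᵢ)_{i≠j})`: it can be written
as a quotient of two polynomials not involving `Xⱼ`. -/
def CoordMem {n : ℕ} (j : Fin n) (F : Polynomial (MvPolynomial (Fin n) ℤ))
    (z : AdjoinRoot (toFrac F)) : Prop :=
  ∃ a b : MvPolynomial (Fin n) ℚ,
    MvPolynomial.degreeOf j a = 0 ∧ MvPolynomial.degreeOf j b = 0 ∧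
    structMap F b ≠ 0 ∧ z * structMap F b = structMap F a

/-- `z ∈ ℚ(X)[Y]/(F)` is algebraic over the subfield `ℚ((Xᵢ)_{i≠j})`. -/
def AlgOverCoord {n : ℕ} (j : Fin n) (F : Polynomial (MvPolynomial (Fin n) ℤ))
    (z : AdjoinRoot (toFrac F)) : Prop :=
  ∃ P : Polynomial (AdjoinRoot (toFrac F)), P ≠ 0 ∧ (∀ k, CoordMem j F (P.coeff k)) ∧
    Polynomial.eval z P = 0

/-- Substitute `Xᵢ = xᵢ` for `i ∈ I` into `F`, over `ℚ̄`. -/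
def substSome {n : ℕ} (I : Finset (Fin n)) (x : Fin n → ℚ)
    (F : Polynomial (MvPolynomial (Fin n) ℤ)) :
    Polynomial (MvPolynomial (Fin n) (AlgebraicClosure ℚ)) :=
  (toQ F).map
    ((MvPolynomial.aeval (R := ℚ) fun i =>
      if i ∈ I then MvPolynomial.C (algebraMap ℚ (AlgebraicClosure ℚ) (x i))
      else MvPolynomial.X i).toRingHom)

/-- Substitute `Xᵢ = xᵢ` for all `i ≠ i₀` into `F`, over `ℚ̄`. -/
def substKeepFirst {n : ℕ} (i0 : Fin n) (x : {i : Fin n // i ≠ i0} → ℤ)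
    (F : Polynomial (MvPolynomial (Fin n) ℤ)) :
    Polynomial (MvPolynomial (Fin n) (AlgebraicClosure ℚ)) :=
  F.map
    ((MvPolynomial.aeval (R := ℤ) fun i =>
      if h : i = i0 then (MvPolynomial.X i : MvPolynomial (Fin n) (AlgebraicClosure ℚ))
      else MvPolynomial.C ((x ⟨i, h⟩ : ℤ) : AlgebraicClosure ℚ)).toRingHom)

/-- `‖L‖`: maximum absolute value of an entry of an integer matrix. -/
def matNorm {n : ℕ} (L : Matrix (Fin n) (Fin n) ℤ) : ℕ :=
  Finset.univ.sup fun p : Fin n × Fin n => (L p.1 p.2).natAbs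

/-- The standard additive character `e_p(a) = exp(2πi a/p)` on `ZMod p`. -/
def eZp (p : ℕ) (a : ZMod p) : ℂ :=
  Complex.exp (2 * Real.pi * Complex.I * (a.val : ℂ) / (p : ℂ))

/-!
Let `l` be a prime factor of `d`. If `H(x)` is a nonzero `d`-th power, it is an `l`-th power residue
modulo all but few of the primes `p ≡ 1 mod l` with `p ≤ P = B ^ (n / (n + 1))`, so the
power-residue detectors of these primes, which have mean close to zero, add up to a large value
at `x`. The number of such `x` is therefore controlled by the second moment of the sum of the
detectors over the box.

The detector of `p` is `p`-periodic. To estimate the correlation of the detectors of `p` and `q`,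
average over the shifts of `x` by `q z + p z'` with `z`, `z'` in a box of side `Z = B / P`: the two
kinds of shifts affect the two detectors separately, and Cauchy–Schwarz leaves the complete
correlations, modulo a single prime, of a detector with its own translates by small vectors `w`.
These are sums over the lines in the direction `w`. When `H` restricted to such a line is
nonconstant and squarefree modulo `p`, Stepanov's method gives square-root cancellation.

The hypothesis on `H` says exactly that its restriction to the generic line in every rational
direction is nonconstant; irreducibility makes it separable. Hence a nonzero polynomial,
a leading coefficient times a resultant, vanishes at the base points of the bad lines. For a given
direction this singles out few lines modulo `p`, except for the `p` dividing a fixed nonzero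
integer of polynomial size; this is the source of the factor `log (‖F‖ + 2)`.
-/

open scoped Finset

/-! ### Stepanov's method for power residues of polynomial values -/

theorem natDegree_det_le_sum {R ι : Type*} [CommRing R] [Fintype ι] [DecidableEq ι]
    {M : Matrix ι ι R[X]} {b : ι → ℕ} (h : ∀ i j, (M i j).natDegree ≤ b j) :
    M.det.natDegree ≤ ∑ j, b j := by
  rw [Matrix.det_apply]
  refine natDegree_sum_le_of_forall_le _ _ fun σ _ => (natDegree_smul_le _ _).trans ?_
  exact (natDegree_prod_le _ _).trans (Finset.sum_le_sum fun i _ => h _ _)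

theorem natDegree_resultant_le {R : Type*} [CommRing R] {f g : R[X][X]} (m n : ℕ) {a b : ℕ}
    (hf : ∀ i, (f.coeff i).natDegree ≤ a) (hg : ∀ i, (g.coeff i).natDegree ≤ b) :
    (resultant f g m n).natDegree ≤ m * b + n * a := by
  have hentry : ∀ i j, (sylvester f g m n i j).natDegree ≤
      Fin.addCases (motive := fun _ => ℕ) (fun _ => b) (fun _ => a) j := by
    intro i j
    induction j using Fin.addCases with
    | left j => simp only [sylvester, Matrix.of_apply, Fin.addCases_left]; split_ifs <;> simp [hg]
    | right j =>
      simp only [sylvester, Matrix.of_apply, Fin.addCases_right]; split_ifs <;> simp [hf]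
  refine (natDegree_det_le_sum hentry).trans (le_of_eq ?_)
  simp [Fin.sum_univ_add]

theorem pow_ne_unit_div_of_squarefree {R K : Type*} [CommRing R] [IsDomain R]
    [IsIntegrallyClosed R] [Field K] [Algebra R K] [IsFractionRing R K] {f u : R}
    (hf : Squarefree f) (hf' : ¬ IsUnit f) (hu : IsUnit u) {l : ℕ} (hl : 2 ≤ l) (b : K) :
    b ^ l ≠ algebraMap R K u / algebraMap R K f := by
  obtain ⟨u, rfl⟩ := hu
  intro hb
  have hpow : b⁻¹ ^ l = algebraMap R K (↑u⁻¹ * f) := by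
    rw [inv_pow, hb, inv_div, map_mul, div_eq_inv_mul, map_units_inv]
  obtain ⟨g, hg⟩ := IsIntegrallyClosed.exists_algebraMap_eq_of_isIntegral_pow (R := R)
    (show 0 < l by omega) (hpow ▸ isIntegral_algebraMap)
  rw [← hg, ← map_pow] at hpow
  have hgl : g ^ l = ↑u⁻¹ * f := IsFractionRing.injective R K hpow
  have hgu : IsUnit g := hf g <| by
    rw [← sq, ← u⁻¹.isUnit.dvd_mul_left (a := g ^ 2), ← hgl]
    exact pow_dvd_pow g hl
  exact hf' ((IsUnit.mul_left_iff u⁻¹.isUnit).1 (hgl ▸ hgu.pow l))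

theorem resultant_C_mul_X_pow_sub_C_ne_zero {R : Type*} [CommRing R] [IsDomain R]
    [IsIntegrallyClosed R] {f u : R} (hf : Squarefree f) (hf' : ¬ IsUnit f) (hu : IsUnit u)
    {l : ℕ} (hl : l.Prime) {Q : R[X]} (hQ : Q ≠ 0) (hQl : Q.natDegree < l) :
    resultant (C f * X ^ l - C u) Q l Q.natDegree ≠ 0 := by
  intro hres
  set φ := algebraMap R (FractionRing R)
  have hφ : Function.Injective φ := IsFractionRing.injective _ _
  have hfφ : φ f ≠ 0 := (map_ne_zero_iff φ hφ).2 hf.ne_zero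
  have hfactor : (C f * X ^ l - C u).map φ = C (φ f) * (X ^ l - C (φ u / φ f)) := by
    rw [mul_sub, ← C_mul, mul_div_cancel₀ _ hfφ]
    simp
  have hdeg : ((C f * X ^ l - C u).map φ).natDegree = l := by
    rw [natDegree_map_eq_of_injective hφ, natDegree_sub_C, natDegree_C_mul_X_pow _ _ hf.ne_zero]
  have hmap : resultant ((C f * X ^ l - C u).map φ) (Q.map φ) = 0 := by
    rw [hdeg, natDegree_map_eq_of_injective hφ, resultant_map_map, hres, map_zero]
  refine (resultant_eq_zero_iff.1 hmap).2 ?_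
  have hirr : Irreducible (X ^ l - C (φ u / φ f)) :=
    (X_pow_sub_C_irreducible_iff_of_prime hl).2
      (pow_ne_unit_div_of_squarefree hf hf' hu hl.two_le)
  rw [hfactor, isCoprime_mul_unit_left_left (isUnit_C.2 hfφ.isUnit), hirr.coprime_iff_not_dvd]
  intro hdvd
  have := natDegree_le_of_dvd hdvd ((Polynomial.map_ne_zero_iff hφ).2 hQ)
  rw [natDegree_map_eq_of_injective hφ, natDegree_X_pow_sub_C] at this
  omega

theorem X_pow_dvd_pow_sub_C_coeff_zero {p : ℕ} [Fact p.Prime] (f : (ZMod p)[X]) :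
    X ^ p ∣ f ^ p - C (f.coeff 0) := by
  obtain ⟨g, hg⟩ : X ∣ f - C (f.coeff 0) := by simp [X_dvd_iff]
  refine ⟨expand (ZMod p) p g, ?_⟩
  have := congrArg (expand (ZMod p) p) hg
  rwa [map_sub, map_mul, expand_C, expand_X, ZMod.expand_card] at this

theorem dvd_resultant_of_dvd_eval {R : Type*} [CommRing R] {P Q : R[X]} {m n : ℕ}
    (hP : P.natDegree ≤ m) (hQ : Q.natDegree ≤ n) (h : m ≠ 0 ∨ n ≠ 0) {a x : R}
    (haP : a ∣ P.eval x) (haQ : a ∣ Q.eval x) : a ∣ resultant P Q m n := by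
  obtain ⟨U, V, -, -, hUV⟩ := exists_mul_add_mul_eq_C_resultant P Q hP hQ h
  have := congrArg (eval x) hUV
  rw [eval_add, eval_mul, eval_mul, eval_C] at this
  exact this ▸ dvd_add (haP.mul_right _) (haQ.mul_right _)

theorem coeff_sum_fin_C_mul_X_pow {R : Type*} [Semiring R] {l : ℕ} (r : Fin l → R) (i : ℕ) :
    (∑ j : Fin l, C (r j) * X ^ (j : ℕ)).coeff i = if h : i < l then r ⟨i, h⟩ else 0 := by
  simp only [finsetSum_coeff, coeff_C_mul, coeff_X_pow, mul_ite, mul_one, mul_zero]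
  split_ifs with h
  · rw [Finset.sum_eq_single ⟨i, h⟩] <;> aesop
  · exact Finset.sum_eq_zero fun j _ => if_neg (by omega)

theorem sum_mul_pow_not_X_pow_dvd {p l e A : ℕ} [Fact p.Prime] (hl : l.Prime)
    (he : e * l = p - 1) {f : (ZMod p)[X]} (hf : Squarefree f) (hdeg : 1 ≤ f.natDegree)
    (h0 : f.coeff 0 ≠ 0) {r : Fin l → (ZMod p)[X]} (hr : ∀ j, (r j).degree < A)
    (hA : l * (A - 1) + (l - 1) * f.natDegree < p) (hr0 : r ≠ 0) :
    ¬ X ^ p ∣ ∑ j : Fin l, r j * f ^ (j * e : ℕ) := by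
  intro hdvd
  have hp := (Fact.out : p.Prime).pos
  -- `f ^ e` is a common root modulo `X ^ p` of `G` and `Q`, so `X ^ p` divides their resultant.
  set Q : (ZMod p)[X][X] := ∑ j : Fin l, C (r j) * X ^ (j : ℕ) with hQ
  set G : (ZMod p)[X][X] := C f * X ^ l - C (C (f.coeff 0)) with hG
  have hQcoeff (i : ℕ) : Q.coeff i = if h : i < l then r ⟨i, h⟩ else 0 :=
    coeff_sum_fin_C_mul_X_pow r i
  have hQdeg : Q.natDegree ≤ l - 1 := natDegree_sum_le_of_forall_le _ _ fun j _ =>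
    (natDegree_C_mul_X_pow_le _ _).trans (by omega)
  have hQ0 : Q ≠ 0 := by
    contrapose! hr0
    ext1 j
    simpa [hr0] using (hQcoeff j).symm
  have hGcoeff (i : ℕ) : (G.coeff i).natDegree ≤ f.natDegree := by
    rw [hG, coeff_sub, coeff_C_mul, coeff_X_pow, coeff_C]
    refine (natDegree_sub_le _ _).trans ?_
    split_ifs <;> simp
  have hQcoeff_deg (i : ℕ) : (Q.coeff i).natDegree ≤ A - 1 := by
    rw [hQcoeff]
    split_ifs with h
    · rcases eq_or_ne (r ⟨i, h⟩) 0 with h' | h'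
      · simp [h']
      · have := (natDegree_lt_iff_degree_lt h').2 (hr ⟨i, h⟩)
        omega
    · simp
  have hres0 : resultant G Q l Q.natDegree ≠ 0 :=
    resultant_C_mul_X_pow_sub_C_ne_zero hf (fun h => by rw [natDegree_eq_zero_of_isUnit h] at hdeg
                                                        omega)
      (isUnit_C.2 h0.isUnit) hl hQ0 (by have := hl.pos; omega)
  have hres_deg := natDegree_resultant_le l Q.natDegree hGcoeff hQcoeff_deg
  have hGdeg : G.natDegree ≤ l := by
    rw [hG, natDegree_sub_C]
    exact natDegree_C_mul_X_pow_le _ _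
  have hQe : X ^ p ∣ Q.eval (f ^ e) := by
    simpa [hQ, eval_finsetSum, ← pow_mul, mul_comm e] using hdvd
  have hGe : X ^ p ∣ G.eval (f ^ e) := by
    have hep : f * (f ^ e) ^ l = f ^ p := by
      rw [← pow_mul, he, ← pow_succ', Nat.sub_add_cancel hp]
    simpa [hG, hep] using X_pow_dvd_pow_sub_C_coeff_zero f
  have := natDegree_le_of_dvd
    (dvd_resultant_of_dvd_eval hGdeg le_rfl (Or.inl hl.ne_zero) hGe hQe) hres0
  rw [natDegree_X_pow] at this
  have := Nat.mul_le_mul_right f.natDegree hQdeg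
  omega

theorem eq_zero_of_sum_pow_mul_eq_zero {R : Type*} [CommRing R] [IsDomain R] {x : R}
    (hx : x ≠ 0) {K : ℕ} {u : Fin K → R} (hu : ∀ k, x ∣ u k → u k = 0)
    (hsum : ∑ k : Fin K, x ^ (k : ℕ) * u k = 0) : u = 0 := by
  induction K with
  | zero => exact Subsingleton.elim _ _
  | succ K ih =>
    have hsplit : u 0 + x * ∑ k : Fin K, x ^ (k : ℕ) * u k.succ = 0 := by
      simpa [Fin.sum_univ_succ, pow_succ', mul_assoc, Finset.mul_sum] using hsum
    have hu0 : u 0 = 0 := hu 0 ((dvd_add_left (dvd_mul_right _ _)).1 (hsplit ▸ dvd_zero x))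
    have hsucc := ih (fun k => hu k.succ) (by simpa [hu0, hx] using hsplit)
    ext k
    refine Fin.cases hu0 (fun k => congrFun hsucc k) k

/-- Stepanov's differential operator: `stepanovOp f N s q` is the cofactor of `f ^ (N - s)` in the
`s`-th derivative of `f ^ N * q`. The subtraction is truncated, so this is meant for `s ≤ N`. -/
def stepanovOp {R : Type*} [CommRing R] (f : R[X]) (N : ℕ) : ℕ → R[X] →ₗ[R] R[X]
  | 0 => LinearMap.id
  | s + 1 => LinearMap.mulLeft R f ∘ₗ derivative ∘ₗ stepanovOp f N s +
      LinearMap.mulLeft R (C ((N - s : ℕ) : R) * derivative f) ∘ₗ stepanovOp f N s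

theorem stepanovOp_succ {R : Type*} [CommRing R] (f : R[X]) (N s : ℕ) (q : R[X]) :
    stepanovOp f N (s + 1) q = f * derivative (stepanovOp f N s q) +
      C ((N - s : ℕ) : R) * derivative f * stepanovOp f N s q := rfl

theorem natDegree_stepanovOp_le {R : Type*} [CommRing R] (f : R[X]) (N s : ℕ) (q : R[X]) :
    (stepanovOp f N s q).natDegree ≤ q.natDegree + s * f.natDegree := by
  induction s with
  | zero => simp [stepanovOp]
  | succ s ih =>
    have h₁ := natDegree_derivative_le (stepanovOp f N s q)
    have h₂ := natDegree_derivative_le f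
    have h₃ := natDegree_C_mul_le ((N - s : ℕ) : R) (derivative f)
    rw [stepanovOp_succ, add_one_mul]
    refine (natDegree_add_le _ _).trans (max_le ?_ ?_) <;>
      exact natDegree_mul_le.trans (by omega)

theorem iterate_derivative_pow_mul_mul {R : Type*} [CommRing R] (f : R[X]) {N s : ℕ} (hs : s ≤ N)
    (q : R[X]) {h : R[X]} (hh : derivative h = 0) :
    derivative^[s] (f ^ N * q * h) = f ^ (N - s) * stepanovOp f N s q * h := by
  induction s with
  | zero => simp [stepanovOp]
  | succ s ih =>
    obtain ⟨k, hk⟩ : ∃ k, N - s = k + 1 := ⟨N - s - 1, by omega⟩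
    rw [Function.iterate_succ_apply', ih (by omega), stepanovOp_succ, hk,
      show N - (s + 1) = k by omega, derivative_mul, hh, derivative_mul, derivative_pow,
      Nat.add_sub_cancel]
    ring

theorem exists_ne_zero_forall_apply_eq_zero {F V : Type*} [Field F] [AddCommGroup V] [Module F V]
    {M L : ℕ} (T : Fin M → V →ₗ[F] F[X]) (hT : ∀ s v, (T s v).degree < L)
    (hdim : M * L < Module.finrank F V) : ∃ v ≠ 0, ∀ s, T s v = 0 := by
  have := Module.finite_of_finrank_pos (Nat.zero_lt_of_lt hdim)
  let Φ : V →ₗ[F] Fin M → degreeLT F L :=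
    LinearMap.pi fun s => (T s).codRestrict _ fun v => mem_degreeLT.2 (hT s v)
  have := (degreeLTEquiv F L).symm.finiteDimensional
  have hker : LinearMap.ker Φ ≠ ⊥ := by
    apply LinearMap.ker_ne_bot_of_finrank_lt
    simpa [Module.finrank_pi_fintype, (degreeLTEquiv F L).finrank_eq] using hdim
  obtain ⟨v, hv, hv0⟩ := (Submodule.ne_bot_iff _).1 hker
  exact ⟨v, hv0, fun s => congrArg Subtype.val (congrFun hv s)⟩

theorem exists_stepanov_coeffs {F : Type*} [Field F] (f : F[X]) (a : F) {l e A M K : ℕ}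
    (hA : 1 ≤ A) (hcount : M * (A + M * f.natDegree + K) < l * K * A) :
    ∃ r : Fin l → Fin K → F[X], r ≠ 0 ∧ (∀ j k, (r j k).degree < A) ∧
      ∀ s < M, ∑ j : Fin l, ∑ k : Fin K, C a ^ (j : ℕ) * X ^ (k : ℕ) *
        stepanovOp f (M + j * e) s (r j k) = 0 := by
  let T (s : Fin M) : (Fin l → Fin K → degreeLT F A) →ₗ[F] F[X] :=
    ∑ j : Fin l, ∑ k : Fin K, LinearMap.mulLeft F (C a ^ (j : ℕ) * X ^ (k : ℕ)) ∘ₗ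
      stepanovOp f (M + j * e) s ∘ₗ (degreeLT F A).subtype ∘ₗ LinearMap.proj k ∘ₗ LinearMap.proj j
  have hT (s : Fin M) (v) : T s v = ∑ j : Fin l, ∑ k : Fin K, C a ^ (j : ℕ) * X ^ (k : ℕ) *
      stepanovOp f (M + j * e) s (v j k) := by
    simp [T, LinearMap.sum_apply, mul_assoc]
  have hterm (s : Fin M) (v : Fin l → Fin K → degreeLT F A)
      (j : Fin l) (k : Fin K) :
      (C a ^ (j : ℕ) * X ^ (k : ℕ) * stepanovOp f (M + j * e) s (v j k)).degree <
        ((A + M * f.natDegree + K : ℕ) : WithBot ℕ) := by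
    refine degree_le_natDegree.trans_lt (Nat.cast_lt.2 ?_)
    have hv : (v j k : F[X]).natDegree < A := by
      rcases eq_or_ne (v j k : F[X]) 0 with h | h
      · simpa [h, Nat.pos_iff_ne_zero, Nat.one_le_iff_ne_zero] using hA
      · exact (natDegree_lt_iff_degree_lt h).2 (mem_degreeLT.1 (v j k).2)
    have hop := natDegree_stepanovOp_le f (M + j * e) s (v j k)
    have hs : (s : ℕ) * f.natDegree ≤ M * f.natDegree := Nat.mul_le_mul_right _ s.2.le
    have hmon : (C a ^ (j : ℕ) * X ^ (k : ℕ) : F[X]).natDegree ≤ k := by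
      rw [← C_pow]
      exact natDegree_C_mul_X_pow_le _ _
    exact natDegree_mul_le.trans_lt (by omega)
  obtain ⟨v, hv0, hv⟩ := exists_ne_zero_forall_apply_eq_zero T (L := A + M * f.natDegree + K)
    (fun s v => by
      rw [hT, ← mem_degreeLT]
      exact Submodule.sum_mem _ fun j _ => Submodule.sum_mem _ fun k _ =>
        mem_degreeLT.2 (hterm s v j k))
    (by simpa [Module.finrank_pi_fintype, (degreeLTEquiv F A).finrank_eq, mul_assoc] using hcount)
  refine ⟨fun j k => v j k, fun h => hv0 ?_, fun j k => mem_degreeLT.1 (v j k).2, fun s hs => ?_⟩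
  · exact funext fun j => funext fun k => Subtype.ext (congrFun (congrFun h j) k)
  · rw [← hT ⟨s, hs⟩, hv]

theorem mul_card_le_natDegree_of_le_rootMultiplicity {R : Type*} [CommRing R] [IsDomain R]
    {q : R[X]} {S : Finset R} {M : ℕ} (hS : ∀ t ∈ S, M ≤ q.rootMultiplicity t) :
    M * S.card ≤ q.natDegree := by
  classical
  calc M * S.card ≤ ∑ t ∈ S, q.roots.count t := by
        rw [mul_comm, ← smul_eq_mul]
        exact Finset.card_nsmul_le_sum _ _ _ fun t ht => (hS t ht).trans (count_roots q).ge
    _ ≤ ∑ t ∈ S ∪ q.roots.toFinset, q.roots.count t :=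
        Finset.sum_le_sum_of_subset Finset.subset_union_left
    _ = q.roots.card :=
        Multiset.sum_count_eq_card fun t ht => Finset.mem_union_right _ (Multiset.mem_toFinset.2 ht)
    _ ≤ q.natDegree := card_roots' q

/-- Stepanov's auxiliary polynomial, with coefficients `r j k` to be chosen. -/
def stepanovPoly {p l K : ℕ} (f : (ZMod p)[X]) (M e : ℕ) (r : Fin l → Fin K → (ZMod p)[X]) :
    (ZMod p)[X] :=
  ∑ j : Fin l, ∑ k : Fin K, f ^ (M + j * e : ℕ) * r j k * X ^ (p * k : ℕ)

section

variable {p l e A K M : ℕ} [Fact p.Prime] {f : (ZMod p)[X]} {r : Fin l → Fin K → (ZMod p)[X]}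

theorem stepanovPoly_ne_zero (hl : l.Prime) (he : e * l = p - 1) (hf : Squarefree f)
    (hdeg : 1 ≤ f.natDegree) (h0 : f.coeff 0 ≠ 0)
    (hA : l * (A - 1) + (l - 1) * f.natDegree < p) (hr : ∀ j k, (r j k).degree < A) (hr0 : r ≠ 0) :
    stepanovPoly f M e r ≠ 0 := by
  intro hzero
  set u : Fin K → (ZMod p)[X] := fun k => ∑ j : Fin l, r j k * f ^ (j * e : ℕ)
  have hfactor : stepanovPoly f M e r = f ^ M * ∑ k : Fin K, (X ^ p) ^ (k : ℕ) * u k := by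
    simp only [stepanovPoly, u, Finset.mul_sum, pow_add, pow_mul]
    rw [Finset.sum_comm]
    exact Finset.sum_congr rfl fun k _ => Finset.sum_congr rfl fun j _ => by ring
  have hr_of_dvd (k) (hk : X ^ p ∣ u k) : (fun j => r j k) = 0 := by
    by_contra h
    exact sum_mul_pow_not_X_pow_dvd hl he hf hdeg h0 (fun j => hr j k) hA h hk
  have hu : u = 0 := eq_zero_of_sum_pow_mul_eq_zero (x := X ^ p) (pow_ne_zero _ X_ne_zero)
    (fun k hk => by simp [u, fun j => congrFun (hr_of_dvd k hk) j])
    ((mul_eq_zero.1 (hfactor ▸ hzero)).resolve_left (pow_ne_zero _ hf.ne_zero))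
  refine hr0 (funext fun j => funext fun k => congrFun (hr_of_dvd k ?_) j)
  simp [hu]

theorem natDegree_stepanovPoly_le (he : e * l = p - 1) (hr : ∀ j k, (r j k).degree < A) :
    (stepanovPoly f M e r).natDegree ≤ M * f.natDegree + A + p * f.natDegree + p * K := by
  refine natDegree_sum_le_of_forall_le Finset.univ _ fun j _ =>
    natDegree_sum_le_of_forall_le Finset.univ _ fun k _ => ?_
  have hje : (j : ℕ) * e ≤ p := by
    have := Nat.mul_le_mul_right e j.2.le
    rw [mul_comm l e, he] at this
    omega
  have hpow : (f ^ (M + j * e : ℕ)).natDegree ≤ M * f.natDegree + p * f.natDegree := by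
    rw [natDegree_pow, ← add_mul]
    exact Nat.mul_le_mul_right _ (by omega)
  have hrdeg : (r j k).natDegree ≤ A := natDegree_le_of_degree_le (hr j k).le
  have hX : (X ^ (p * k : ℕ) : (ZMod p)[X]).natDegree ≤ p * K := by
    rw [natDegree_X_pow]
    exact Nat.mul_le_mul_left _ k.2.le
  have := natDegree_mul_le (p := f ^ (M + j * e : ℕ)) (q := r j k)
  exact natDegree_mul_le.trans (by omega)

theorem le_rootMultiplicity_stepanovPoly (hMp : M ≤ p) {a t : ZMod p}
    (hr : ∀ s < M, ∑ j : Fin l, ∑ k : Fin K, C a ^ (j : ℕ) * X ^ (k : ℕ) *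
      stepanovOp f (M + j * e) s (r j k) = 0)
    (hR : stepanovPoly f M e r ≠ 0) (ht : f.eval t ^ e = a) :
    M ≤ (stepanovPoly f M e r).rootMultiplicity t := by
  rcases Nat.eq_zero_or_pos M with rfl | hM
  · exact Nat.zero_le _
  have hroot : ∀ s < M, (derivative^[s] (stepanovPoly f M e r)).IsRoot t := by
    intro s hs
    have hterm (j : Fin l) (k : Fin K) :
        (derivative^[s] (f ^ (M + j * e : ℕ) * r j k * X ^ (p * k : ℕ))).eval t =
          f.eval t ^ (M - s) * (C a ^ (j : ℕ) * X ^ (k : ℕ) *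
            stepanovOp f (M + j * e) s (r j k)).eval t := by
      rw [iterate_derivative_pow_mul_mul f (by omega) _ (by simp [derivative_X_pow]),
        show M + j * e - s = M - s + e * j by rw [mul_comm e]; omega]
      simp only [eval_mul, eval_pow, eval_X, eval_C, pow_add, pow_mul, ht, ZMod.pow_card]
      ring
    have := congrArg (eval t) (hr s hs)
    simp only [eval_finsetSum, eval_zero] at this
    simp only [stepanovPoly, iterate_derivative_sum, IsRoot.def, eval_finsetSum, hterm,
      ← Finset.mul_sum, this, mul_zero]
  refine Nat.le_of_pred_lt (lt_rootMultiplicity_of_isRoot_iterate_derivative_of_mem_nonZeroDivisors'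
    hR (fun s hs => hroot s (by rw [Nat.pred_eq_sub_one] at hs; omega)) fun s hs hs0 => ?_)
  rw [mem_nonZeroDivisors_iff_ne_zero, Ne, ZMod.natCast_eq_zero_iff]
  intro hdvd
  have := Nat.le_of_dvd (by omega) hdvd
  rw [Nat.pred_eq_sub_one] at hs
  omega

theorem stepanov_card_le (hl : l.Prime) (he : e * l = p - 1) (hf : Squarefree f)
    (hdeg : 1 ≤ f.natDegree) (h0 : f.coeff 0 ≠ 0) (hA1 : 1 ≤ A) (hMp : M ≤ p)
    (hA : l * (A - 1) + (l - 1) * f.natDegree < p)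
    (hcount : M * (A + M * f.natDegree + K) < l * K * A) (a : ZMod p) :
    M * (Finset.univ.filter fun t => f.eval t ^ e = a).card ≤
      M * f.natDegree + A + p * f.natDegree + p * K := by
  obtain ⟨r, hr0, hrdeg, hr⟩ := exists_stepanov_coeffs f a (e := e) hA1 hcount
  have hR : stepanovPoly f M e r ≠ 0 := stepanovPoly_ne_zero hl he hf hdeg h0 hA hrdeg hr0
  exact (mul_card_le_natDegree_of_le_rootMultiplicity fun t ht =>
    le_rootMultiplicity_stepanovPoly hMp hr hR (Finset.mem_filter.1 ht).2).trans
      (natDegree_stepanovPoly_le he hrdeg)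

end

theorem mul_add_lt_of_stepanov_gap_le {l d c : ℕ} (hl : 2 ≤ l) (hc : 4 * l * (l * d + 2) ≤ c) :
    2 * l + 2 * (l * d) ≤ c ∧ l * d + d < c := by
  have := Nat.mul_le_mul hl (le_refl (l * d))
  have := Nat.mul_le_mul hl (le_refl d)
  constructor <;> nlinarith

theorem stepanov_parameters {l d c M p : ℕ} (hl : 2 ≤ l) (hd : 1 ≤ d)
    (hc : 4 * l * (l * d + 2) ≤ c) (hcM : c ≤ M) (hMp : M * M ≤ p) :
    ∃ A, 1 ≤ A ∧ A ≤ p ∧ l * M ≤ p ∧ l * (A - 1) + (l - 1) * d < p ∧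
      l * M * (A + l * M * d + (M + c)) < l * (M + c) * A := by
  have hlc := (mul_add_lt_of_stepanov_gap_le hl hc).1
  have hMM : M ≤ M * M := Nat.le_mul_self M
  have hquot : l * (p / l) ≤ p := Nat.mul_div_le p l
  have hquot' : p < l * (p / l) + l := Nat.lt_mul_div_succ p (by omega)
  have hdq : d < p / l := by
    by_contra! h
    have := Nat.mul_le_mul_left l h
    omega
  obtain ⟨A, hA⟩ := Nat.exists_eq_add_of_lt hdq
  rw [show p / l = (A + 1) + d by omega] at hquot hquot'
  have hsplit : l * (A + 1 + d) = l * A + l + l * d := by ring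
  have hpA : p ≤ 2 * (l * (A + 1)) := by rw [mul_add l A 1]; omega
  refine ⟨A + 1, by omega, ?_, by nlinarith, ?_, ?_⟩
  · have : 1 * A ≤ l * A := Nat.mul_le_mul_right _ (by omega)
    omega
  · have : (l - 1) * d ≤ l * d := Nat.mul_le_mul_right _ (by omega)
    rw [Nat.add_sub_cancel]
    omega
  · have hmain : (l * d + 1) * (M * M) + M * c < c * (A + 1) := by
      calc (l * d + 1) * (M * M) + M * c ≤ (l * d + 1) * (M * M) + M * M := by gcongr
        _ = (l * d + 2) * (M * M) := by ring
        _ ≤ (l * d + 2) * (2 * (l * (A + 1))) := Nat.mul_le_mul_left _ (hMp.trans hpA)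
        _ < 4 * l * (l * d + 2) * (A + 1) := by
            nlinarith [Nat.mul_pos (show 0 < l by omega) (show 0 < (l * d + 2) * (A + 1) by simp)]
        _ ≤ c * (A + 1) := by gcongr
    calc l * M * (A + 1 + l * M * d + (M + c))
        = l * (M * (A + 1) + ((l * d + 1) * (M * M) + M * c)) := by ring
      _ < l * (M * (A + 1) + c * (A + 1)) := by gcongr
      _ = l * (M + c) * (A + 1) := by ring

section

variable {p l c : ℕ} [Fact p.Prime] {f : (ZMod p)[X]}

theorem mul_card_eval_pow_eq_le_of_coeff_zero_ne_zero (hl : l.Prime) (hlp : l ∣ p - 1)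
    (hf : Squarefree f) (hdeg : 1 ≤ f.natDegree) (hc : 4 * l * (l * f.natDegree + 2) ≤ c)
    (hcp : c ^ 2 ≤ p) (h0 : f.coeff 0 ≠ 0) (a : ZMod p) :
    (l * #{t | f.eval t ^ ((p - 1) / l) = a} : ℝ) ≤ p + 5 * c * √p := by
  set d := f.natDegree
  set M := Nat.sqrt p
  have hcM : c ≤ M := Nat.le_sqrt'.2 hcp
  obtain ⟨A, hA1, hAp, hlMp, hA, hcount⟩ :=
    stepanov_parameters hl.two_le hdeg hc hcM (Nat.sqrt_le p)
  have hbound : (l * M * #{t | f.eval t ^ ((p - 1) / l) = a} : ℝ) ≤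
      l * M * d + A + p * d + p * (M + c) := by
    exact_mod_cast stepanov_card_le hl (Nat.div_mul_cancel hlp) hf hdeg h0 hA1 hlMp hA hcount a
  have hAp' : (A : ℝ) ≤ p := by exact_mod_cast hAp
  have hdc : (l * d + d + 1 : ℝ) ≤ c := by
    exact_mod_cast (mul_add_lt_of_stepanov_gap_le hl.two_le hc).2
  have hc1 : (1 : ℝ) ≤ c := by nlinarith [show (0 : ℝ) ≤ l * d + d by positivity]
  have hM1 : (1 : ℝ) ≤ M := hc1.trans (by exact_mod_cast hcM)
  have hp1 : 1 ≤ √(p : ℝ) := Real.one_le_sqrt.2 (by exact_mod_cast (Fact.out : p.Prime).one_le)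
  have hpM : (p : ℝ) ≤ 2 * M * √p := by
    have : √(p : ℝ) ≤ M + 1 := by
      rw [Real.sqrt_le_left (by positivity)]
      exact_mod_cast (Nat.lt_succ_sqrt' p).le
    nlinarith [Real.mul_self_sqrt (Nat.cast_nonneg (α := ℝ) p)]
  refine le_of_mul_le_mul_left (a := (M : ℝ)) ?_ (by positivity)
  calc (M : ℝ) * (l * #{t | f.eval t ^ ((p - 1) / l) = a})
      ≤ l * M * d + A + p * d + p * (M + c) := by linarith
    _ ≤ M * p + M * (l * d) * √p + (1 + d + c) * p := by
        nlinarith [show (0 : ℝ) ≤ M * (l * d) by positivity]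
    _ ≤ M * p + M * (l * d) * √p + (1 + d + c) * (2 * M * √p) := by gcongr
    _ = M * (p + (l * d + 2 * (1 + d + c)) * √p) := by ring
    _ ≤ M * (p + 5 * c * √p) := by gcongr; nlinarith [show (0 : ℝ) ≤ l * d by positivity]

theorem exists_eval_ne_zero_of_natDegree_lt (hf : f ≠ 0) (hdeg : f.natDegree < p) :
    ∃ s, f.eval s ≠ 0 := by
  by_contra! h
  refine hf (eq_zero_of_natDegree_lt_card_of_eval_eq_zero' f Finset.univ (fun s _ => h s) ?_)
  rwa [Finset.card_univ, ZMod.card]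

theorem squarefree_comp_X_add_C (hf : Squarefree f) (s : ZMod p) :
    Squarefree (f.comp (X + C s)) := by
  rintro g ⟨k, hk⟩
  have hdvd : g.comp (X - C s) * g.comp (X - C s) ∣ f := by
    refine ⟨k.comp (X - C s), ?_⟩
    have h := congrArg (fun u : (ZMod p)[X] => u.comp (X - C s)) hk
    simpa only [comp_assoc, add_comp, X_comp, C_comp, sub_add_cancel, comp_X, mul_comp] using h
  have hunit := (hf _ hdvd).map (compRingHom (X + C s))
  simpa only [coe_compRingHom_apply, comp_assoc, sub_comp, X_comp, C_comp, add_sub_cancel_right,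
    comp_X] using hunit

theorem mul_card_eval_pow_eq_le (hl : l.Prime) (hlp : l ∣ p - 1)
    (hf : Squarefree f) (hdeg : 1 ≤ f.natDegree) (hc : 4 * l * (l * f.natDegree + 2) ≤ c)
    (hcp : c ^ 2 ≤ p) (a : ZMod p) :
    (l * #{t | f.eval t ^ ((p - 1) / l) = a} : ℝ) ≤ p + 5 * c * √p := by
  have hdp : f.natDegree < p := by
    nlinarith [(mul_add_lt_of_stepanov_gap_le hl.two_le hc).2, Nat.zero_le (l * f.natDegree)]
  obtain ⟨s, hs⟩ := exists_eval_ne_zero_of_natDegree_lt hf.ne_zero hdp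
  have hcomp : (f.comp (X + C s)).natDegree = f.natDegree := by simp [natDegree_comp]
  have hcard : #{t | f.eval t ^ ((p - 1) / l) = a} =
      #{t | (f.comp (X + C s)).eval t ^ ((p - 1) / l) = a} :=
    (Finset.card_equiv (Equiv.addRight s) (by simp)).symm
  rw [hcard]
  refine mul_card_eval_pow_eq_le_of_coeff_zero_ne_zero hl hlp (squarefree_comp_X_add_C hf s)
    (by rwa [hcomp]) (by rwa [hcomp]) hcp ?_ a
  simpa [coeff_zero_eq_eval_zero] using hs

theorem sub_natDegree_le_sum_card_eval_pow_eq (hl : 0 < l) (hlp : l ∣ p - 1) (hf : f ≠ 0) :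
    p - f.natDegree ≤
      ∑ a ∈ nthRootsFinset l (1 : ZMod p), #{t | f.eval t ^ ((p - 1) / l) = a} := by
  have hzeros : #{t | f.eval t = 0} ≤ f.natDegree :=
    card_le_degree_of_subset_roots fun t ht => by simpa [hf] using ht
  have hmaps : ∀ t ∈ ({t | f.eval t ≠ 0} : Finset (ZMod p)),
      f.eval t ^ ((p - 1) / l) ∈ nthRootsFinset l (1 : ZMod p) := fun t ht => by
    rw [mem_nthRootsFinset hl, ← pow_mul, Nat.div_mul_cancel hlp]
    exact ZMod.pow_card_sub_one_eq_one (Finset.mem_filter.1 ht).2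
  have hsplit := Finset.card_filter_add_card_filter_not (s := Finset.univ)
    (fun t : ZMod p => f.eval t = 0)
  rw [Finset.card_univ, ZMod.card] at hsplit
  calc p - f.natDegree ≤ #{t | f.eval t ≠ 0} := by simp only [ne_eq]; omega
    _ = _ := Finset.card_eq_sum_card_fiberwise hmaps
    _ ≤ _ := Finset.sum_le_sum fun a _ => Finset.card_le_card fun t ht => by
        simp only [Finset.mem_filter, Finset.mem_univ, true_and] at ht ⊢
        exact ht.2

end

/-- The detector of `l`-th powers modulo `p ≡ 1 mod l`: the sum of the nontrivial characters of
`(ZMod p)ˣ` of order dividing `l`, except that it takes the value `-1` at `0`. -/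
def powerDetector (p l : ℕ) (a : ZMod p) : ℝ := if a ^ ((p - 1) / l) = 1 then (l : ℝ) - 1 else -1

theorem abs_powerDetector_le {p l : ℕ} (hl : 1 ≤ l) (a : ZMod p) : |powerDetector p l a| ≤ l := by
  have : (1 : ℝ) ≤ l := by exact_mod_cast hl
  unfold powerDetector
  split_ifs
  · rw [abs_of_nonneg] <;> linarith
  · simpa

theorem sum_powerDetector {p l : ℕ} [Fact p.Prime] (u : ZMod p → ZMod p) :
    ∑ t, powerDetector p l (u t) = l * #{t | u t ^ ((p - 1) / l) = 1} - p := by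
  have (t : ZMod p) : powerDetector p l (u t) =
      l * (if u t ^ ((p - 1) / l) = 1 then 1 else 0) - 1 := by
    unfold powerDetector
    split_ifs <;> ring
  rw [Finset.sum_congr rfl fun t _ => this t, Finset.sum_sub_distrib, ← Finset.mul_sum,
    Finset.sum_boole]
  simp [ZMod.card]

theorem abs_sum_powerDetector_le_of_le_sq {p l c : ℕ} [Fact p.Prime] {f : (ZMod p)[X]}
    (hl : 1 ≤ l) (hp : p ≤ c ^ 2) : |∑ t, powerDetector p l (f.eval t)| ≤ l * c * √p := by
  have hpp := Real.mul_self_sqrt (Nat.cast_nonneg (α := ℝ) p)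
  have hpc : √(p : ℝ) ≤ c := Real.sqrt_le_left (by positivity) |>.2 (by exact_mod_cast hp)
  calc |∑ t, powerDetector p l (f.eval t)| ≤ p * l := by
        refine (Finset.abs_sum_le_sum_abs _ _).trans ((Finset.sum_le_card_nsmul _ _ (l : ℝ)
          fun t _ => abs_powerDetector_le hl _).trans ?_)
        simp [ZMod.card]
    _ = l * √p * √p := by linear_combination -(l : ℝ) * hpp
    _ ≤ l * c * √p := by gcongr

theorem abs_sum_powerDetector_le {p l c : ℕ} [Fact p.Prime] {f : (ZMod p)[X]} (hl : l.Prime)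
    (hlp : l ∣ p - 1) (hf : Squarefree f) (hdeg : 1 ≤ f.natDegree)
    (hc : 4 * l * (l * f.natDegree + 2) ≤ c) :
    |∑ t, powerDetector p l (f.eval t)| ≤ 6 * l * c * √p := by
  have hl1 : (1 : ℝ) ≤ l := by exact_mod_cast hl.one_le
  rcases lt_or_ge p (c ^ 2) with hp | hp
  · refine (abs_sum_powerDetector_le_of_le_sq hl.one_le hp.le).trans ?_
    nlinarith [show (0 : ℝ) ≤ l * c * √p by positivity]
  set N : ZMod p → ℝ := fun a => #{t | f.eval t ^ ((p - 1) / l) = a}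
  have hupper (a) : l * N a ≤ p + 5 * c * √p := mul_card_eval_pow_eq_le hl hlp hf hdeg hc hp a
  have hlower : (p - f.natDegree : ℝ) ≤ ∑ a ∈ nthRootsFinset l (1 : ZMod p), N a := by
    have := sub_natDegree_le_sum_card_eval_pow_eq hl.pos hlp hf.ne_zero
    rw [sub_le_iff_le_add]
    simp only [N]
    exact_mod_cast tsub_le_iff_right.1 this
  have hone : (1 : ZMod p) ∈ nthRootsFinset l (1 : ZMod p) := by simp [mem_nthRootsFinset hl.pos]
  have hothers : l * ∑ a ∈ (nthRootsFinset l (1 : ZMod p)).erase 1, N a ≤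
      (l - 1) * (p + 5 * c * √p) := by
    rw [Finset.mul_sum]
    refine (Finset.sum_le_card_nsmul _ _ _ fun a _ => hupper a).trans ?_
    rw [nsmul_eq_mul]
    gcongr
    rw [le_sub_iff_add_le]
    have : (nthRootsFinset l (1 : ZMod p)).card ≤ l := by
      unfold nthRootsFinset
      exact (@Multiset.toFinset_card_le _ (_) _).trans (card_nthRoots _ _)
    exact_mod_cast (Finset.card_erase_add_one hone).trans_le this
  rw [← Finset.add_sum_erase _ _ hone] at hlower
  have hdc : (f.natDegree : ℝ) ≤ c * √p := by
    have hfc : f.natDegree ≤ c :=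
      (Nat.le_add_left _ _).trans (mul_add_lt_of_stepanov_gap_le hl.two_le hc).2.le
    have hp1 : 1 ≤ √(p : ℝ) := Real.one_le_sqrt.2 (by exact_mod_cast (Fact.out : p.Prime).one_le)
    exact (Nat.cast_le.2 hfc).trans (le_mul_of_one_le_right (by positivity) hp1)
  rw [sum_powerDetector, abs_le]
  change _ ≤ l * N 1 - p ∧ l * N 1 - p ≤ _
  constructor <;> nlinarith [hupper 1, show 0 ≤ c * √(p : ℝ) by positivity]

/-! ### Primes in arithmetic progressions -/

section

open ArithmeticFunction ArithmeticFunction.vonMangoldt Filter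

theorem tsum_residueClass_div_rpow {q : ℕ} [NeZero q] {a : ZMod q} (ha : IsUnit a) {x : ℝ}
    (hx : 1 < x) :
    ∑' n, residueClass a n / (n : ℝ) ^ x =
      (LFunctionResidueClassAux a x).re + (q.totient : ℝ)⁻¹ / (x - 1) := by
  refine Complex.ofReal_injective ?_
  simp only [Complex.ofReal_tsum, Complex.ofReal_div, Complex.ofReal_cpow (Nat.cast_nonneg _),
    Complex.ofReal_natCast, Complex.ofReal_add, Complex.ofReal_inv, Complex.ofReal_sub,
    Complex.ofReal_one]
  simp_rw [← LFunctionResidueClassAux_real ha hx,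
    eqOn_LFunctionResidueClassAux ha <| Set.mem_ofPred.mpr (Complex.ofReal_re x ▸ hx),
    sub_add_cancel, LSeries, LSeries.term]
  refine tsum_congr fun n => ?_
  split_ifs with hn
  · simp only [hn, residueClass_apply_zero, Complex.ofReal_zero, zero_div]
  · rfl

theorem exists_abs_tsum_residueClass_div_rpow_sub_le {q : ℕ} [NeZero q] {a : ZMod q}
    (ha : IsUnit a) :
    ∃ C : ℝ, ∀ x : ℝ, 1 < x → x ≤ 2 →
      |∑' n, residueClass a n / (n : ℝ) ^ x - (q.totient : ℝ)⁻¹ / (x - 1)| ≤ C := by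
  have hcont : ContinuousOn (fun x : ℝ => (LFunctionResidueClassAux a x).re) (Set.Icc 1 2) :=
    Complex.continuous_re.comp_continuousOn <|
      (continuousOn_LFunctionResidueClassAux a).comp Complex.continuous_ofReal.continuousOn
        fun x hx => by simpa only [Set.mem_ofPred_eq, Complex.ofReal_re] using hx.1
  obtain ⟨C, hC⟩ := isCompact_Icc.exists_bound_of_continuousOn hcont
  refine ⟨C, fun x hx hx2 => ?_⟩
  rw [tsum_residueClass_div_rpow ha hx, add_sub_cancel_right]
  exact hC x ⟨hx.le, hx2⟩

theorem summable_residueClass_div_rpow {q : ℕ} (a : ZMod q) {x : ℝ} (hx : 1 < x) :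
    Summable fun n : ℕ => residueClass a n / (n : ℝ) ^ x :=
  LSeries.summable_real_of_abscissaOfAbsConv_lt <|
    (abscissaOfAbsConv_residueClass_le_one a).trans_lt <| mod_cast hx

theorem div_mul_rpow_mul_eval_rpow (Q : ℝ[X]) (y T : ℝ) {n : ℕ} (hn : 0 < n) :
    y / n * ((n : ℝ) ^ (-1 / T) * Q.eval ((n : ℝ) ^ (-1 / T))) =
      ∑ k ∈ Finset.range (Q.natDegree + 1), Q.coeff k * (y / (n : ℝ) ^ (1 + (k + 1) / T)) := by
  have hn' : (0 : ℝ) < n := by exact_mod_cast hn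
  rw [eval_eq_sum_range, Finset.mul_sum, Finset.mul_sum]
  refine Finset.sum_congr rfl fun k _ => ?_
  have hpow : (n : ℝ) ^ ((k + 1 : ℝ) / T) = (((n : ℝ) ^ (-1 / T)) ^ (k + 1))⁻¹ := by
    rw [← Real.rpow_natCast, ← Real.rpow_mul hn'.le, ← Real.rpow_neg hn'.le]
    congr 1
    push_cast
    ring
  have : (n : ℝ) ^ (-1 / T) ≠ 0 := (Real.rpow_pos_of_pos hn' _).ne'
  rw [Real.rpow_add hn', Real.rpow_one, hpow]
  field_simp
  ring

theorem integral_zero_one_eval (Q : ℝ[X]) :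
    ∫ u in (0 : ℝ)..1, Q.eval u = ∑ k ∈ Finset.range (Q.natDegree + 1), Q.coeff k / (k + 1) := by
  simp_rw [eval_eq_sum_range]
  rw [intervalIntegral.integral_finsetSum
    fun k _ => (by fun_prop : Continuous _).intervalIntegrable _ _]
  refine Finset.sum_congr rfl fun k _ => ?_
  rw [intervalIntegral.integral_const_mul, integral_pow]
  simp [div_eq_mul_inv]

theorem exists_sub_le_tsum_residueClass_mul_eval {q : ℕ} [NeZero q] {a : ZMod q}
    (ha : IsUnit a) (Q : ℝ[X]) :
    ∃ C : ℝ, ∀ T : ℝ, Q.natDegree + 1 ≤ T →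
      (Summable fun n : ℕ => residueClass a n / n *
        ((n : ℝ) ^ (-1 / T) * Q.eval ((n : ℝ) ^ (-1 / T)))) ∧
      T * (q.totient : ℝ)⁻¹ * (∫ u in (0 : ℝ)..1, Q.eval u) - C ≤
        ∑' n : ℕ, residueClass a n / n * ((n : ℝ) ^ (-1 / T) * Q.eval ((n : ℝ) ^ (-1 / T))) := by
  obtain ⟨C, hC⟩ := exists_abs_tsum_residueClass_div_rpow_sub_le ha
  refine ⟨∑ k ∈ Finset.range (Q.natDegree + 1), |Q.coeff k| * C, fun T hT => ?_⟩
  have hT0 : 0 < T := by linarith [Nat.cast_nonneg (α := ℝ) Q.natDegree]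
  have hexp : ∀ k ∈ Finset.range (Q.natDegree + 1),
      1 < 1 + ((k : ℝ) + 1) / T ∧ 1 + ((k : ℝ) + 1) / T ≤ 2 := fun k hk => by
    have hk' : (k : ℝ) ≤ Q.natDegree := by
      exact_mod_cast Nat.lt_succ_iff.1 (Finset.mem_range.1 hk)
    have hpos : 0 < ((k : ℝ) + 1) / T := by positivity
    have hle : ((k : ℝ) + 1) / T ≤ 1 := (div_le_one hT0).2 (by linarith)
    constructor <;> linarith
  have hsum : ∀ k ∈ Finset.range (Q.natDegree + 1), Summable fun n : ℕ =>
      Q.coeff k * (residueClass a n / (n : ℝ) ^ (1 + ((k : ℝ) + 1) / T)) :=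
    fun k hk => (summable_residueClass_div_rpow a (hexp k hk).1).mul_left _
  have hexpand (n : ℕ) : residueClass a n / n *
      ((n : ℝ) ^ (-1 / T) * Q.eval ((n : ℝ) ^ (-1 / T))) = ∑ k ∈ Finset.range (Q.natDegree + 1),
        Q.coeff k * (residueClass a n / (n : ℝ) ^ (1 + (k + 1) / T)) := by
    rcases n.eq_zero_or_pos with rfl | hn
    · simp
    · exact div_mul_rpow_mul_eval_rpow Q _ T hn
  simp_rw [hexpand]
  refine ⟨summable_sum hsum, ?_⟩
  rw [Summable.tsum_finsetSum hsum, integral_zero_one_eval, Finset.mul_sum,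
    ← Finset.sum_sub_distrib]
  refine Finset.sum_le_sum fun k hk => ?_
  have hk_asymp := hC _ (hexp k hk).1 (hexp k hk).2
  rw [show (q.totient : ℝ)⁻¹ / (1 + ((k : ℝ) + 1) / T - 1) = T * (q.totient : ℝ)⁻¹ / (k + 1) by
    rw [add_sub_cancel_left, div_div_eq_mul_div, mul_comm]] at hk_asymp
  have hcoeff := mul_le_mul_of_nonneg_left hk_asymp (abs_nonneg (Q.coeff k))
  rw [← abs_mul, mul_sub] at hcoeff
  rw [tsum_mul_left, mul_div_left_comm]
  linarith [(abs_le.1 hcoeff).1]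

theorem mul_pow_le_integral_one_sub_sq_pow {c r : ℝ} (hr : 0 ≤ r) (h0 : 0 ≤ c - r)
    (h1 : c + r ≤ 1) (N : ℕ) :
    r * (1 - r ^ 2 / 4) ^ N ≤ ∫ u in (0 : ℝ)..1, (1 - (u - c) ^ 2) ^ N := by
  have hcont : Continuous fun u : ℝ => (1 - (u - c) ^ 2) ^ N := by fun_prop
  calc r * (1 - r ^ 2 / 4) ^ N
      = ∫ _ in (c - r / 2)..(c + r / 2), (1 - r ^ 2 / 4) ^ N := by
        rw [intervalIntegral.integral_const, smul_eq_mul]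
        ring
    _ ≤ ∫ u in (c - r / 2)..(c + r / 2), (1 - (u - c) ^ 2) ^ N :=
        intervalIntegral.integral_mono_on (by linarith) (by simp) (hcont.intervalIntegrable _ _)
          fun u hu => pow_le_pow_left₀ (by nlinarith) (by nlinarith [hu.1, hu.2]) _
    _ ≤ ∫ u in (0 : ℝ)..1, (1 - (u - c) ^ 2) ^ N :=
        intervalIntegral.integral_mono_interval (by linarith) (by linarith) (by linarith)
          ((MeasureTheory.ae_restrict_iff' measurableSet_Ioc).2 <| Eventually.of_forall
            fun u hu => pow_nonneg (by nlinarith [hu.1, hu.2]) _) (hcont.intervalIntegrable _ _)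

/- With `c` and `r` the centre and radius of `[α, β]`, take `(1 - (u - c)²)^N - (1 - r²)^N`, which
changes sign exactly at `α` and `β` and concentrates around `c` as `N` grows. -/
theorem exists_polynomial_bump {α β : ℝ} (h0 : 0 ≤ α) (hαβ : α < β) (h1 : β ≤ 1) :
    ∃ Q : ℝ[X], 0 < ∫ u in (0 : ℝ)..1, Q.eval u ∧
      ∀ u ∈ Set.Icc (0 : ℝ) 1, Q.eval u ≤ 1 ∧ (u ∉ Set.Icc α β → Q.eval u ≤ 0) := by
  set c := (α + β) / 2 with hc
  set r := (β - α) / 2 with hr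
  have hr0 : 0 < r := by linarith
  have hbase : 0 < 1 - r ^ 2 := by nlinarith [show r ≤ 1 / 2 by linarith]
  obtain ⟨N, hN⟩ : ∃ N : ℕ, 1 / r < ((1 - r ^ 2 / 4) / (1 - r ^ 2)) ^ N :=
    pow_unbounded_of_one_lt _ ((one_lt_div hbase).2 (by nlinarith))
  rw [div_pow, div_lt_div_iff₀ hr0 (by positivity), one_mul] at hN
  have heval (u : ℝ) : ((1 - (X - C c) ^ 2) ^ N - C ((1 - r ^ 2) ^ N)).eval u =
      (1 - (u - c) ^ 2) ^ N - (1 - r ^ 2) ^ N := by simp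
  refine ⟨(1 - (X - C c) ^ 2) ^ N - C ((1 - r ^ 2) ^ N), ?_, fun u hu => ?_⟩
  · simp_rw [heval]
    rw [intervalIntegral.integral_sub ((by fun_prop : Continuous _).intervalIntegrable _ _)
      (by simp), intervalIntegral.integral_const]
    have := mul_pow_le_integral_one_sub_sq_pow hr0.le (c := c) (by linarith) (by linarith) N
    simp only [sub_zero, one_smul]
    linarith
  · have hnonneg : 0 ≤ 1 - (u - c) ^ 2 := by nlinarith [hu.1, hu.2]
    rw [heval, sub_nonpos]
    refine ⟨?_, fun hout => pow_le_pow_left₀ hnonneg ?_ _⟩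
    · linarith [pow_le_one₀ (n := N) hnonneg (by nlinarith [sq_nonneg (u - c)]), pow_pos hbase N]
    · rw [Set.mem_Icc, not_and_or, not_le, not_le] at hout
      rcases hout with h | h <;> nlinarith

theorem tsum_mul_le_sum_of_le_indicator {ι : Type*} {g w : ι → ℝ} {s : Finset ι}
    (hg : ∀ i, 0 ≤ g i) (hsum : Summable fun i => g i * w i) (hw : ∀ i ∈ s, w i ≤ 1)
    (hw' : ∀ i ∉ s, w i ≤ 0) : ∑' i, g i * w i ≤ ∑ i ∈ s, g i := by
  have hneg := hsum.neg.sum_le_tsum s fun i hi =>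
    neg_nonneg.2 (mul_nonpos_of_nonneg_of_nonpos (hg i) (hw' i hi))
  rw [tsum_neg, Finset.sum_neg_distrib] at hneg
  have hone : ∑ i ∈ s, g i * w i ≤ ∑ i ∈ s, g i :=
    Finset.sum_le_sum fun i hi => mul_le_of_le_one_right (hg i) (hw i hi)
  linarith

theorem natCast_rpow_neg_one_div {n : ℕ} (hn : 0 < n) (T : ℝ) :
    (n : ℝ) ^ (-1 / T) = Real.exp (-(Real.log n / T)) := by
  rw [Real.rpow_def_of_pos (by exact_mod_cast hn)]
  ring_nf

theorem exists_eventually_mul_le_sum_residueClass_div {q : ℕ} [NeZero q] {a : ZMod q}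
    (ha : IsUnit a) {ε : ℝ} (hε : 0 < ε) (hε1 : ε < 1) :
    ∃ c > 0, ∀ᶠ T : ℝ in atTop, ∀ s : Finset ℕ,
      (∀ n : ℕ, 1 ≤ n → (1 - ε) * T ≤ Real.log n → Real.log n ≤ T → n ∈ s) →
      c * T ≤ ∑ n ∈ s, residueClass a n / n := by
  obtain ⟨Q, hQ0, hQ⟩ := exists_polynomial_bump (Real.exp_pos (-1)).le
    (Real.exp_lt_exp.2 (show -1 < -(1 - ε) by linarith)) (Real.exp_le_one_iff.2 (by linarith))
  obtain ⟨C, hC⟩ := exists_sub_le_tsum_residueClass_mul_eval ha Q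
  set I := ∫ u in (0 : ℝ)..1, Q.eval u
  have hφ : (0 : ℝ) < (q.totient : ℝ)⁻¹ := inv_pos.2 (mod_cast q.totient.pos_of_neZero)
  refine ⟨(q.totient : ℝ)⁻¹ * I / 2, by positivity, ?_⟩
  filter_upwards [eventually_ge_atTop (Q.natDegree + 1 : ℝ),
    eventually_ge_atTop (C / ((q.totient : ℝ)⁻¹ * I / 2))] with T hT hTC s hs
  have hT0 : 0 < T := by linarith [Nat.cast_nonneg (α := ℝ) Q.natDegree]
  rw [div_le_iff₀ (by positivity)] at hTC
  have hu (n : ℕ) : (n : ℝ) ^ (-1 / T) ∈ Set.Icc (0 : ℝ) 1 := by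
    refine ⟨by positivity, ?_⟩
    rcases n.eq_zero_or_pos with rfl | hn
    · simp [Real.zero_rpow, hT0.ne']
    · rw [natCast_rpow_neg_one_div hn, Real.exp_le_one_iff, neg_nonpos]
      have := Real.log_natCast_nonneg n
      positivity
  obtain ⟨hsum, hle⟩ := hC T hT
  refine le_trans ?_ (tsum_mul_le_sum_of_le_indicator
    (fun n => div_nonneg (residueClass_nonneg a n) n.cast_nonneg) hsum (fun n _ => ?_)
    fun n hns => ?_)
  · linarith
  · exact (mul_le_of_le_one_right (hu n).1 (hQ _ (hu n)).1).trans (hu n).2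
  · rcases n.eq_zero_or_pos with rfl | hn
    · simp [Real.zero_rpow, hT0.ne']
    refine mul_nonpos_of_nonneg_of_nonpos (hu n).1 ((hQ _ (hu n)).2 fun hmem => hns ?_)
    rw [natCast_rpow_neg_one_div hn, Set.mem_Icc, Real.exp_le_exp, Real.exp_le_exp,
      neg_le_neg_iff, neg_le_neg_iff, div_le_one hT0, le_div_iff₀ hT0] at hmem
    exact hs n hn hmem.2 hmem.1

/-- The primes `p ≡ a` modulo `q` in the interval `[y, P]`. -/
def primesIcc {q : ℕ} (a : ZMod q) (y P : ℝ) : Finset ℕ :=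
  {p ∈ Finset.Icc ⌈y⌉₊ ⌊P⌋₊ | p.Prime ∧ (p : ZMod q) = a}

theorem mem_primesIcc {q p : ℕ} {a : ZMod q} {y P : ℝ} (hP : 0 ≤ P) :
    p ∈ primesIcc a y P ↔ (y ≤ p ∧ (p : ℝ) ≤ P) ∧ p.Prime ∧ (p : ZMod q) = a := by
  rw [primesIcc, Finset.mem_filter, Finset.mem_Icc, Nat.ceil_le, Nat.le_floor_iff hP]

theorem sum_residueClass_prime_div_le {q : ℕ} (a : ZMod q) {P y : ℝ} (hP : 1 ≤ P) (hy : 0 < y) :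
    ∑ n ∈ Finset.Icc ⌈y⌉₊ ⌊P⌋₊, (if n.Prime then residueClass a n else 0) / n ≤
      #(primesIcc a y P) * (Real.log P / y) := by
  have hsupport : ∀ n ∈ Finset.Icc ⌈y⌉₊ ⌊P⌋₊,
      (if n.Prime then residueClass a n else 0) / n ≠ 0 → n.Prime ∧ (n : ZMod q) = a :=
    fun n _ hne => (Set.ext_iff.1 (support_residueClass_prime_div a) n).1 hne
  rw [← Finset.sum_filter_of_ne hsupport, ← nsmul_eq_mul]
  refine Finset.sum_le_card_nsmul _ _ _ fun n hn => ?_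
  obtain ⟨⟨hyn, hnP⟩, -⟩ := (mem_primesIcc (by linarith)).1 hn
  have hlogP := Real.log_nonneg hP
  have hlog : residueClass a n ≤ Real.log P :=
    ((residueClass_le a n).trans vonMangoldt_le_log).trans (Real.log_le_log (by linarith) hnP)
  gcongr
  split_ifs <;> assumption

theorem eventually_rpow_le_card_primesIcc {q : ℕ} [NeZero q] {a : ZMod q} (ha : IsUnit a) {δ : ℝ}
    (hδ : 0 < δ) (hδ1 : δ < 1) :
    ∀ᶠ P : ℝ in atTop, P ^ (1 - δ) ≤ #(primesIcc a (P ^ (1 - δ)) P) := by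
  obtain ⟨c, hc, hsum⟩ :=
    exists_eventually_mul_le_sum_residueClass_div ha (half_pos hδ) (by linarith)
  set K := ∑' n : ℕ, (if n.Prime then 0 else residueClass a n) / n
  filter_upwards [Real.tendsto_log_atTop.eventually hsum, eventually_ge_atTop (Real.exp 1),
    Real.tendsto_log_atTop.eventually_ge_atTop (2 * K / c),
    (tendsto_rpow_atTop (half_pos hδ)).eventually_ge_atTop (2 / c)] with P hP hPe hPK hPδ
  have hP1 : 1 ≤ P := (Real.one_le_exp zero_le_one).trans hPe
  have hP0 : 0 < P := by linarith
  have hlog : 1 ≤ Real.log P := (Real.le_log_iff_exp_le hP0).2 hPe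
  rw [div_le_iff₀ hc] at hPK hPδ
  set y := P ^ (1 - δ / 2) with hy
  have hy0 : 0 < y := by positivity
  have hmass := hP (Finset.Icc ⌈y⌉₊ ⌊P⌋₊) fun n hn hlow hup => by
    have hn0 : (0 : ℝ) < n := by exact_mod_cast hn
    rw [Finset.mem_Icc, Nat.ceil_le, Nat.le_floor_iff hP0.le,
      ← Real.log_le_log_iff hy0 hn0, Real.log_rpow hP0]
    exact ⟨hlow, (Real.log_le_log_iff hn0 hP0).1 hup⟩
  have hnonprime : ∑ n ∈ Finset.Icc ⌈y⌉₊ ⌊P⌋₊,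
      (if n.Prime then 0 else residueClass a n) / n ≤ K :=
    (summable_residueClass_non_primes_div a).sum_le_tsum _ fun n _ =>
      div_nonneg (by split_ifs <;> simp [residueClass_nonneg]) n.cast_nonneg
  have hdecomp (n : ℕ) : residueClass a n / n = (if n.Prime then residueClass a n else 0) / n +
      (if n.Prime then 0 else residueClass a n) / n := by
    split_ifs <;> simp
  rw [Finset.sum_congr rfl fun n _ => hdecomp n, Finset.sum_add_distrib] at hmass
  have hprime := sum_residueClass_prime_div_le a hP1 hy0
  have hyδ : y = P ^ (1 - δ) * P ^ (δ / 2) := by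
    rw [hy, ← Real.rpow_add hP0]
    ring_nf
  calc P ^ (1 - δ) ≤ c / 2 * y := by
        rw [hyδ]
        nlinarith [show (0 : ℝ) < P ^ (1 - δ) by positivity]
    _ ≤ #(primesIcc a y P) := by
        refine le_of_mul_le_mul_right (a := Real.log P / y) ?_ (by positivity)
        rw [show c / 2 * y * (Real.log P / y) = c / 2 * Real.log P by field_simp]
        linarith
    _ ≤ _ := by
        refine Nat.cast_le.2 (Finset.card_le_card fun p hp => ?_)
        rw [mem_primesIcc hP0.le] at hp ⊢
        exact ⟨⟨(Real.rpow_le_rpow_of_exponent_le hP1 (by linarith)).trans hp.1.1, hp.1.2⟩, hp.2⟩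

end

/-! ### Restriction of polynomials to lines -/

theorem card_mul_card_eval_eq_zero_le {R : Type*} [CommRing R] [IsDomain R] [DecidableEq R]
    {n : ℕ} {f : MvPolynomial (Fin n) R} (hf : f ≠ 0) (S : Finset R) :
    #S * #{x ∈ Fintype.piFinset fun _ => S | MvPolynomial.eval x f = 0} ≤
      f.totalDegree * #S ^ n := by
  rcases S.eq_empty_or_nonempty with rfl | hS
  · simp
  have h := MvPolynomial.schwartz_zippel_totalDegree hf S
  have hS0 : (0 : ℚ≥0) < #S := by exact_mod_cast hS.card_pos
  rw [div_le_div_iff₀ (by positivity) hS0] at h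
  rw [mul_comm]
  exact_mod_cast h

theorem exists_abs_le_totalDegree_eval_ne_zero {σ : Type*} [Finite σ] {f : MvPolynomial σ ℤ}
    (hf : f ≠ 0) : ∃ x : σ → ℤ, (∀ i, |x i| ≤ f.totalDegree) ∧ MvPolynomial.eval x f ≠ 0 := by
  by_contra! h
  refine hf (MvPolynomial.eq_zero_of_eval_zero_at_prod_finset f
    (fun _ => Finset.Icc 0 (f.totalDegree : ℤ)) (fun i => ?_) fun x hx => h x fun i => ?_)
  · have := MvPolynomial.degreeOf_le_totalDegree f i
    rw [Int.card_Icc]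
    omega
  · have := Finset.mem_Icc.1 (hx i)
    rw [abs_of_nonneg this.1]
    exact this.2

theorem totalDegree_det_le {R σ ι : Type*} [CommRing R] [Fintype ι] [DecidableEq ι]
    {M : Matrix ι ι (MvPolynomial σ R)} {d : ℕ} (h : ∀ i j, (M i j).totalDegree ≤ d) :
    M.det.totalDegree ≤ Fintype.card ι * d := by
  rw [Matrix.det_apply]
  refine MvPolynomial.totalDegree_finsetSum_le fun s _ =>
    (MvPolynomial.totalDegree_smul_le _ _).trans <|
      (MvPolynomial.totalDegree_finsetProd _ _).trans ?_
  exact (Finset.sum_le_card_nsmul _ _ d fun i _ => h _ _).trans_eq (by simp)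

theorem forall_sylvester {R : Type*} [CommRing R] {P : R → Prop} (h0 : P 0) {f g : R[X]}
    (hf : ∀ j, P (f.coeff j)) (hg : ∀ j, P (g.coeff j)) {m n : ℕ} (i j : Fin (m + n)) :
    P (sylvester f g m n i j) := by
  induction j using Fin.addCases <;>
    simp only [sylvester, Matrix.of_apply, Fin.addCases_left, Fin.addCases_right] <;>
    split_ifs <;> simp only [h0, hf, hg]

theorem squarefree_of_resultant_derivative_ne_zero {K : Type*} [Field K] {f : K[X]} {k : ℕ}
    (hk : 1 ≤ k) (hf : f.natDegree ≤ k) (h : resultant f (derivative f) k (k - 1) ≠ 0) :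
    Squarefree f := by
  obtain ⟨a, b, -, -, hab⟩ := exists_mul_add_mul_eq_C_resultant f (derivative f) hf
    ((natDegree_derivative_le f).trans (Nat.sub_le_sub_right hf 1)) (Or.inl (by omega))
  set r := resultant f (derivative f) k (k - 1)
  refine Separable.squarefree ⟨C r⁻¹ * a, C r⁻¹ * b, ?_⟩
  calc C r⁻¹ * a * f + C r⁻¹ * b * derivative f = C r⁻¹ * (f * a + derivative f * b) := by ring
    _ = 1 := by rw [hab, ← C_mul, inv_mul_cancel₀ h, C_1]

theorem sum_le_totalDegree {R σ : Type*} [CommSemiring R] [Fintype σ] {H : MvPolynomial σ R}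
    {m : σ →₀ ℕ} (hm : m ∈ H.support) : ∑ i, m i ≤ H.totalDegree := by
  simpa [Finsupp.sum_fintype] using MvPolynomial.le_totalDegree hm

theorem card_support_le {R σ : Type*} [CommSemiring R] [Fintype σ] (H : MvPolynomial σ R) :
    #H.support ≤ (H.totalDegree + 1) ^ Fintype.card σ := by
  classical
  calc #H.support ≤ #(Fintype.piFinset fun _ : σ => Finset.range (H.totalDegree + 1)) := by
        refine Finset.card_le_card_of_injOn (fun m i => m i) (fun m hm => ?_)
          DFunLike.coe_injective.injOn
        simp only [Finset.mem_coe, Fintype.mem_piFinset, Finset.mem_range, Nat.lt_succ_iff]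
        exact fun i => (Finset.single_le_sum (fun _ _ => Nat.zero_le _)
          (Finset.mem_univ i)).trans (sum_le_totalDegree (Finset.mem_coe.1 hm))
    _ = _ := by simp

section

variable {σ R S : Type*} [CommRing R] [CommRing S] [Algebra R S]

/-- The restriction `H(x + t w)` of `H` to the line through `x` in the direction `w`, as a
polynomial in `t`. -/
def restrictLine (H : MvPolynomial σ R) (x w : σ → S) : S[X] :=
  MvPolynomial.aeval (fun i => C (x i) + C (w i) * X) H

/-- The restriction of `H` to the generic line in the direction `w`: the base point is the tuple of
variables of `H`. -/
def genericLine (H : MvPolynomial σ R) (w : σ → R) : (MvPolynomial σ R)[X] :=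
  restrictLine H MvPolynomial.X fun i => MvPolynomial.C (w i)

/-- A polynomial in the base point `x` whose nonvanishing guarantees that `H(x + t w)` keeps the
generic degree in `t` and is separable: the resultant of the generic line restriction and its
derivative, times the leading coefficient. -/
def lineDiscr (H : MvPolynomial σ R) (w : σ → R) : MvPolynomial σ R :=
  resultant (genericLine H w) (derivative (genericLine H w)) (genericLine H w).natDegree
    ((genericLine H w).natDegree - 1) * (genericLine H w).leadingCoeff

theorem eval_restrictLine (H : MvPolynomial σ R) (x w : σ → S) (t : S) :
    (restrictLine H x w).eval t = MvPolynomial.aeval (fun i => x i + w i * t) H := by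
  have h := MvPolynomial.comp_aeval_apply (fun i => C (x i) + C (w i) * X)
    ((aeval t : S[X] →ₐ[S] S).restrictScalars R) H
  simpa [restrictLine] using h

theorem restrictLine_map {T : Type*} [CommRing T] [Algebra R T] (φ : S →ₐ[R] T)
    (H : MvPolynomial σ R) (x w : σ → S) :
    (restrictLine H x w).map (φ : S →+* T) =
      restrictLine H (fun i => φ (x i)) fun i => φ (w i) := by
  have h := MvPolynomial.comp_aeval_apply (fun i => C (x i) + C (w i) * X) (mapAlgHom φ) H
  simpa [restrictLine] using h

theorem genericLine_map_aeval (H : MvPolynomial σ R) (w : σ → R) (x : σ → S) :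
    (genericLine H w).map (MvPolynomial.aeval x : MvPolynomial σ R →ₐ[R] S) =
      restrictLine H x fun i => algebraMap R S (w i) := by
  simp [genericLine, restrictLine_map]

theorem genericLine_map_algebraMap (H : MvPolynomial σ R) (w : σ → R) :
    (genericLine H w).map (MvPolynomial.map (algebraMap R S)) =
      genericLine (MvPolynomial.map (algebraMap R S) H) fun i => algebraMap R S (w i) := by
  have h := restrictLine_map (MvPolynomial.mapAlgHom (σ := σ) (Algebra.ofId R S)) H
    MvPolynomial.X fun i => MvPolynomial.C (w i)
  simpa [genericLine, restrictLine, Algebra.ofId_apply, MvPolynomial.aeval_map_algebraMap] using h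

theorem natDegree_restrictLine_le (H : MvPolynomial σ R) (x w : σ → S) :
    (restrictLine H x w).natDegree ≤ H.totalDegree := by
  rw [restrictLine, MvPolynomial.aeval_def, MvPolynomial.eval₂_eq]
  refine natDegree_sum_le_of_forall_le _ _ fun m hm => ?_
  rw [Polynomial.algebraMap_apply]
  refine (natDegree_C_mul_le _ _).trans ((natDegree_prod_le _ _).trans ?_)
  refine (Finset.sum_le_sum fun i _ => ?_).trans (MvPolynomial.le_totalDegree hm)
  exact (natDegree_pow_le_of_le _ (by compute_degree)).trans_eq (mul_one _)

theorem prime_genericLine {H : MvPolynomial σ R} (hH : Prime H) (w : σ → R) :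
    Prime (genericLine H w) := by
  let shear (w : σ → R) : (MvPolynomial σ R)[X] →+* (MvPolynomial σ R)[X] :=
    eval₂RingHom (MvPolynomial.aeval (R := R)
      (fun i => C (MvPolynomial.X i) + C (MvPolynomial.C (w i)) * X)).toRingHom X
  have hshear (w) : (shear (-w)).comp (shear w) = RingHom.id _ := by
    refine ringHom_ext' (MvPolynomial.ringHom_ext (fun r => ?_) fun i => ?_) ?_
    · simp [shear, Polynomial.algebraMap_apply, MvPolynomial.algebraMap_eq]
    · simp [shear, Polynomial.algebraMap_apply, MvPolynomial.algebraMap_eq]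
      ring
    · simp [shear]
  let e : (MvPolynomial σ R)[X] ≃+* (MvPolynomial σ R)[X] :=
    RingEquiv.ofRingHom (shear w) (shear (-w)) (by simpa using hshear (-w)) (hshear w)
  have he : e (C H) = genericLine H w := by simp [e, shear, genericLine, restrictLine]
  rw [← he, MulEquiv.prime_iff e]
  exact prime_C_iff.2 hH

theorem totalDegree_coeff_prod_le {ι : Type*} (s : Finset ι) {F : ι → (MvPolynomial σ R)[X]}
    {d : ι → ℕ} (h : ∀ i ∈ s, ∀ j, ((F i).coeff j).totalDegree ≤ d i) (j : ℕ) :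
    ((∏ i ∈ s, F i).coeff j).totalDegree ≤ ∑ i ∈ s, d i := by
  classical
  induction s using Finset.induction_on generalizing j with
  | empty =>
    rw [Finset.prod_empty, coeff_one]
    split_ifs <;> simp
  | insert i s hi ih =>
    rw [Finset.prod_insert hi, Finset.sum_insert hi, coeff_mul]
    have ih := ih fun k hk => h k (Finset.mem_insert_of_mem hk)
    exact MvPolynomial.totalDegree_finsetSum_le fun x _ =>
      (MvPolynomial.totalDegree_mul _ _).trans (add_le_add (h i (by simp) _) (ih _))

theorem totalDegree_coeff_pow_le {F : (MvPolynomial σ R)[X]} {d : ℕ}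
    (h : ∀ j, (F.coeff j).totalDegree ≤ d) (m j : ℕ) :
    ((F ^ m).coeff j).totalDegree ≤ m * d := by
  simpa using totalDegree_coeff_prod_le (Finset.range m) (fun _ _ => h) j

theorem totalDegree_coeff_genericLine_le (H : MvPolynomial σ R) (w : σ → R) (j : ℕ) :
    ((genericLine H w).coeff j).totalDegree ≤ H.totalDegree := by
  have hlinear (i j) : ((C (MvPolynomial.X i) + C (MvPolynomial.C (w i)) * X :
      (MvPolynomial σ R)[X]).coeff j).totalDegree ≤ 1 := by
    rw [coeff_add, coeff_C_mul, coeff_C, coeff_X]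
    refine (MvPolynomial.totalDegree_add _ _).trans (max_le ?_ ?_) <;> split_ifs
    · exact (MvPolynomial.totalDegree_monomial_le _ _).trans_eq (by simp)
    all_goals simp
  rw [genericLine, restrictLine, MvPolynomial.aeval_def, MvPolynomial.eval₂_eq, finsetSum_coeff]
  refine MvPolynomial.totalDegree_finsetSum_le fun m hm => ?_
  rw [Polynomial.algebraMap_apply, MvPolynomial.algebraMap_eq, coeff_C_mul]
  calc _ ≤ 0 + ∑ i ∈ m.support, m i * 1 := by
        refine (MvPolynomial.totalDegree_mul _ _).trans (add_le_add (by simp) ?_)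
        exact totalDegree_coeff_prod_le _ (fun i _ => totalDegree_coeff_pow_le (hlinear i) _) j
    _ ≤ H.totalDegree := by simpa [Finsupp.sum] using MvPolynomial.le_totalDegree hm

theorem totalDegree_coeff_derivative_le {F : (MvPolynomial σ R)[X]} {d : ℕ}
    (h : ∀ j, (F.coeff j).totalDegree ≤ d) (j : ℕ) :
    ((derivative F).coeff j).totalDegree ≤ d := by
  rw [coeff_derivative, ← Nat.cast_succ, ← nsmul_eq_mul']
  exact (MvPolynomial.totalDegree_smul_le _ _).trans (h _)

theorem totalDegree_lineDiscr_le (H : MvPolynomial σ R) (w : σ → R) :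
    (lineDiscr H w).totalDegree ≤ (2 * H.totalDegree + 1) * H.totalDegree := by
  have hcoeff := totalDegree_coeff_genericLine_le H w
  have hdeg : (genericLine H w).natDegree ≤ H.totalDegree := natDegree_restrictLine_le H _ _
  have hdet := totalDegree_det_le (d := H.totalDegree) <|
    forall_sylvester (P := fun q : MvPolynomial σ R => q.totalDegree ≤ H.totalDegree) (by simp)
      (m := (genericLine H w).natDegree) (n := (genericLine H w).natDegree - 1)
      hcoeff (totalDegree_coeff_derivative_le hcoeff)
  rw [Fintype.card_fin] at hdet
  calc _ ≤ _ + H.totalDegree :=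
        (MvPolynomial.totalDegree_mul _ _).trans (add_le_add hdet (hcoeff _))
    _ ≤ 2 * H.totalDegree * H.totalDegree + H.totalDegree := by gcongr; omega
    _ = _ := by ring

theorem aeval_lineDiscr (H : MvPolynomial σ R) (w : σ → R) (x : σ → S) :
    MvPolynomial.aeval x (lineDiscr H w) =
      resultant (restrictLine H x fun i => algebraMap R S (w i))
        (derivative (restrictLine H x fun i => algebraMap R S (w i))) (genericLine H w).natDegree
        ((genericLine H w).natDegree - 1) *
      (restrictLine H x fun i => algebraMap R S (w i)).coeff (genericLine H w).natDegree := by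
  rw [← genericLine_map_aeval, derivative_map, resultant_map_map, coeff_map, lineDiscr, map_mul]
  rfl

end

theorem squarefree_restrictLine {σ R K : Type*} [CommRing R] [Field K] [Algebra R K]
    {H : MvPolynomial σ R} {w : σ → R} (hw : 1 ≤ (genericLine H w).natDegree) {x : σ → K}
    (hx : MvPolynomial.aeval x (lineDiscr H w) ≠ 0) :
    Squarefree (restrictLine H x fun i => algebraMap R K (w i)) ∧
      1 ≤ (restrictLine H x fun i => algebraMap R K (w i)).natDegree := by
  rw [aeval_lineDiscr] at hx
  obtain ⟨hres, hlead⟩ := mul_ne_zero_iff.1 hx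
  refine ⟨squarefree_of_resultant_derivative_ne_zero hw ?_ hres,
    hw.trans (le_natDegree_of_ne_zero hlead)⟩
  rw [← genericLine_map_aeval]
  exact natDegree_map_le

theorem lineDiscr_ne_zero {σ R K : Type*} [CommRing R] [Field K] [CharZero K] [Algebra R K]
    [FaithfulSMul R K] {H : MvPolynomial σ R}
    (hH : Irreducible (MvPolynomial.map (algebraMap R K) H)) {w : σ → R}
    (hw : 1 ≤ (genericLine H w).natDegree) : lineDiscr H w ≠ 0 := by
  set G := genericLine (MvPolynomial.map (algebraMap R K) H) fun i => algebraMap R K (w i)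
  let ι := algebraMap (MvPolynomial σ K) (FractionRing (MvPolynomial σ K))
  let φ : MvPolynomial σ R →+* FractionRing (MvPolynomial σ K) :=
    ι.comp (MvPolynomial.map (algebraMap R K))
  have := (FaithfulSMul.algebraMap_injective R K).isDomain
  have hι : Function.Injective ι := IsFractionRing.injective _ _
  have hφ : Function.Injective φ :=
    hι.comp (MvPolynomial.map_injective _ (FaithfulSMul.algebraMap_injective R K))
  have hmap : G.map ι = (genericLine H w).map φ := by
    rw [← Polynomial.map_map, genericLine_map_algebraMap]
  have hdeg : (G.map ι).natDegree = (genericLine H w).natDegree := by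
    rw [hmap, natDegree_map_eq_of_injective hφ]
  have hG : Irreducible G := (prime_genericLine hH.prime _).irreducible
  have hGdeg : G.natDegree ≠ 0 := by
    rw [← natDegree_map_eq_of_injective hι G, hdeg]
    omega
  have hirr : Irreducible (G.map ι) :=
    (hG.isPrimitive hGdeg).irreducible_iff_irreducible_map_fraction_map.1 hG
  have hres := resultant_ne_zero _ _ hirr.separable
  rw [natDegree_derivative, hdeg, hmap, derivative_map, resultant_map_map] at hres
  refine mul_ne_zero (fun h => hres (by rw [h, map_zero])) (leadingCoeff_ne_zero.2 ?_)
  exact ne_zero_of_natDegree_gt hw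

section Majorant

variable {A : Type*} [CommRing A] [LinearOrder A] [IsStrictOrderedRing A]

/-- `q` is a coefficientwise majorant of `f`; the coefficients of `f` are then bounded by `q(1)`. -/
def IsMajorant (q f : A[X]) : Prop := ∀ i, |f.coeff i| ≤ q.coeff i

namespace IsMajorant

theorem mul {q₁ q₂ f₁ f₂ : A[X]} (h₁ : IsMajorant q₁ f₁) (h₂ : IsMajorant q₂ f₂) :
    IsMajorant (q₁ * q₂) (f₁ * f₂) := fun i => by
  rw [coeff_mul, coeff_mul]
  refine (Finset.abs_sum_le_sum_abs _ _).trans (Finset.sum_le_sum fun x _ => ?_)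
  rw [abs_mul]
  exact mul_le_mul (h₁ _) (h₂ _) (abs_nonneg _) ((abs_nonneg _).trans (h₁ _))

theorem sum {ι : Type*} (s : Finset ι) {q f : ι → A[X]} (h : ∀ i, IsMajorant (q i) (f i)) :
    IsMajorant (∑ i ∈ s, q i) (∑ i ∈ s, f i) := fun j => by
  rw [finsetSum_coeff, finsetSum_coeff]
  exact (Finset.abs_sum_le_sum_abs _ _).trans (Finset.sum_le_sum fun i _ => h i j)

theorem prod {ι : Type*} (s : Finset ι) {q f : ι → A[X]} (h : ∀ i, IsMajorant (q i) (f i)) :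
    IsMajorant (∏ i ∈ s, q i) (∏ i ∈ s, f i) := by
  refine Finset.prod_hom_rel (fun i => ?_) fun i _ _ hi => (h i).mul hi
  rw [coeff_one]
  split_ifs <;> simp

theorem pow {q f : A[X]} (h : IsMajorant q f) (m : ℕ) : IsMajorant (q ^ m) (f ^ m) := by
  simpa using prod (Finset.range m) fun _ => h

theorem abs_coeff_le {q f : A[X]} (h : IsMajorant q f) (i : ℕ) : |f.coeff i| ≤ q.eval 1 := by
  have hq (j) : 0 ≤ q.coeff j := (abs_nonneg _).trans (h j)
  refine (h i).trans ?_
  rw [eval_eq_sum_range' (n := max (i + 1) (q.natDegree + 1)) (by simp)]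
  simp only [one_pow, mul_one]
  exact Finset.single_le_sum (fun j _ => hq j) (by simp)

end IsMajorant

variable {σ : Type*} [Fintype σ] {H : MvPolynomial σ A} {N M : A}

theorem abs_coeff_restrictLine_le (hN : ∀ m, |H.coeff m| ≤ N) (hM : 1 ≤ M) {x w : σ → A}
    (hxw : ∀ i, |x i| + |w i| ≤ M) (j : ℕ) :
    |(restrictLine H x w).coeff j| ≤
      (H.totalDegree + 1) ^ Fintype.card σ * (N * M ^ H.totalDegree) := by
  have hmaj : IsMajorant (∑ m ∈ H.support, C N * ∏ i ∈ m.support, (C |x i| + C |w i| * X) ^ m i)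
      (restrictLine H x w) := by
    rw [restrictLine, MvPolynomial.aeval_def, MvPolynomial.eval₂_eq]
    refine .sum _ fun m => .mul (fun i => ?_) (.prod _ fun i => .pow (fun j => ?_) _)
    · rw [← C_eq_algebraMap, coeff_C, coeff_C]
      split_ifs
      exacts [hN m, by simp]
    · rw [coeff_add, coeff_add, coeff_C_mul, coeff_C_mul, coeff_C, coeff_C, coeff_X]
      refine (abs_add_le _ _).trans (add_le_add ?_ ?_) <;> split_ifs <;> simp
  have hN0 : 0 ≤ N := (abs_nonneg _).trans (hN 0)
  have hterm : ∀ m ∈ H.support,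
      N * ∏ i ∈ m.support, (|x i| + |w i|) ^ m i ≤ N * M ^ H.totalDegree := fun m hm => by
    gcongr
    calc ∏ i ∈ m.support, (|x i| + |w i|) ^ m i ≤ ∏ i ∈ m.support, M ^ m i := by
          gcongr with i; exact hxw i
      _ = M ^ m.sum fun _ e => e := Finset.prod_pow_eq_pow_sum _ _ _
      _ ≤ M ^ H.totalDegree := pow_le_pow_right₀ hM (MvPolynomial.le_totalDegree hm)
  refine (hmaj.abs_coeff_le j).trans ?_
  simp only [eval_finsetSum, eval_mul, eval_C, eval_prod, eval_pow, eval_add, eval_X, mul_one]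
  refine (Finset.sum_le_card_nsmul _ _ _ hterm).trans ?_
  rw [nsmul_eq_mul]
  gcongr
  exact_mod_cast card_support_le H

theorem abs_coeff_derivative_le {f : A[X]} {L : A} {d : ℕ} (hf : f.natDegree ≤ d)
    (hL : ∀ j, |f.coeff j| ≤ L) (j : ℕ) : |(derivative f).coeff j| ≤ d * L := by
  have hL0 : 0 ≤ L := (abs_nonneg _).trans (hL 0)
  rcases lt_or_ge d (j + 1) with hj | hj
  · rw [coeff_derivative, coeff_eq_zero_of_natDegree_lt (hf.trans_lt hj), zero_mul, abs_zero]
    positivity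
  · rw [coeff_derivative, ← Nat.cast_succ, abs_mul, Nat.abs_cast, mul_comm]
    gcongr
    exact hL _

theorem abs_resultant_derivative_le {f : A[X]} {L : A} {d k : ℕ} (hk : k ≤ d)
    (hf : f.natDegree ≤ d) (hL1 : 1 ≤ L) (hL : ∀ j, |f.coeff j| ≤ L) :
    |resultant f (derivative f) k (k - 1)| ≤ (2 * d).factorial * ((d + 1) * L) ^ (2 * d) := by
  have hL0 : 0 ≤ d * L := by positivity
  have hdet := Matrix.det_le (abv := AbsoluteValue.abs) <|
    forall_sylvester (P := fun a : A => |a| ≤ (d + 1) * L) (m := k) (n := k - 1)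
      (by rw [abs_zero]; positivity) (fun j => (hL j).trans (by linarith))
      fun j => (abs_coeff_derivative_le hf hL j).trans (by linarith)
  rw [AbsoluteValue.abs_apply, Fintype.card_fin, nsmul_eq_mul] at hdet
  refine hdet.trans ?_
  have hdim : k + (k - 1) ≤ 2 * d := by omega
  gcongr
  linarith

theorem abs_aeval_lineDiscr_le {D : ℕ} (hD : H.totalDegree ≤ D) (hN1 : 1 ≤ N)
    (hN : ∀ m, |H.coeff m| ≤ N) (hM : 1 ≤ M) {x w : σ → A} (hxw : ∀ i, |x i| + |w i| ≤ M) :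
    |MvPolynomial.aeval x (lineDiscr H w)| ≤
      (2 * D).factorial * ((D + 1) ^ (Fintype.card σ + 1) * (N * M ^ D)) ^ (2 * D + 1) := by
  set L : A := (D + 1) ^ Fintype.card σ * (N * M ^ D) with hL
  have hL1 : 1 ≤ L := one_le_mul_of_one_le_of_one_le (one_le_pow₀ (by simp))
    (one_le_mul_of_one_le_of_one_le hN1 (one_le_pow₀ hM))
  have hcoeff (j) : |(restrictLine H x w).coeff j| ≤ L := by
    refine (abs_coeff_restrictLine_le hN hM hxw j).trans ?_
    rw [hL]
    gcongr
  have hdeg : (restrictLine H x w).natDegree ≤ D := (natDegree_restrictLine_le H x w).trans hD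
  have hkD : (genericLine H w).natDegree ≤ D := (natDegree_restrictLine_le H _ _).trans hD
  have hres := abs_resultant_derivative_le hkD hdeg hL1 hcoeff
  rw [aeval_lineDiscr, abs_mul]
  calc _ ≤ (2 * D).factorial * ((D + 1) * L) ^ (2 * D) * ((D + 1) * L) := by
        refine mul_le_mul hres ((hcoeff _).trans ?_) (abs_nonneg _) (by positivity)
        exact le_mul_of_one_le_left (by positivity) (by simp)
    _ = _ := by rw [hL]; ring

end Majorant

/-- The restriction of `H` to the line through `x` in the direction `w` is nonconstant and
squarefree, as Stepanov's method requires. -/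
def IsSquarefreeOnLine {σ R S : Type*} [CommRing R] [CommRing S] [Algebra R S]
    (H : MvPolynomial σ R) (x w : σ → S) : Prop :=
  Squarefree (restrictLine H x w) ∧ 1 ≤ (restrictLine H x w).natDegree

theorem mul_ncard_not_isSquarefreeOnLine_le {n : ℕ} {K : Type*} [Field K] [Fintype K]
    {H : MvPolynomial (Fin n) ℤ} {w : Fin n → ℤ} (hw : 1 ≤ (genericLine H w).natDegree)
    (hK : MvPolynomial.map (Int.castRingHom K) (lineDiscr H w) ≠ 0) :
    Fintype.card K * {x : Fin n → K | ¬ IsSquarefreeOnLine H x fun i => (w i : K)}.ncard ≤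
      (2 * H.totalDegree + 1) * H.totalDegree * Fintype.card K ^ n := by
  classical
  have hzeros := card_mul_card_eval_eq_zero_le hK Finset.univ
  rw [Finset.card_univ] at hzeros
  rw [Set.ncard_eq_toFinset_card', Set.toFinset_ofPred]
  calc _ ≤ _ := by
        gcongr
        intro x hx
        simp only [Finset.mem_filter, Finset.mem_univ, true_and, Fintype.mem_piFinset,
          implies_true] at hx ⊢
        by_contra h
        refine hx (squarefree_restrictLine hw ?_)
        rwa [MvPolynomial.eval_map] at h
    _ ≤ _ := hzeros
    _ ≤ _ := by
        gcongr
        exact (Finset.sup_mono (MvPolynomial.support_map_subset _ _)).trans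
          (totalDegree_lineDiscr_le H w)

theorem map_castRingHom_ne_zero_of_not_dvd_eval {σ : Type*} {f : MvPolynomial σ ℤ} {x : σ → ℤ}
    {p : ℕ} (h : ¬ (p : ℤ) ∣ MvPolynomial.eval x f) :
    MvPolynomial.map (Int.castRingHom (ZMod p)) f ≠ 0 := fun hf => by
  refine h ((ZMod.intCast_zmod_eq_zero_iff_dvd _ p).1 ?_)
  have := MvPolynomial.map_eval (Int.castRingHom (ZMod p)) x f
  rwa [hf, map_zero] at this

theorem exists_ncard_not_isSquarefreeOnLine_le (n D : ℕ) :
    ∃ c e : ℕ, ∀ {H : MvPolynomial (Fin n) ℤ},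
      Irreducible (MvPolynomial.map (Int.castRingHom ℚ) H) → H.totalDegree ≤ D →
      ∀ {N Z : ℕ}, 1 ≤ N → (∀ m, |H.coeff m| ≤ N) → 1 ≤ Z → ∀ {w : Fin n → ℤ}, (∀ i, |w i| ≤ Z) →
      1 ≤ (genericLine H w).natDegree →
      ∃ m : ℤ, m ≠ 0 ∧ |m| ≤ c * (N * Z) ^ e ∧ ∀ (p : ℕ) [Fact p.Prime], ¬ (p : ℤ) ∣ m →
        p * {x : Fin n → ZMod p | ¬ IsSquarefreeOnLine H x fun i => (w i : ZMod p)}.ncard ≤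
          (2 * D + 1) * D * p ^ n := by
  refine ⟨(2 * D).factorial * ((D + 1) ^ (n + 1) * ((2 * D + 1) * D + 1) ^ D) ^ (2 * D + 1),
    (D + 1) * (2 * D + 1), ?_⟩
  generalize hK : (2 * D + 1) * D = K
  intro H hH hD N Z hN1 hN hZ w hw hdeg
  obtain ⟨x, hx, hx0⟩ := exists_abs_le_totalDegree_eval_ne_zero
    (lineDiscr_ne_zero (K := ℚ) hH hdeg)
  have hDK : (2 * H.totalDegree + 1) * H.totalDegree ≤ K := hK ▸ Nat.mul_le_mul (by lia) hD
  have hN1' : (1 : ℤ) ≤ N := by exact_mod_cast hN1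
  have hZ' : (1 : ℤ) ≤ Z := by exact_mod_cast hZ
  have hxw (i) : |x i| + |w i| ≤ (K + 1) * (N * Z) := by
    have hxK : |x i| ≤ K :=
      (hx i).trans (by exact_mod_cast (totalDegree_lineDiscr_le H w).trans hDK)
    nlinarith [hw i, mul_le_mul hN1' hZ' zero_le_one (by positivity)]
  have hsize := abs_aeval_lineDiscr_le hD hN1' hN
    (one_le_mul_of_one_le_of_one_le (by simp) (one_le_mul_of_one_le_of_one_le hN1' hZ')) hxw
  refine ⟨MvPolynomial.eval x (lineDiscr H w), hx0, hsize.trans ?_, fun p _ hp => ?_⟩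
  · rw [Fintype.card_fin]
    push_cast
    have hNZ : (N : ℤ) ≤ N * Z := le_mul_of_one_le_right (by positivity) hZ'
    calc _ ≤ ((2 * D).factorial : ℤ) *
          ((D + 1) ^ (n + 1) * ((N * Z) * ((K + 1) * (N * Z)) ^ D)) ^ (2 * D + 1) := by gcongr
      _ = ((2 * D).factorial : ℤ) *
          ((D + 1) ^ (n + 1) * (K + 1) ^ D * (N * Z) ^ (D + 1)) ^ (2 * D + 1) := by
          rw [mul_pow ((K : ℤ) + 1)]
          congr 2
          ring
      _ = _ := by rw [mul_pow (_ * _) _ (2 * D + 1), ← pow_mul, mul_assoc]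
  · have hcard := mul_ncard_not_isSquarefreeOnLine_le (K := ZMod p) hdeg
      (map_castRingHom_ne_zero_of_not_dvd_eval hp)
    rw [ZMod.card] at hcard
    exact hcard.trans (Nat.mul_le_mul_right _ hDK)

section

variable {σ R S : Type*} [CommRing R] [CommRing S] [Algebra R S]

theorem aeval_add_mul_eq_of_natDegree_genericLine_eq_zero {H : MvPolynomial σ R} {w : σ → R}
    (hw : (genericLine H w).natDegree = 0) (x : σ → S) (t : S) :
    MvPolynomial.aeval (fun i => x i + algebraMap R S (w i) * t) H = MvPolynomial.aeval x H := by
  have hline (t : S) :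
      (restrictLine H x fun i => algebraMap R S (w i)).eval t = MvPolynomial.aeval x H := by
    obtain ⟨c, hc⟩ := natDegree_eq_zero.1 hw
    have h0 := eval_restrictLine H x (fun i => algebraMap R S (w i)) 0
    rw [← genericLine_map_aeval, ← hc, map_C, eval_C] at h0 ⊢
    simpa using h0
  rw [← hline t, eval_restrictLine]

theorem degreeOf_aeval_eq_zero {τ : Type*} {j : τ} (H : MvPolynomial σ R)
    {x : σ → MvPolynomial τ R} (hx : ∀ i, x i ∈ MvPolynomial.supported R {j}ᶜ) :
    MvPolynomial.degreeOf j (MvPolynomial.aeval x H) = 0 := by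
  have hmem : MvPolynomial.aeval x H ∈ MvPolynomial.supported R {j}ᶜ := by
    have hrange : MvPolynomial.aeval x H ∈ Algebra.adjoin R (Set.range x) := by
      rw [Algebra.adjoin_range_eq_range_aeval]
      exact ⟨H, rfl⟩
    exact Algebra.adjoin_le (Set.range_subset_iff.2 hx) hrange
  by_contra hdeg
  exact MvPolynomial.mem_supported.1 hmem
    (Finset.mem_coe.2 (MvPolynomial.mem_vars_iff_degreeOf_ne_zero.2 hdeg)) rfl

theorem exists_isUnit_det_degreeOf_lsubMv_eq_zero {n : ℕ} {H : MvPolynomial (Fin n) ℚ}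
    {w : Fin n → ℚ} (hw : w ≠ 0) (h : (genericLine H w).natDegree = 0) :
    ∃ (M : Matrix (Fin n) (Fin n) ℚ) (j : Fin n), IsUnit M.det ∧
      MvPolynomial.degreeOf j (lsubMv M H) = 0 := by
  obtain ⟨j, hj⟩ := Function.ne_iff.1 hw
  refine ⟨(1 : Matrix (Fin n) (Fin n) ℚ).updateCol j w, j, ?_, ?_⟩
  · rw [← Matrix.cramer_apply, Matrix.cramer_one]
    simpa using hj
  let x (i : Fin n) : MvPolynomial (Fin n) ℚ := if i = j then 0 else MvPolynomial.X i
  have hx (i) : ∑ k, MvPolynomial.C ((1 : Matrix (Fin n) (Fin n) ℚ).updateCol j w i k) *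
      MvPolynomial.X k = x i + MvPolynomial.C (w i) * MvPolynomial.X j := by
    have hterm (k) : MvPolynomial.C ((1 : Matrix (Fin n) (Fin n) ℚ).updateCol j w i k) *
        MvPolynomial.X k = (if k = i then x i else 0) +
          if k = j then MvPolynomial.C (w i) * MvPolynomial.X j else 0 := by
      by_cases hkj : k = j <;> by_cases hki : k = i <;> subst_vars <;>
        simp_all [x, eq_comm]
    simp only [hterm, Finset.sum_add_distrib, Finset.sum_ite_eq', Finset.mem_univ, if_true]
  have hsub : lsubMv ((1 : Matrix (Fin n) (Fin n) ℚ).updateCol j w) H =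
      MvPolynomial.aeval x H := by
    rw [← aeval_add_mul_eq_of_natDegree_genericLine_eq_zero h x (MvPolynomial.X j)]
    simp only [lsubMv, AlgHom.toRingHom_eq_coe, RingHom.coe_coe, hx, MvPolynomial.algebraMap_eq]
  rw [hsub]
  refine degreeOf_aeval_eq_zero H fun i => ?_
  simp only [x]
  split_ifs with hij
  exacts [Subalgebra.zero_mem _, MvPolynomial.X_mem_supported.2 (by simpa using hij)]

end

theorem one_le_natDegree_genericLine {n : ℕ} {H : MvPolynomial (Fin n) ℤ}
    (hH : ¬ ∃ (σ : Matrix (Fin n) (Fin n) ℚ) (I : Set (Fin n)), IsUnit σ.det ∧ I ≠ Set.univ ∧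
      ∀ j ∉ I,
        MvPolynomial.degreeOf j (lsubMv σ (MvPolynomial.map (Int.castRingHom ℚ) H)) = 0)
    {w : Fin n → ℤ} (hw : w ≠ 0) : 1 ≤ (genericLine H w).natDegree := by
  by_contra! hdeg
  have hwQ : (fun i => algebraMap ℤ ℚ (w i)) ≠ 0 := fun h =>
    hw (funext fun i => by simpa using congrFun h i)
  have hdegQ : (genericLine (MvPolynomial.map (algebraMap ℤ ℚ) H)
      fun i => algebraMap ℤ ℚ (w i)).natDegree = 0 := by
    rw [← genericLine_map_algebraMap]
    have := natDegree_map_le (f := MvPolynomial.map (algebraMap ℤ ℚ)) (p := genericLine H w)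
    omega
  obtain ⟨σ, j, hσ, hj⟩ := exists_isUnit_det_degreeOf_lsubMv_eq_zero hwQ hdegQ
  refine hH ⟨σ, {j}ᶜ, hσ, fun h => ?_, fun k hk => ?_⟩
  · simpa using h.ge (Set.mem_univ j)
  · rwa [show k = j by simpa using hk]

/-! ### Correlations along lines -/

section LineCorrelation

variable {F V : Type*} [Ring F] [Fintype F] [AddCommGroup V] [Module F V] [Fintype V]

variable (F) in
/-- The correlation of `g` with its translates by the points of the line `F • w`. -/
def lineCorrelation (g : V → ℝ) (w : V) : ℝ :=
  ∑ t : F, ∑ x, g x * g (x + t • w)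

theorem lineCorrelation_sub (g : V → ℝ) (v v' : V) :
    lineCorrelation F g (v' - v) = ∑ t : F, ∑ x, g (x + t • v) * g (x + t • v') := by
  refine Finset.sum_congr rfl fun t _ => ?_
  rw [← Equiv.sum_comp (Equiv.addRight (t • v))]
  refine Finset.sum_congr rfl fun x _ => ?_
  rw [Equiv.coe_addRight, smul_sub, add_add_sub_cancel]

theorem sum_sq_sum_eq_sum_lineCorrelation {ι : Type*} (g : V → ℝ) (T : Finset ι) (v : ι → V) :
    ∑ t : F, ∑ x, (∑ z ∈ T, g (x + t • v z)) ^ 2 =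
      ∑ z ∈ T, ∑ z' ∈ T, lineCorrelation F g (v z' - v z) := by
  simp_rw [lineCorrelation_sub, sq, Finset.sum_mul_sum]
  exact Finset.sum_comm_cycle.trans (Finset.sum_congr rfl fun _ _ => Finset.sum_comm_cycle)

theorem card_mul_lineCorrelation (g : V → ℝ) (w : V) :
    Fintype.card F * lineCorrelation F g w = ∑ x, (∑ t : F, g (x + t • w)) ^ 2 := by
  have hshift (s : F) :
      ∑ t : F, ∑ x, g (x + s • w) * g (x + t • w) = lineCorrelation F g w := by
    rw [← Equiv.sum_comp (Equiv.addRight s)]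
    refine Finset.sum_congr rfl fun t _ => ?_
    rw [← Equiv.sum_comp (Equiv.subRight (s • w))]
    refine Finset.sum_congr rfl fun x _ => ?_
    rw [Equiv.subRight_apply, Equiv.coe_addRight, sub_add_cancel, add_smul, add_comm (t • w),
      ← add_assoc, sub_add_cancel]
  simp_rw [sq, Finset.sum_mul_sum, Finset.sum_comm (s := (Finset.univ : Finset V)), hshift,
    Finset.sum_const, Finset.card_univ, nsmul_eq_mul]

theorem lineCorrelation_le {g : V → ℝ} {L : ℝ} (hg : ∀ x, |g x| ≤ L) (w : V) :
    lineCorrelation F g w ≤ L ^ 2 * (Fintype.card F * Fintype.card V) := by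
  have hterm (t : F) (x : V) : g x * g (x + t • w) ≤ L ^ 2 :=
    (le_abs_self _).trans <| by
      rw [abs_mul, sq]
      exact mul_le_mul (hg _) (hg _) (abs_nonneg _) ((abs_nonneg _).trans (hg 0))
  calc _ ≤ ∑ _t : F, ∑ _x : V, L ^ 2 :=
        Finset.sum_le_sum fun t _ => Finset.sum_le_sum fun x _ => hterm t x
    _ = _ := by
        simp only [Finset.sum_const, Finset.card_univ, nsmul_eq_mul]
        ring

theorem lineCorrelation_le_of_abs_sum_le [Nontrivial F] {g : V → ℝ} {L A K : ℝ} {w : V}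
    (hg : ∀ x, |g x| ≤ L) {bad : Finset V} (hbad : Fintype.card F * #bad ≤ K * Fintype.card V)
    (hA : ∀ x ∉ bad, |∑ t : F, g (x + t • w)| ≤ A * √(Fintype.card F)) :
    lineCorrelation F g w ≤ (A ^ 2 + K * L ^ 2) * Fintype.card V := by
  classical
  have hF : (0 : ℝ) < Fintype.card F := by exact_mod_cast Fintype.card_pos
  have hpt (x : V) : (∑ t : F, g (x + t • w)) ^ 2 ≤
      A ^ 2 * Fintype.card F + if x ∈ bad then (L * Fintype.card F) ^ 2 else 0 := by
    rw [← sq_abs]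
    split_ifs with hx
    · have htriv : |∑ t : F, g (x + t • w)| ≤ L * Fintype.card F := by
        rw [mul_comm, ← nsmul_eq_mul]
        exact (Finset.abs_sum_le_sum_abs _ _).trans (Finset.sum_le_card_nsmul _ _ _ fun t _ => hg _)
      have := pow_le_pow_left₀ (abs_nonneg _) htriv 2
      nlinarith [mul_nonneg (sq_nonneg A) hF.le]
    · have := pow_le_pow_left₀ (abs_nonneg _) (hA x hx) 2
      rwa [mul_pow, Real.sq_sqrt hF.le, ← add_zero (A ^ 2 * _)] at this
  refine le_of_mul_le_mul_left ?_ hF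
  calc _ ≤ ∑ x, (A ^ 2 * Fintype.card F + if x ∈ bad then (L * Fintype.card F) ^ 2 else 0) := by
        rw [card_mul_lineCorrelation]
        exact Finset.sum_le_sum fun x _ => hpt x
    _ = Fintype.card V * (A ^ 2 * Fintype.card F) +
          Fintype.card F * #bad * (L ^ 2 * Fintype.card F) := by
        rw [Finset.sum_add_distrib, Finset.sum_ite_mem, Finset.univ_inter]
        simp only [Finset.sum_const, Finset.card_univ, nsmul_eq_mul]
        ring
    _ ≤ Fintype.card V * (A ^ 2 * Fintype.card F) +
          K * Fintype.card V * (L ^ 2 * Fintype.card F) := by gcongr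
    _ = _ := by ring

end LineCorrelation

/-- The composition of the `l`-th power residue detector modulo `p` with the polynomial map `H`. -/
def mvPowerDetector {n : ℕ} (p l : ℕ) (H : MvPolynomial (Fin n) ℤ) (x : Fin n → ZMod p) : ℝ :=
  powerDetector p l (MvPolynomial.aeval x H)

theorem mvPowerDetector_add_smul {n p : ℕ} (l : ℕ) (H : MvPolynomial (Fin n) ℤ)
    (x w : Fin n → ZMod p) (t : ZMod p) :
    mvPowerDetector p l H (x + t • w) = powerDetector p l ((restrictLine H x w).eval t) := by
  simp only [mvPowerDetector, eval_restrictLine, mul_comm _ t]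
  rfl

/-- The integer vectors of sup norm at most `Z`. -/
def intBox (n Z : ℕ) : Finset (Fin n → ℤ) :=
  Fintype.piFinset fun _ => Finset.Icc (-(Z : ℤ)) Z

theorem mem_intBox {n Z : ℕ} {x : Fin n → ℤ} : x ∈ intBox n Z ↔ ∀ i, |x i| ≤ Z := by
  simp only [intBox, Fintype.mem_piFinset, Finset.mem_Icc, abs_le]

theorem card_intBox (n Z : ℕ) : #(intBox n Z) = (2 * Z + 1) ^ n := by
  rw [intBox, Fintype.card_piFinset_const, Int.card_Icc]
  congr 1
  lia

/-- The vectors of natural numbers with coordinates less than `Z`. -/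
def natBox (n Z : ℕ) : Finset (Fin n → ℕ) :=
  Fintype.piFinset fun _ => Finset.range Z

theorem mem_natBox {n Z : ℕ} {z : Fin n → ℕ} : z ∈ natBox n Z ↔ ∀ i, z i < Z := by
  simp only [natBox, Fintype.mem_piFinset, Finset.mem_range]

theorem card_natBox (n Z : ℕ) : #(natBox n Z) = Z ^ n := by
  rw [natBox, Fintype.card_piFinset_const, Finset.card_range]

open Classical in
/-- The nonzero directions `w` of sup norm at most `Z` for which more than `K / p` of the lines of
direction `w` modulo `p` fail the hypothesis of Stepanov's method. -/
def badDirections {n : ℕ} (H : MvPolynomial (Fin n) ℤ) (K Z p : ℕ) : Finset (Fin n → ℤ) :=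
  {w ∈ intBox n Z | w ≠ 0 ∧ K * p ^ n <
    p * {x : Fin n → ZMod p | ¬ IsSquarefreeOnLine H x fun i => (w i : ZMod p)}.ncard}

theorem lineCorrelation_mvPowerDetector_le {n D K Z l p : ℕ} [Fact p.Prime] (hl : l.Prime)
    (hlp : l ∣ p - 1) {H : MvPolynomial (Fin n) ℤ} (hD : H.totalDegree ≤ D) {w : Fin n → ℤ}
    (hw : w ∈ intBox n Z) (hw0 : w ≠ 0) (hbad : w ∉ badDirections H K Z p) :
    lineCorrelation (ZMod p) (mvPowerDetector p l H) (fun i => (w i : ZMod p)) ≤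
      ((6 * l * (4 * l * (l * D + 2))) ^ 2 + K * l ^ 2) * p ^ n := by
  classical
  simp only [badDirections, Finset.mem_filter, not_and, not_lt] at hbad
  have hK := hbad hw hw0
  rw [Set.ncard_eq_toFinset_card', Set.toFinset_ofPred] at hK
  have hcorr := lineCorrelation_le_of_abs_sum_le (F := ZMod p) (w := fun i => (w i : ZMod p))
    (A := 6 * l * (4 * l * (l * D + 2))) (K := K)
    (fun x => abs_powerDetector_le hl.one_le (MvPolynomial.aeval x H))
    (bad := {x | ¬ IsSquarefreeOnLine H x fun i => (w i : ZMod p)})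
    (by
      rw [Fintype.card_fun, Fintype.card_fin, ZMod.card]
      exact_mod_cast hK)
    fun x hx => ?_
  · rw [Fintype.card_fun, Fintype.card_fin, ZMod.card] at hcorr
    exact_mod_cast hcorr
  · obtain ⟨hsq, hdeg⟩ : IsSquarefreeOnLine H x fun i => (w i : ZMod p) := by
      simpa only [Finset.mem_filter, Finset.mem_univ, true_and, not_not] using hx
    rw [ZMod.card]
    have hsum := abs_sum_powerDetector_le (c := 4 * l * (l * D + 2)) hl hlp hsq hdeg (by
      gcongr
      exact (natDegree_restrictLine_le H _ _).trans hD)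
    simp_rw [← mvPowerDetector_add_smul] at hsum
    exact_mod_cast hsum

theorem sum_sum_ite_sub_mem_le {n : ℕ} (T : Finset (Fin n → ℕ)) (S : Finset (Fin n → ℤ)) {c : ℝ}
    (hc : 0 ≤ c) :
    ∑ z ∈ T, ∑ z' ∈ T, (if (fun i => (z' i : ℤ) - z i) ∈ S then c else 0) ≤ #T * (#S * c) := by
  have hcount (z : Fin n → ℕ) : #{z' ∈ T | (fun i => (z' i : ℤ) - z i) ∈ S} ≤ #S :=
    Finset.card_le_card_of_injOn (fun z' i => (z' i : ℤ) - z i)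
      (fun z' hz' => (Finset.mem_filter.1 hz').2) fun x _ y _ hxy => funext fun i => by
        have := congrFun hxy i
        lia
  rw [← nsmul_eq_mul]
  refine Finset.sum_le_card_nsmul _ _ _ fun z _ => ?_
  rw [← Finset.sum_filter, Finset.sum_const, nsmul_eq_mul]
  gcongr
  exact hcount z

theorem sum_sq_sum_mvPowerDetector_le {n D K Z l p : ℕ} [Fact p.Prime] (hl : l.Prime)
    (hlp : l ∣ p - 1) {H : MvPolynomial (Fin n) ℤ} (hD : H.totalDegree ≤ D)
    {T : Finset (Fin n → ℕ)} (hT : T ⊆ natBox n Z) :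
    ∑ t : ZMod p, ∑ x, (∑ z ∈ T, mvPowerDetector p l H (x + t • fun i => (z i : ZMod p))) ^ 2 ≤
      ((6 * l * (4 * l * (l * D + 2))) ^ 2 + K * l ^ 2) * (Z ^ (2 * n) * p ^ n) +
        l ^ 2 * (p ^ (n + 1) * Z ^ n * (1 + #(badDirections H K Z p))) := by
  classical
  set E : ℝ := ((6 * l * (4 * l * (l * D + 2))) ^ 2 + K * l ^ 2) * p ^ n with hE
  set bad := insert 0 (badDirections H K Z p) with hbad
  have hE0 : 0 ≤ E := by positivity
  have hterm {z z' : Fin n → ℕ} (hz : z ∈ T) (hz' : z' ∈ T) :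
      lineCorrelation (ZMod p) (mvPowerDetector p l H)
          ((fun i => (z' i : ZMod p)) - fun i => (z i : ZMod p)) ≤
        E + if (fun i => (z' i : ℤ) - z i) ∈ bad then (l : ℝ) ^ 2 * p ^ (n + 1) else 0 := by
    have hcast : ((fun i => (z' i : ZMod p)) - fun i => (z i : ZMod p)) =
        fun i => (((z' i : ℤ) - z i : ℤ) : ZMod p) := by
      ext i
      push_cast
      rfl
    rw [hcast]
    split_ifs with h
    · refine (lineCorrelation_le (fun x => abs_powerDetector_le hl.one_le _) _).trans ?_
      rw [Fintype.card_fun, Fintype.card_fin, ZMod.card, pow_succ' (p : ℝ)]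
      push_cast
      linarith
    · rw [hbad, Finset.mem_insert, not_or] at h
      rw [add_zero]
      refine lineCorrelation_mvPowerDetector_le hl hlp hD (mem_intBox.2 fun i => ?_) h.1 h.2
      have := mem_natBox.1 (hT hz) i
      have := mem_natBox.1 (hT hz') i
      rw [abs_le]
      lia
  have hT' : (#T : ℝ) ≤ Z ^ n := by
    exact_mod_cast (Finset.card_le_card hT).trans_eq (card_natBox n Z)
  have hbad' : (#bad : ℝ) ≤ 1 + #(badDirections H K Z p) := by
    rw [add_comm]
    exact_mod_cast Finset.card_insert_le _ _
  rw [sum_sq_sum_eq_sum_lineCorrelation]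
  calc _ ≤ ∑ z ∈ T, ∑ z' ∈ T,
        (E + if (fun i => (z' i : ℤ) - z i) ∈ bad then (l : ℝ) ^ 2 * p ^ (n + 1) else 0) :=
        Finset.sum_le_sum fun z hz => Finset.sum_le_sum fun z' hz' => hterm hz hz'
    _ ≤ #T * (#T * E) + #T * (#bad * ((l : ℝ) ^ 2 * p ^ (n + 1))) := by
        simp only [Finset.sum_add_distrib, Finset.sum_const, nsmul_eq_mul]
        gcongr
        exact sum_sum_ite_sub_mem_le T bad (by positivity)
    _ ≤ Z ^ n * (Z ^ n * E) +
          Z ^ n * ((1 + #(badDirections H K Z p)) * ((l : ℝ) ^ 2 * p ^ (n + 1))) := by gcongr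
    _ = _ := by ring

theorem card_filter_dvd_le_log {S : Finset ℕ} (hS : ∀ p ∈ S, p.Prime) {m : ℤ} (hm : m ≠ 0) :
    #(S.filter fun p : ℕ => (p : ℤ) ∣ m) ≤ Nat.log 2 m.natAbs := by
  set R := S.filter fun p : ℕ => (p : ℤ) ∣ m
  have hR : ∀ p ∈ R, p.Prime ∧ p ∣ m.natAbs := fun p hp =>
    ⟨hS p (Finset.mem_filter.1 hp).1, Int.natCast_dvd.1 (Finset.mem_filter.1 hp).2⟩
  have hdvd : ∏ p ∈ R, p ∣ m.natAbs :=
    Finset.prod_primes_dvd _ (fun p hp => (hR p hp).1.prime) fun p hp => (hR p hp).2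
  refine Nat.le_log_of_pow_le one_lt_two ((Finset.pow_card_le_prod _ _ _ fun p hp => ?_).trans
    (Nat.le_of_dvd (Int.natAbs_pos.2 hm) hdvd))
  exact (hR p hp).1.two_le

theorem exists_sum_card_badDirections_le (n D : ℕ) : ∃ c e : ℕ, ∀ {H : MvPolynomial (Fin n) ℤ},
    Irreducible (MvPolynomial.map (Int.castRingHom ℚ) H) → H.totalDegree ≤ D →
    (∀ w, w ≠ 0 → 1 ≤ (genericLine H w).natDegree) →
    ∀ {N Z : ℕ}, 1 ≤ N → (∀ m, |H.coeff m| ≤ N) → 1 ≤ Z →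
    ∀ {S : Finset ℕ}, (∀ p ∈ S, p.Prime) →
      ∑ p ∈ S, #(badDirections H ((2 * D + 1) * D) Z p) ≤
        (2 * Z + 1) ^ n * Nat.log 2 (c * (N * Z) ^ e) := by
  classical
  obtain ⟨c, e, hce⟩ := exists_ncard_not_isSquarefreeOnLine_le n D
  refine ⟨c, e, fun {H} hH hD hline N Z hN hcoeff hZ S hS => ?_⟩
  have hdirection (w : Fin n → ℤ) (hw : w ∈ intBox n Z) :
      #{p ∈ S | w ∈ badDirections H ((2 * D + 1) * D) Z p} ≤ Nat.log 2 (c * (N * Z) ^ e) := by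
    by_cases hw0 : w = 0
    · simp only [badDirections, Finset.mem_filter, hw0, ne_eq, not_true_eq_false, false_and,
        and_false, Finset.filter_false, Finset.card_empty, zero_le]
    obtain ⟨m, hm0, hm, hgood⟩ := hce hH hD hN hcoeff hZ (mem_intBox.1 hw) (hline w hw0)
    have hsub : {p ∈ S | w ∈ badDirections H ((2 * D + 1) * D) Z p} ⊆
        S.filter fun p : ℕ => (p : ℤ) ∣ m := fun p hp => by
      rw [Finset.mem_filter] at hp ⊢
      refine ⟨hp.1, by_contra fun hpm => ?_⟩
      have := Fact.mk (hS p hp.1)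
      exact (hgood p hpm).not_gt (Finset.mem_filter.1 hp.2).2.2
    refine (Finset.card_le_card hsub).trans ((card_filter_dvd_le_log hS hm0).trans ?_)
    refine Nat.log_mono_right ?_
    zify
    exact hm
  calc _ = ∑ p ∈ S, ∑ w ∈ intBox n Z,
          if w ∈ badDirections H ((2 * D + 1) * D) Z p then 1 else 0 := by
        refine Finset.sum_congr rfl fun p _ => ?_
        rw [Finset.sum_ite_mem, Finset.sum_const, smul_eq_mul, mul_one]
        exact congrArg _ (Finset.inter_eq_right.2 (Finset.filter_subset _ _)).symm
    _ = ∑ w ∈ intBox n Z, #{p ∈ S | w ∈ badDirections H ((2 * D + 1) * D) Z p} := by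
        simp_rw [Finset.sum_comm (s := S), Finset.card_filter]
    _ ≤ _ := by
        rw [← card_intBox, ← smul_eq_mul]
        exact Finset.sum_le_card_nsmul _ _ _ hdirection

/-! ### Averaging over shifts -/

/-- The differences occurring in Abel summation of `h` over `a < Z`, where `h` is cut off at `Z`. -/
def truncatedDiff (Z : ℕ) (h : ℕ → ℝ) (a : ℕ) : ℝ :=
  h a - if a + 1 < Z then h (a + 1) else 0

theorem sum_Ico_truncatedDiff (h : ℕ → ℝ) {z Z : ℕ} (hz : z < Z) :
    ∑ a ∈ Finset.Ico z Z, truncatedDiff Z h a = h z := by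
  obtain ⟨k, rfl⟩ := Nat.exists_eq_add_of_lt hz
  set f : ℕ → ℝ := fun i => if z + i < z + k + 1 then h (z + i) else 0 with hf
  have hterm : ∀ i ∈ Finset.range (k + 1), truncatedDiff (z + k + 1) h (z + i) = f i - f (i + 1) :=
    fun i hi => by
      have : z + i < z + k + 1 := by
        have := Finset.mem_range.1 hi
        lia
      simp only [truncatedDiff, hf, if_pos this, ← add_assoc]
  rw [Finset.sum_Ico_eq_sum_range, add_assoc, Nat.add_sub_cancel_left, ← add_assoc,
    Finset.sum_congr rfl hterm, Finset.sum_range_sub']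
  simp only [hf, add_zero, if_pos hz, ← add_assoc, lt_irrefl, if_false, sub_zero]

/-- The bound for `truncatedDiff Z h a` when `h` is bounded by `1` and has increments at most
`1 / Z`. -/
def abelWeight (Z a : ℕ) : ℝ :=
  if a + 1 < Z then 1 / Z else 1

theorem abelWeight_nonneg (Z a : ℕ) : 0 ≤ abelWeight Z a := by
  unfold abelWeight
  split_ifs <;> positivity

theorem abs_truncatedDiff_le {Z : ℕ} {h : ℕ → ℝ} (hone : ∀ a, |h a| ≤ 1)
    (hstep : ∀ a, |h a - h (a + 1)| ≤ 1 / Z) (a : ℕ) : |truncatedDiff Z h a| ≤ abelWeight Z a := by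
  unfold truncatedDiff abelWeight
  split_ifs
  · exact hstep a
  · rw [sub_zero]
    exact hone a

theorem sum_abelWeight_le (Z : ℕ) : ∑ a ∈ Finset.range Z, abelWeight Z a ≤ 2 := by
  rcases Z with _ | m
  · simp only [Finset.range_zero, Finset.sum_empty, zero_le_two]
  have hlt : ∀ a ∈ Finset.range m, abelWeight (m + 1) a = 1 / ((m + 1 : ℕ) : ℝ) := fun a ha =>
    if_pos (Nat.add_lt_add_right (Finset.mem_range.1 ha) 1)
  rw [Finset.sum_range_succ, Finset.sum_congr rfl hlt, Finset.sum_const, Finset.card_range,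
    nsmul_eq_mul, abelWeight, if_neg (lt_irrefl _), mul_one_div]
  have : (m : ℝ) / ((m + 1 : ℕ) : ℝ) ≤ 1 := by
    rw [div_le_one (by positivity)]
    push_cast
    linarith
  linarith

theorem sum_natBox_prod_abelWeight_le (n Z : ℕ) :
    ∑ α ∈ natBox n Z, ∏ i, abelWeight Z (α i) ≤ 2 ^ n := by
  rw [natBox, ← Finset.prod_univ_sum, Finset.prod_const, Finset.card_univ, Fintype.card_fin]
  exact pow_le_pow_left₀ (Finset.sum_nonneg fun _ _ => abelWeight_nonneg _ _)
    (sum_abelWeight_le Z) n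

theorem sum_natBox_prod_mul {n Z : ℕ} (h : Fin n → ℕ → ℝ) (A : (Fin n → ℕ) → ℝ) :
    ∑ z ∈ natBox n Z, (∏ i, h i (z i)) * A z =
      ∑ α ∈ natBox n Z, (∏ i, truncatedDiff Z (h i) (α i)) * ∑ z ∈ Finset.Iic α, A z := by
  have hprod : ∀ z ∈ natBox n Z, ∏ i, h i (z i) =
      ∑ α ∈ Fintype.piFinset fun i => Finset.Ico (z i) Z, ∏ i, truncatedDiff Z (h i) (α i) :=
    fun z hz => by
      rw [← Finset.prod_univ_sum]
      exact Finset.prod_congr rfl fun i _ => (sum_Ico_truncatedDiff _ (mem_natBox.1 hz i)).symm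
  rw [Finset.sum_congr rfl fun z hz => by rw [hprod z hz, Finset.sum_mul]]
  simp_rw [Finset.mul_sum]
  refine Finset.sum_comm' fun z α => ?_
  simp only [mem_natBox, Fintype.mem_piFinset, Finset.mem_Ico, Finset.mem_Iic, Pi.le_def]
  exact ⟨fun h => ⟨fun i => (h.2 i).1, fun i => (h.2 i).2⟩,
    fun h => ⟨fun i => (h.1 i).trans_lt (h.2 i), fun i => ⟨h.1 i, h.2 i⟩⟩⟩

theorem sq_sum_natBox_prod_mul_le {n Z : ℕ} {h : Fin n → ℕ → ℝ} (hone : ∀ i a, |h i a| ≤ 1)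
    (hstep : ∀ i a, |h i a - h i (a + 1)| ≤ 1 / Z) (A : (Fin n → ℕ) → ℝ) :
    (∑ z ∈ natBox n Z, (∏ i, h i (z i)) * A z) ^ 2 ≤
      2 ^ n * ∑ α ∈ natBox n Z, (∏ i, abelWeight Z (α i)) * (∑ z ∈ Finset.Iic α, A z) ^ 2 := by
  have hweight (α : Fin n → ℕ) : 0 ≤ ∏ i, abelWeight Z (α i) :=
    Finset.prod_nonneg fun i _ => abelWeight_nonneg _ _
  rw [sum_natBox_prod_mul]
  refine (Finset.sum_sq_le_sum_mul_sum_of_sq_le_mul _ (fun α _ => hweight α)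
    (fun α _ => mul_nonneg (hweight α) (sq_nonneg _)) fun α _ => ?_).trans
    (mul_le_mul_of_nonneg_right (sum_natBox_prod_abelWeight_le n Z)
      (Finset.sum_nonneg fun α _ => mul_nonneg (hweight α) (sq_nonneg _)))
  rw [mul_pow, ← mul_assoc, ← sq]
  refine mul_le_mul_of_nonneg_right ?_ (sq_nonneg _)
  rw [sq_le_sq, Finset.abs_prod, abs_of_nonneg (hweight α)]
  exact Finset.prod_le_prod (fun i _ => abs_nonneg _) fun i _ =>
    abs_truncatedDiff_le (hone i) (hstep i) _

/-- The piecewise linear function equal to `1` on `[-1, 1]` and to `0` outside `[-2, 2]`. -/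
def trapezoid (x : ℝ) : ℝ :=
  max 0 (min 1 (2 - |x|))

theorem trapezoid_nonneg (x : ℝ) : 0 ≤ trapezoid x :=
  le_max_left _ _

theorem trapezoid_le_one (x : ℝ) : trapezoid x ≤ 1 :=
  max_le zero_le_one (min_le_left _ _)

theorem trapezoid_eq_one {x : ℝ} (hx : |x| ≤ 1) : trapezoid x = 1 := by
  rw [trapezoid, min_eq_left (by linarith), max_eq_right zero_le_one]

theorem trapezoid_eq_zero {x : ℝ} (hx : 2 ≤ |x|) : trapezoid x = 0 :=
  max_eq_left ((min_le_right _ _).trans (by linarith))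

theorem abs_trapezoid_sub_le (x y : ℝ) : |trapezoid x - trapezoid y| ≤ |x - y| := by
  refine (abs_max_sub_max_le_max _ _ _ _).trans (max_le (by simp) ?_)
  refine (abs_min_sub_min_le_max _ _ _ _).trans (max_le (by simp) ?_)
  rw [sub_sub_sub_cancel_left, abs_sub_comm]
  exact abs_abs_sub_abs_le _ _

/-- A Lipschitz weight on integer vectors, equal to `1` in sup norm at most `R` and to `0` in sup
norm at least `2 * R`. -/
def boxCutoff {n : ℕ} (R : ℝ) (x : Fin n → ℤ) : ℝ :=
  ∏ i, trapezoid (x i / R)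

theorem boxCutoff_nonneg {n : ℕ} (R : ℝ) (x : Fin n → ℤ) : 0 ≤ boxCutoff R x :=
  Finset.prod_nonneg fun _ _ => trapezoid_nonneg _

theorem boxCutoff_eq_one {n R : ℕ} {x : Fin n → ℤ} (hx : x ∈ intBox n R) :
    boxCutoff R x = 1 := by
  refine Finset.prod_eq_one fun i _ => trapezoid_eq_one ?_
  rw [abs_div, Nat.abs_cast]
  exact div_le_one_of_le₀ (by exact_mod_cast mem_intBox.1 hx i) (Nat.cast_nonneg _)

theorem boxCutoff_eq_zero {n R : ℕ} (hR : 0 < R) {x : Fin n → ℤ} (hx : x ∉ intBox n (2 * R)) :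
    boxCutoff R x = 0 := by
  simp only [mem_intBox, not_forall, not_le] at hx
  obtain ⟨i, hi⟩ := hx
  refine Finset.prod_eq_zero (Finset.mem_univ i) (trapezoid_eq_zero ?_)
  rw [abs_div, Nat.abs_cast, le_div_iff₀ (by exact_mod_cast hR)]
  exact_mod_cast hi.le

theorem add_mem_intBox {n R S : ℕ} {x y : Fin n → ℤ} (hx : x ∈ intBox n R) (hy : y ∈ intBox n S) :
    x + y ∈ intBox n (R + S) := by
  rw [mem_intBox] at hx hy ⊢
  intro i
  push_cast
  exact (abs_add_le _ _).trans (add_le_add (hx i) (hy i))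

theorem neg_mem_intBox {n R : ℕ} {x : Fin n → ℤ} (hx : x ∈ intBox n R) : -x ∈ intBox n R := by
  simpa only [mem_intBox, Pi.neg_apply, abs_neg] using hx

theorem intBox_mono {n R S : ℕ} (h : R ≤ S) : intBox n R ⊆ intBox n S := fun x hx =>
  mem_intBox.2 fun i => (mem_intBox.1 hx i).trans (by exact_mod_cast h)

theorem sum_intBox_add {n R S : ℕ} {f : (Fin n → ℤ) → ℝ} (hf : ∀ x, x ∉ intBox n R → f x = 0)
    {v : Fin n → ℤ} (hv : v ∈ intBox n S) :
    ∑ x ∈ intBox n (R + S), f (x + v) = ∑ x ∈ intBox n (R + S), f x := by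
  have hsupp {x : Fin n → ℤ} (hx : f x ≠ 0) : x ∈ intBox n R := not_imp_comm.1 (hf x) hx
  rw [← finsum_eq_sum_of_support_subset f fun x hx => intBox_mono (Nat.le_add_right R S) (hsupp hx),
    ← finsum_eq_sum_of_support_subset fun x => f (x + v)]
  · exact finsum_comp_equiv (Equiv.addRight v)
  · intro x hx
    have := add_mem_intBox (hsupp hx) (neg_mem_intBox hv)
    rwa [add_neg_cancel_right] at this

/-- The integer vector with coordinates `q * z i`. -/
def dilate {n : ℕ} (q : ℕ) (z : Fin n → ℕ) : Fin n → ℤ :=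
  fun i => q * z i

theorem dilate_mem_intBox {n q X Z : ℕ} (hq : q * Z ≤ X) {z : Fin n → ℕ} (hz : z ∈ natBox n Z) :
    dilate q z ∈ intBox n X := by
  refine mem_intBox.2 fun i => ?_
  rw [dilate, abs_of_nonneg (by positivity)]
  exact_mod_cast (Nat.mul_le_mul_left q (mem_natBox.1 hz i).le).trans hq

/-- The second moment over `intBox n M` of the sums of `g` over the translates of the box
`{dilate q z | z ≤ α}`. -/
def dilatedSecondMoment {n : ℕ} (M : ℕ) (g : (Fin n → ℤ) → ℝ) (q : ℕ) (α : Fin n → ℕ) : ℝ :=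
  ∑ x ∈ intBox n M, (∑ z ∈ Finset.Iic α, g (x + dilate q z)) ^ 2

theorem sum_sq_sum_boxCutoff_mul_le {n q X Z : ℕ} (hX : 0 < X) (hZ : 0 < Z) (hq : q * Z ≤ X)
    (g : (Fin n → ℤ) → ℝ) {y : Fin n → ℤ} (hy : y ∈ intBox n (5 * X)) :
    ∑ u ∈ intBox n (5 * X),
        (∑ z ∈ natBox n Z, boxCutoff (2 * X : ℕ) (y + dilate q z) * g (y + u + dilate q z)) ^ 2 ≤
      2 ^ n * ∑ α ∈ natBox n Z,
        (∏ i, abelWeight Z (α i)) * dilatedSecondMoment (10 * X) g q α := by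
  have hR : (0 : ℝ) < (2 * X : ℕ) := by positivity
  have hone (i : Fin n) (a : ℕ) : |trapezoid ((y i + q * a : ℤ) / (2 * X : ℕ))| ≤ 1 := by
    rw [abs_of_nonneg (trapezoid_nonneg _)]
    exact trapezoid_le_one _
  have hstep (i : Fin n) (a : ℕ) : |trapezoid ((y i + q * a : ℤ) / (2 * X : ℕ)) -
      trapezoid ((y i + q * (a + 1 : ℕ) : ℤ) / (2 * X : ℕ))| ≤ 1 / Z := by
    refine (abs_trapezoid_sub_le _ _).trans ?_
    rw [← sub_div, abs_div, abs_of_pos hR, div_le_div_iff₀ hR (by positivity)]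
    push_cast
    rw [show (y i + q * a - (y i + q * (a + 1)) : ℝ) = -q by ring, abs_neg, Nat.abs_cast, one_mul]
    exact_mod_cast hq.trans (Nat.le_mul_of_pos_left X two_pos)
  refine (Finset.sum_le_sum fun u _ => sq_sum_natBox_prod_mul_le hone hstep
    fun z => g (y + u + dilate q z)).trans ?_
  rw [← Finset.mul_sum, Finset.sum_comm]
  simp_rw [← Finset.mul_sum]
  gcongr with α
  · exact Finset.prod_nonneg fun i _ => abelWeight_nonneg _ _
  · rw [← Finset.sum_image (f := fun x => (∑ z ∈ Finset.Iic α, g (x + dilate q z)) ^ 2)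
      (g := fun u => y + u) fun _ _ _ _ h => add_left_cancel h]
    refine Finset.sum_le_sum_of_subset_of_nonneg (Finset.image_subset_iff.2 fun u hu => ?_)
      fun _ _ _ => sq_nonneg _
    exact intBox_mono (by lia) (add_mem_intBox hy hu)

theorem sum_boxCutoff_mul_eq_of_periodic {n p q X Z : ℕ} (hX : 0 < X) (hp : p * Z ≤ X)
    (hq : q * Z ≤ X) {g g' : (Fin n → ℤ) → ℝ} (hg : ∀ x z, g (x + dilate p z) = g x)
    (hg' : ∀ x z, g' (x + dilate q z) = g' x) :
    (Z : ℝ) ^ (2 * n) * ∑ y ∈ intBox n (5 * X), ∑ u ∈ intBox n (5 * X),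
        boxCutoff (2 * X : ℕ) y * boxCutoff (2 * X : ℕ) u * (g (y + u) * g' (y + u)) =
      ∑ y ∈ intBox n (5 * X), ∑ u ∈ intBox n (5 * X),
        (∑ z ∈ natBox n Z, boxCutoff (2 * X : ℕ) (y + dilate q z) * g (y + u + dilate q z)) *
        ∑ z ∈ natBox n Z, boxCutoff (2 * X : ℕ) (u + dilate p z) * g' (u + y + dilate p z) := by
  set w : (Fin n → ℤ) → ℝ := boxCutoff (2 * X : ℕ)
  have hw (x : Fin n → ℤ) (hx : x ∉ intBox n (4 * X)) : w x = 0 :=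
    boxCutoff_eq_zero (by lia) (by rwa [← mul_assoc])
  have hshift {z z' : Fin n → ℕ} (hz : z ∈ natBox n Z) (hz' : z' ∈ natBox n Z) :
      ∑ y ∈ intBox n (5 * X), ∑ u ∈ intBox n (5 * X), w y * w u * (g (y + u) * g' (y + u)) =
        ∑ y ∈ intBox n (5 * X), ∑ u ∈ intBox n (5 * X),
          w (y + dilate q z) * g (y + u + dilate q z) *
            (w (u + dilate p z') * g' (u + y + dilate p z')) := by
    rw [show 5 * X = 4 * X + X by ring, ← sum_intBox_add (R := 4 * X) (S := X)
      (fun x hx => by simp only [hw x hx, zero_mul, Finset.sum_const_zero])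
      (dilate_mem_intBox hq hz)]
    refine Finset.sum_congr rfl fun y _ => ?_
    rw [← sum_intBox_add (R := 4 * X) (S := X)
      (fun x hx => by simp only [hw x hx, mul_zero, zero_mul]) (dilate_mem_intBox hp hz')]
    refine Finset.sum_congr rfl fun u _ => ?_
    rw [show y + dilate q z + (u + dilate p z') = y + u + dilate q z + dilate p z' by abel, hg,
      show y + u + dilate q z + dilate p z' = u + y + dilate p z' + dilate q z by abel, hg']
    ring
  calc _ = ∑ z ∈ natBox n Z, ∑ z' ∈ natBox n Z, ∑ y ∈ intBox n (5 * X), ∑ u ∈ intBox n (5 * X),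
        w (y + dilate q z) * g (y + u + dilate q z) *
          (w (u + dilate p z') * g' (u + y + dilate p z')) := by
        rw [← Finset.sum_congr rfl fun z hz => Finset.sum_congr rfl fun z' hz' => hshift hz hz']
        simp only [Finset.sum_const, nsmul_eq_mul, card_natBox]
        push_cast
        ring
    _ = _ := by
        simp_rw [Finset.sum_mul_sum]
        exact Finset.sum_comm_cycle.trans (Finset.sum_congr rfl fun _ _ => Finset.sum_comm_cycle)

theorem sum_boxCutoff_mul_le_of_periodic {n p q X Z : ℕ} (hX : 0 < X) (hZ : 0 < Z)
    (hp : p * Z ≤ X) (hq : q * Z ≤ X) {g g' : (Fin n → ℤ) → ℝ}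
    (hg : ∀ x z, g (x + dilate p z) = g x) (hg' : ∀ x z, g' (x + dilate q z) = g' x) :
    (Z : ℝ) ^ (2 * n) * ∑ y ∈ intBox n (5 * X), ∑ u ∈ intBox n (5 * X),
        boxCutoff (2 * X : ℕ) y * boxCutoff (2 * X : ℕ) u * (g (y + u) * g' (y + u)) ≤
      (2 * (10 * X + 1)) ^ n * ∑ α ∈ natBox n Z, (∏ i, abelWeight Z (α i)) *
        ((dilatedSecondMoment (10 * X) g q α + dilatedSecondMoment (10 * X) g' p α) / 2) := by
  set μ : (Fin n → ℕ) → ℝ := fun α => ∏ i, abelWeight Z (α i)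
  set w : (Fin n → ℤ) → ℝ := boxCutoff (2 * X : ℕ)
  set a : (Fin n → ℤ) → (Fin n → ℤ) → ℝ := fun y u =>
    ∑ z ∈ natBox n Z, w (y + dilate q z) * g (y + u + dilate q z)
  set b : (Fin n → ℤ) → (Fin n → ℤ) → ℝ := fun u y =>
    ∑ z ∈ natBox n Z, w (u + dilate p z) * g' (u + y + dilate p z)
  set Va := ∑ α ∈ natBox n Z, μ α * dilatedSecondMoment (10 * X) g q α
  set Vb := ∑ α ∈ natBox n Z, μ α * dilatedSecondMoment (10 * X) g' p α
  have ha : ∑ y ∈ intBox n (5 * X), ∑ u ∈ intBox n (5 * X), a y u ^ 2 ≤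
      (10 * X + 1) ^ n * (2 ^ n * Va) := by
    refine (Finset.sum_le_card_nsmul _ _ _ fun y hy =>
      sum_sq_sum_boxCutoff_mul_le hX hZ hq g hy).trans_eq ?_
    rw [card_intBox, nsmul_eq_mul, ← mul_assoc 2]
    push_cast
    rfl
  have hb : ∑ y ∈ intBox n (5 * X), ∑ u ∈ intBox n (5 * X), b u y ^ 2 ≤
      (10 * X + 1) ^ n * (2 ^ n * Vb) := by
    rw [Finset.sum_comm]
    refine (Finset.sum_le_card_nsmul _ _ _ fun u hu =>
      sum_sq_sum_boxCutoff_mul_le hX hZ hp g' hu).trans_eq ?_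
    rw [card_intBox, nsmul_eq_mul, ← mul_assoc 2]
    push_cast
    rfl
  rw [sum_boxCutoff_mul_eq_of_periodic hX hp hq hg hg']
  calc _ ≤ ∑ y ∈ intBox n (5 * X), ∑ u ∈ intBox n (5 * X), (a y u ^ 2 + b u y ^ 2) / 2 :=
        Finset.sum_le_sum fun y _ => Finset.sum_le_sum fun u _ => by
          linarith [two_mul_le_add_sq (a y u) (b u y)]
    _ ≤ ((10 * X + 1) ^ n * (2 ^ n * Va) + (10 * X + 1) ^ n * (2 ^ n * Vb)) / 2 := by
        simp_rw [← Finset.sum_div, Finset.sum_add_distrib]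
        linarith
    _ = (2 * (10 * X + 1)) ^ n * ((Va + Vb) / 2) := by
        rw [mul_pow]
        ring
    _ = _ := by
        rw [← Finset.sum_add_distrib, Finset.sum_div]
        simp_rw [← mul_add, mul_div_assoc]
        rfl

theorem sum_intBox_le_sum_boxCutoff_mul {n X : ℕ} {f : (Fin n → ℤ) → ℝ} (hf : ∀ x, 0 ≤ f x) :
    (2 * X + 1) ^ n * ∑ x ∈ intBox n X, f x ≤
      ∑ y ∈ intBox n (5 * X), ∑ u ∈ intBox n (5 * X),
        boxCutoff (2 * X : ℕ) y * boxCutoff (2 * X : ℕ) u * f (y + u) := by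
  set w : (Fin n → ℤ) → ℝ := boxCutoff (2 * X : ℕ)
  have hw (x : Fin n → ℤ) : 0 ≤ w x := boxCutoff_nonneg _ _
  have hone {x : Fin n → ℤ} (hx : x ∈ intBox n (X + X)) : w x = 1 :=
    boxCutoff_eq_one (by rwa [two_mul])
  have hnonneg (y u : Fin n → ℤ) : 0 ≤ w y * w u * f (y + u) :=
    mul_nonneg (mul_nonneg (hw y) (hw u)) (hf _)
  have hinner {u : Fin n → ℤ} (hu : u ∈ intBox n X) :
      ∑ x ∈ intBox n X, f x ≤ ∑ y ∈ intBox n (5 * X), w y * w u * f (y + u) := by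
    have hsub {x : Fin n → ℤ} (hx : x ∈ intBox n X) : x - u ∈ intBox n (X + X) := by
      rw [sub_eq_add_neg]
      exact add_mem_intBox hx (neg_mem_intBox hu)
    calc _ = ∑ x ∈ intBox n X, w (x - u) * w u * f (x - u + u) :=
          Finset.sum_congr rfl fun x hx => by
            rw [hone (hsub hx), hone (intBox_mono (by lia) hu), sub_add_cancel, one_mul, one_mul]
      _ = ∑ y ∈ (intBox n X).image (· - u), w y * w u * f (y + u) :=
          (Finset.sum_image (f := fun y => w y * w u * f (y + u)) fun _ _ _ _ h =>
            sub_left_injective h).symm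
      _ ≤ _ := Finset.sum_le_sum_of_subset_of_nonneg
          (Finset.image_subset_iff.2 fun x hx => intBox_mono (by lia) (hsub hx))
          fun y _ _ => hnonneg y u
  calc _ = ∑ _u ∈ intBox n X, ∑ x ∈ intBox n X, f x := by
        rw [Finset.sum_const, card_intBox, nsmul_eq_mul]
        push_cast
        rfl
    _ ≤ ∑ u ∈ intBox n X, ∑ y ∈ intBox n (5 * X), w y * w u * f (y + u) :=
        Finset.sum_le_sum fun u hu => hinner hu
    _ ≤ ∑ u ∈ intBox n (5 * X), ∑ y ∈ intBox n (5 * X), w y * w u * f (y + u) :=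
        Finset.sum_le_sum_of_subset_of_nonneg (intBox_mono (by lia))
          fun u _ _ => Finset.sum_nonneg fun y _ => hnonneg y u
    _ = _ := Finset.sum_comm

theorem sum_intBox_sq_sum_le_of_periodic {n X Z : ℕ} (hX : 0 < X) (hZ : 0 < Z) {S : Finset ℕ}
    (hS : ∀ p ∈ S, p * Z ≤ X) {g : ℕ → (Fin n → ℤ) → ℝ}
    (hg : ∀ p x z, g p (x + dilate p z) = g p x) {U : ℝ}
    (hU : ∀ α ∈ natBox n Z, ∑ p ∈ S, ∑ q ∈ S, dilatedSecondMoment (10 * X) (g p) q α ≤ U) :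
    (Z : ℝ) ^ (2 * n) * ∑ x ∈ intBox n X, (∑ p ∈ S, g p x) ^ 2 ≤ 20 ^ n * U := by
  set μ : (Fin n → ℕ) → ℝ := fun α => ∏ i, abelWeight Z (α i)
  have hμ (α : Fin n → ℕ) : 0 ≤ μ α := Finset.prod_nonneg fun i _ => abelWeight_nonneg _ _
  set V : ℕ → ℕ → (Fin n → ℕ) → ℝ := fun p q => dilatedSecondMoment (10 * X) (g p) q
  have hU0 : 0 ≤ U := (Finset.sum_nonneg fun p _ => Finset.sum_nonneg fun q _ =>
    Finset.sum_nonneg fun x _ => sq_nonneg _).trans (hU 0 (mem_natBox.2 fun _ => hZ))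
  have hsym (α : Fin n → ℕ) :
      ∑ p ∈ S, ∑ q ∈ S, (V p q α + V q p α) / 2 = ∑ p ∈ S, ∑ q ∈ S, V p q α := by
    simp_rw [← Finset.sum_div, Finset.sum_add_distrib]
    rw [Finset.sum_comm (f := fun p q => V q p α), add_self_div_two]
  have hmain : (Z : ℝ) ^ (2 * n) * ((2 * X + 1) ^ n * ∑ x ∈ intBox n X, (∑ p ∈ S, g p x) ^ 2) ≤
      (2 * X + 1) ^ n * (20 ^ n * U) := by
    calc _ ≤ (Z : ℝ) ^ (2 * n) * ∑ y ∈ intBox n (5 * X), ∑ u ∈ intBox n (5 * X),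
            boxCutoff (2 * X : ℕ) y * boxCutoff (2 * X : ℕ) u * (∑ p ∈ S, g p (y + u)) ^ 2 := by
          gcongr
          exact sum_intBox_le_sum_boxCutoff_mul fun x => sq_nonneg (∑ p ∈ S, g p x)
      _ = ∑ p ∈ S, ∑ q ∈ S, (Z : ℝ) ^ (2 * n) *
            ∑ y ∈ intBox n (5 * X), ∑ u ∈ intBox n (5 * X),
              boxCutoff (2 * X : ℕ) y * boxCutoff (2 * X : ℕ) u *
                (g p (y + u) * g q (y + u)) := by
          simp_rw [sq, Finset.sum_mul_sum, Finset.mul_sum]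
          exact Finset.sum_comm_cycle.trans (Finset.sum_congr rfl fun _ _ => Finset.sum_comm_cycle)
      _ ≤ ∑ p ∈ S, ∑ q ∈ S, (2 * (10 * X + 1) : ℝ) ^ n *
            ∑ α ∈ natBox n Z, μ α * ((V p q α + V q p α) / 2) :=
          Finset.sum_le_sum fun p hp => Finset.sum_le_sum fun q hq =>
            sum_boxCutoff_mul_le_of_periodic hX hZ (hS p hp) (hS q hq) (hg p) (hg q)
      _ = (2 * (10 * X + 1) : ℝ) ^ n * ∑ α ∈ natBox n Z, μ α * ∑ p ∈ S, ∑ q ∈ S, V p q α := by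
          simp_rw [← hsym, Finset.mul_sum]
          exact Finset.sum_comm_cycle
      _ ≤ (2 * (10 * X + 1) : ℝ) ^ n * ∑ α ∈ natBox n Z, μ α * U := by
          gcongr with α hα
          exacts [hμ α, hU α hα]
      _ ≤ (10 * (2 * X + 1) : ℝ) ^ n * (2 ^ n * U) := by
          rw [← Finset.sum_mul]
          refine mul_le_mul (pow_le_pow_left₀ (by positivity) (by linarith) n)
            (mul_le_mul_of_nonneg_right (sum_natBox_prod_abelWeight_le n Z) hU0)
            (mul_nonneg (Finset.sum_nonneg fun α _ => hμ α) hU0) (by positivity)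
      _ = _ := by
          rw [mul_pow, show (20 : ℝ) = 10 * 2 by norm_num, mul_pow]
          ring
  rw [mul_left_comm] at hmain
  exact le_of_mul_le_mul_left hmain (by positivity)

/-! ### The power sieve -/

theorem sum_comp_le_mul_sum {ι κ : Type*} [Fintype κ] [DecidableEq κ] {s : Finset ι} {f : ι → κ}
    {K : ℝ} (hK : ∀ y, #{x ∈ s | f x = y} ≤ K) {g : κ → ℝ} (hg : ∀ y, 0 ≤ g y) :
    ∑ x ∈ s, g (f x) ≤ K * ∑ y, g y := by
  rw [← Finset.sum_fiberwise s f, Finset.mul_sum]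
  refine Finset.sum_le_sum fun y _ => ?_
  rw [Finset.sum_congr rfl fun x hx => congrArg g (Finset.mem_filter.1 hx).2, Finset.sum_const,
    nsmul_eq_mul]
  exact mul_le_mul_of_nonneg_right (hK y) (hg y)

theorem card_Ioc_filter_intCast_eq_le {p : ℕ} [NeZero p] {a b : ℤ} (hab : a ≤ b) (r : ZMod p) :
    #((Finset.Ioc a b).filter fun k : ℤ => (k : ZMod p) = r) ≤ (b - a : ℝ) / p + 1 := by
  obtain ⟨v, rfl⟩ := ZMod.intCast_surjective r
  have hp : (0 : ℚ) < p := by exact_mod_cast Nat.pos_of_neZero p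
  have hab' : (a : ℚ) ≤ b := by exact_mod_cast hab
  have hcard : (#((Finset.Ioc a b).filter fun k : ℤ => (k : ZMod p) = v) : ℚ) ≤
      (b - a) / p + 1 := by
    simp_rw [ZMod.intCast_eq_intCast_iff]
    rw [← Int.cast_natCast,
      Int.Ioc_filter_modEq_card a b (by exact_mod_cast Nat.pos_of_neZero p) v]
    push_cast
    refine max_le ?_ (by have := sub_nonneg.2 hab'; positivity)
    have := Int.floor_le ((b - v) / p : ℚ)
    have := Int.lt_floor_add_one ((a - v) / p : ℚ)
    have : (b - v) / p - (a - v) / p = (b - a : ℚ) / p := by ring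
    linarith
  exact_mod_cast (Rat.cast_le (K := ℝ)).2 hcard

theorem sum_intBox_comp_intCast_le {n p : ℕ} [NeZero p] (M : ℕ) {g : (Fin n → ZMod p) → ℝ}
    (hg : ∀ ξ, 0 ≤ g ξ) :
    ∑ x ∈ intBox n M, g (fun i => (x i : ZMod p)) ≤
      ((2 * M + 1 : ℝ) / p + 1) ^ n * ∑ ξ, g ξ := by
  refine sum_comp_le_mul_sum (f := fun (x : Fin n → ℤ) i => (x i : ZMod p)) (fun ξ => ?_) hg
  have hfiber : {x ∈ intBox n M | (fun i => (x i : ZMod p)) = ξ} = Fintype.piFinset fun i =>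
      (Finset.Ioc (-(M : ℤ) - 1) M).filter fun k : ℤ => (k : ZMod p) = ξ i := by
    ext x
    simp only [intBox, Finset.mem_filter, Fintype.mem_piFinset, funext_iff, ← forall_and,
      Finset.mem_Icc, Finset.mem_Ioc, Int.sub_one_lt_iff]
  rw [hfiber, Fintype.card_piFinset]
  push_cast
  refine (Finset.prod_le_prod (fun i _ => by positivity) fun i _ =>
    card_Ioc_filter_intCast_eq_le (by lia) (ξ i)).trans_eq ?_
  rw [Finset.prod_const, Finset.card_univ, Fintype.card_fin]
  push_cast
  ring

theorem sum_comp_natCast_le {p P : ℕ} [NeZero p] {S : Finset ℕ} (hS : ∀ q ∈ S, q ≤ P)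
    {g : ZMod p → ℝ} (hg : ∀ t, 0 ≤ g t) :
    ∑ q ∈ S, g q ≤ ((P + 1 : ℝ) / p + 1) * ∑ t, g t := by
  refine sum_comp_le_mul_sum (f := fun q : ℕ => (q : ZMod p)) (fun t => ?_) hg
  have hcard : #(S.filter fun q : ℕ => (q : ZMod p) = t) ≤
      #((Finset.Ioc (-1 : ℤ) P).filter fun k : ℤ => (k : ZMod p) = t) := by
    refine Finset.card_le_card_of_injOn (fun q : ℕ => (q : ℤ)) (fun q hq => ?_)
      Nat.cast_injective.injOn
    obtain ⟨hqS, hqt⟩ := Finset.mem_filter.1 hq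
    have := hS q hqS
    simp only [Finset.coe_filter, Set.mem_ofPred_eq, Finset.mem_Ioc, Int.cast_natCast, hqt]
    lia
  refine (Nat.cast_le.2 hcard).trans
    ((card_Ioc_filter_intCast_eq_le (by lia) t).trans_eq ?_)
  push_cast
  ring

theorem powerDetector_intCast_eval {n : ℕ} (p l : ℕ) (H : MvPolynomial (Fin n) ℤ)
    (x : Fin n → ℤ) :
    powerDetector p l (MvPolynomial.eval x H : ℤ) =
      mvPowerDetector p l H fun i => (x i : ZMod p) := by
  rw [mvPowerDetector, ← MvPolynomial.aeval_eq_eval]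
  exact congrArg _ (MvPolynomial.aeval_algebraMap_apply (ZMod p) x H).symm

theorem sum_dilatedSecondMoment_le {n D K Z l p P X : ℕ} [Fact p.Prime] (hl : l.Prime)
    (hlp : l ∣ p - 1) {H : MvPolynomial (Fin n) ℤ} (hD : H.totalDegree ≤ D) {α : Fin n → ℕ}
    (hα : α ∈ natBox n Z) (hpX : p ≤ X) (hpP : p ≤ P) {S : Finset ℕ} (hS : ∀ q ∈ S, q ≤ P) :
    ∑ q ∈ S, dilatedSecondMoment (10 * X)
        (fun x => powerDetector p l (MvPolynomial.eval x H : ℤ)) q α ≤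
      (22 * X) ^ n * (3 * P) *
        (((6 * l * (4 * l * (l * D + 2))) ^ 2 + K * l ^ 2) * (Z ^ (2 * n) / p) +
          l ^ 2 * (Z ^ n * (1 + #(badDirections H K Z p)))) := by
  have hp0 : (0 : ℝ) < p := by exact_mod_cast (Fact.out : p.Prime).pos
  have hp1 : (1 : ℝ) ≤ p := by exact_mod_cast (Fact.out : p.Prime).one_le
  have hpX' : (p : ℝ) ≤ X := by exact_mod_cast hpX
  have hpP' : (p : ℝ) ≤ P := by exact_mod_cast hpP
  set m : ZMod p → ℝ := fun t =>
    ∑ ξ, (∑ z ∈ Finset.Iic α, mvPowerDetector p l H (ξ + t • fun i => (z i : ZMod p))) ^ 2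
  have hm (t : ZMod p) : 0 ≤ m t := Finset.sum_nonneg fun _ _ => sq_nonneg _
  have hbox (q : ℕ) : dilatedSecondMoment (10 * X)
      (fun x => powerDetector p l (MvPolynomial.eval x H : ℤ)) q α ≤ (22 * X / p) ^ n * m q := by
    have hcast (x : Fin n → ℤ) (z : Fin n → ℕ) : (fun i => ((x + dilate q z) i : ZMod p)) =
        (fun i => (x i : ZMod p)) + (q : ZMod p) • fun i => (z i : ZMod p) := by
      ext i
      simp [dilate]
    simp_rw [dilatedSecondMoment, powerDetector_intCast_eval, hcast]
    refine (sum_intBox_comp_intCast_le (10 * X) (g := fun ξ => (∑ z ∈ Finset.Iic α,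
      mvPowerDetector p l H (ξ + (q : ZMod p) • fun i => (z i : ZMod p))) ^ 2)
      fun ξ => sq_nonneg _).trans (mul_le_mul_of_nonneg_right ?_ (hm q))
    rw [div_add_one hp0.ne']
    push_cast
    gcongr
    linarith
  have hIic : Finset.Iic α ⊆ natBox n Z := fun z hz => mem_natBox.2 fun i =>
    (Finset.mem_Iic.1 hz i).trans_lt (mem_natBox.1 hα i)
  calc _ ≤ ∑ q ∈ S, (22 * X / p : ℝ) ^ n * m q := Finset.sum_le_sum fun q _ => hbox q
    _ ≤ (22 * X / p : ℝ) ^ n * (((P + 1) / p + 1) * ∑ t, m t) := by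
        rw [← Finset.mul_sum]
        gcongr
        exact sum_comp_natCast_le hS hm
    _ ≤ (22 * X / p : ℝ) ^ n * ((3 * P / p) *
          (((6 * l * (4 * l * (l * D + 2))) ^ 2 + K * l ^ 2) * (Z ^ (2 * n) * p ^ n) +
            l ^ 2 * (p ^ (n + 1) * Z ^ n * (1 + #(badDirections H K Z p))))) := by
        gcongr
        · rw [div_add_one hp0.ne']
          gcongr
          linarith
        · exact sum_sq_sum_mvPowerDetector_le hl hlp hD hIic
    _ = _ := by
        rw [div_pow]
        field_simp
        ring

theorem sum_sum_dilatedSecondMoment_le {n D K Z l P X : ℕ} {Y T : ℝ} (hl : l.Prime)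
    {H : MvPolynomial (Fin n) ℤ} (hD : H.totalDegree ≤ D) {α : Fin n → ℕ} (hα : α ∈ natBox n Z)
    (hPX : P ≤ X) (hY : 0 < Y) {S : Finset ℕ}
    (hS : ∀ p ∈ S, p.Prime ∧ l ∣ p - 1 ∧ Y ≤ p ∧ p ≤ P)
    (hT : ∑ p ∈ S, (#(badDirections H K Z p) : ℝ) ≤ T) :
    ∑ p ∈ S, ∑ q ∈ S, dilatedSecondMoment (10 * X)
        (fun x => powerDetector p l (MvPolynomial.eval x H : ℤ)) q α ≤
      (22 * X) ^ n * (3 * P) *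
        (((6 * l * (4 * l * (l * D + 2))) ^ 2 + K * l ^ 2) * (Z ^ (2 * n) * (#S / Y)) +
          l ^ 2 * (Z ^ n * (#S + T))) := by
  set A : ℝ := (6 * l * (4 * l * (l * D + 2))) ^ 2 + K * l ^ 2
  calc _ ≤ ∑ p ∈ S, (22 * X : ℝ) ^ n * (3 * P) *
          (A * (Z ^ (2 * n) / Y) + l ^ 2 * (Z ^ n * (1 + #(badDirections H K Z p)))) := by
        refine Finset.sum_le_sum fun p hp => ?_
        obtain ⟨hp, hlp, hYp, hpP⟩ := hS p hp
        have := Fact.mk hp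
        refine (sum_dilatedSecondMoment_le (K := K) hl hlp hD hα (hpP.trans hPX) hpP
          fun q hq => (hS q hq).2.2.2).trans ?_
        gcongr
    _ = (22 * X : ℝ) ^ n * (3 * P) * (A * (Z ^ (2 * n) * (#S / Y)) +
          l ^ 2 * (Z ^ n * (#S + ∑ p ∈ S, (#(badDirections H K Z p) : ℝ)))) := by
        rw [← Finset.mul_sum, Finset.sum_add_distrib, Finset.sum_const, ← Finset.mul_sum,
          ← Finset.mul_sum, Finset.sum_add_distrib, Finset.sum_const, nsmul_eq_mul, nsmul_eq_mul]
        ring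
    _ ≤ _ := by gcongr

theorem exists_sum_sq_sum_powerDetector_le (n D : ℕ) {l : ℕ} (hl : l.Prime) :
    ∃ C > (0 : ℝ), ∃ c e : ℕ, ∀ {H : MvPolynomial (Fin n) ℤ},
      Irreducible (MvPolynomial.map (Int.castRingHom ℚ) H) → H.totalDegree ≤ D →
      (∀ w, w ≠ 0 → 1 ≤ (genericLine H w).natDegree) →
      ∀ {N X Z P : ℕ} {Y : ℝ}, 1 ≤ N → (∀ m, |H.coeff m| ≤ N) → 1 ≤ Z → 1 ≤ P → P * Z ≤ X →
      0 < Y → ∀ {S : Finset ℕ}, (∀ p ∈ S, p.Prime ∧ l ∣ p - 1 ∧ Y ≤ p ∧ p ≤ P) →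
        ∑ x ∈ intBox n X, (∑ p ∈ S, powerDetector p l (MvPolynomial.eval x H : ℤ)) ^ 2 ≤
          C * (X ^ n * P * (#S / Y + #S / Z ^ n + Nat.log 2 (c * (N * Z) ^ e))) := by
  obtain ⟨c, e, hbad⟩ := exists_sum_card_badDirections_le n D
  set K := (2 * D + 1) * D
  set A : ℝ := (6 * l * (4 * l * (l * D + 2))) ^ 2 + K * l ^ 2
  have hl0 : (0 : ℝ) < l := by exact_mod_cast hl.pos
  refine ⟨20 ^ n * (22 ^ n * 3 * (A + l ^ 2 * 3 ^ n)), by positivity, c, e,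
    fun {H} hH hD hline N X Z P Y hN hcoeff hZ hP hPX hY S hS => ?_⟩
  set L := Nat.log 2 (c * (N * Z) ^ e)
  have hPX' : P ≤ X := (Nat.le_mul_of_pos_right P hZ).trans hPX
  have hZ1 : (1 : ℝ) ≤ Z := by exact_mod_cast hZ
  have hT : ∑ p ∈ S, (#(badDirections H K Z p) : ℝ) ≤ (3 * Z) ^ n * L := by
    refine (?_ : _ ≤ ((2 * Z + 1) ^ n * L : ℝ)).trans (by gcongr; linarith)
    exact_mod_cast hbad hH hD hline hN hcoeff hZ fun p hp => (hS p hp).1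
  set R : ℝ := #S / Y + #S / Z ^ n + L with hR
  have hYR : #S / Y ≤ R := by
    rw [hR, add_assoc]
    exact le_add_of_nonneg_right (by positivity)
  have hZR : #S / Z ^ n + 3 ^ n * L ≤ 3 ^ n * R := by
    have h3 : (1 : ℝ) ≤ 3 ^ n := one_le_pow₀ (by norm_num)
    have : #S / (Z : ℝ) ^ n ≤ 3 ^ n * (#S / Z ^ n) := le_mul_of_one_le_left (by positivity) h3
    have : 0 ≤ 3 ^ n * (#S / Y) := by positivity
    linarith
  have hmain := sum_intBox_sq_sum_le_of_periodic (hP.trans hPX') hZ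
    (fun p hp => (Nat.mul_le_mul_right Z (hS p hp).2.2.2).trans hPX)
    (g := fun p x => powerDetector p l (MvPolynomial.eval x H : ℤ))
    (fun p x z => by simp [powerDetector_intCast_eval, dilate])
    (U := (22 * X) ^ n * (3 * P) * (Z ^ (2 * n) * ((A + l ^ 2 * 3 ^ n) * R))) fun α hα => by
      refine (sum_sum_dilatedSecondMoment_le hl hD hα hPX' hY hS hT).trans
        (mul_le_mul_of_nonneg_left ?_ (by positivity))
      calc A * (Z ^ (2 * n) * (#S / Y)) + l ^ 2 * (Z ^ n * (#S + (3 * Z) ^ n * L)) =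
            Z ^ (2 * n) * (A * (#S / Y) + l ^ 2 * (#S / Z ^ n + 3 ^ n * L)) := by
            rw [mul_pow, two_mul, pow_add]
            field_simp
        _ ≤ (Z : ℝ) ^ (2 * n) * (A * R + l ^ 2 * (3 ^ n * R)) := by gcongr
        _ = _ := by ring
  refine le_of_mul_le_mul_left (hmain.trans_eq ?_) (show (0 : ℝ) < Z ^ (2 * n) by positivity)
  rw [mul_pow 22]
  ring

theorem neg_one_le_powerDetector (p l : ℕ) (a : ZMod p) : -1 ≤ powerDetector p l a := by
  unfold powerDetector
  split_ifs <;> linarith [l.cast_nonneg (α := ℝ)]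

theorem one_le_powerDetector_pow {p l : ℕ} [Fact p.Prime] (hl : 2 ≤ l) (hlp : l ∣ p - 1)
    {a : ZMod p} (ha : a ≠ 0) : 1 ≤ powerDetector p l (a ^ l) := by
  have hl' : (2 : ℝ) ≤ l := by exact_mod_cast hl
  rw [powerDetector, ← pow_mul, Nat.mul_div_cancel' hlp, if_pos (ZMod.pow_card_sub_one_eq_one ha)]
  linarith

theorem card_sub_le_sum_powerDetector_pow {l : ℕ} (hl : 2 ≤ l) {S : Finset ℕ}
    (hS : ∀ p ∈ S, p.Prime ∧ l ∣ p - 1) {y : ℤ} (hy : y ≠ 0) :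
    #S - 2 * Nat.log 2 (y ^ l).natAbs ≤ ∑ p ∈ S, powerDetector p l ((y ^ l : ℤ) : ZMod p) := by
  have hterm {p : ℕ} (hp : p ∈ S) : (1 : ℝ) - 2 * (if (p : ℤ) ∣ y ^ l then 1 else 0) ≤
      powerDetector p l ((y ^ l : ℤ) : ZMod p) := by
    have := Fact.mk (hS p hp).1
    split_ifs with hdvd
    · linarith [neg_one_le_powerDetector p l ((y ^ l : ℤ) : ZMod p)]
    · rw [Int.cast_pow, mul_zero, sub_zero]
      refine one_le_powerDetector_pow hl (hS p hp).2 fun h => hdvd ?_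
      exact dvd_pow ((ZMod.intCast_zmod_eq_zero_iff_dvd y p).1 h) (by lia)
  have hsum := Finset.sum_le_sum fun p (hp : p ∈ S) => hterm hp
  rw [Finset.sum_sub_distrib, ← Finset.mul_sum, Finset.sum_boole, Finset.sum_const,
    nsmul_eq_mul, mul_one] at hsum
  have hlog : (#(S.filter fun p : ℕ => (p : ℤ) ∣ y ^ l) : ℝ) ≤ Nat.log 2 (y ^ l).natAbs := by
    exact_mod_cast card_filter_dvd_le_log (fun p hp => (hS p hp).1) (pow_ne_zero l hy)
  linarith

theorem card_mul_sq_card_le {n l L : ℕ} (hl : 2 ≤ l) {S : Finset ℕ}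
    (hS : ∀ p ∈ S, p.Prime ∧ l ∣ p - 1) {H : MvPolynomial (Fin n) ℤ} {A B : Finset (Fin n → ℤ)}
    (hAB : A ⊆ B) (hA : ∀ x ∈ A, ∃ y : ℤ, y ≠ 0 ∧ MvPolynomial.eval x H = y ^ l)
    (hL : ∀ x ∈ A, Nat.log 2 (MvPolynomial.eval x H).natAbs ≤ L) :
    #A * (#S : ℝ) ^ 2 ≤
      ∑ x ∈ B, (∑ p ∈ S, powerDetector p l (MvPolynomial.eval x H : ℤ)) ^ 2 +
        4 * L * #S * #A := by
  have hterm {x : Fin n → ℤ} (hx : x ∈ A) : (#S : ℝ) ^ 2 - 4 * L * #S ≤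
      (∑ p ∈ S, powerDetector p l (MvPolynomial.eval x H : ℤ)) ^ 2 := by
    obtain ⟨y, hy, hxy⟩ := hA x hx
    have hlow := card_sub_le_sum_powerDetector_pow hl hS hy
    rw [← hxy] at hlow
    have : (Nat.log 2 (MvPolynomial.eval x H).natAbs : ℝ) ≤ L := by exact_mod_cast hL x hx
    nlinarith [sq_nonneg (∑ p ∈ S, powerDetector p l (MvPolynomial.eval x H : ℤ) - #S),
      (#S).cast_nonneg (α := ℝ)]
  have hsum := (Finset.card_nsmul_le_sum A _ _ fun x hx => hterm hx).trans
    (Finset.sum_le_sum_of_subset_of_nonneg hAB fun x _ _ => sq_nonneg _)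
  rw [nsmul_eq_mul] at hsum
  linarith

theorem natAbs_eval_le {n D N X : ℕ} {H : MvPolynomial (Fin n) ℤ} (hD : H.totalDegree ≤ D)
    (hcoeff : ∀ m, |H.coeff m| ≤ N) (hX : 1 ≤ X) {x : Fin n → ℤ} (hx : x ∈ intBox n X) :
    (MvPolynomial.eval x H).natAbs ≤ (D + 1) ^ n * (N * X) ^ (D + 1) := by
  have hcoeff := abs_coeff_restrictLine_le hcoeff (M := (X : ℤ)) (by exact_mod_cast hX) (x := x)
    (w := 0) (by simpa using mem_intBox.1 hx) 0
  have heval : |MvPolynomial.eval x H| ≤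
      (H.totalDegree + 1) ^ n * (N * X ^ H.totalDegree) := by
    simpa [coeff_zero_eq_eval_zero, eval_restrictLine, MvPolynomial.aeval_eq_eval] using hcoeff
  rw [Int.abs_eq_natAbs] at heval
  calc _ ≤ (H.totalDegree + 1) ^ n * (N * X ^ H.totalDegree) := by exact_mod_cast heval
    _ ≤ (D + 1) ^ n * (N ^ (D + 1) * X ^ (D + 1)) := by
        gcongr
        · exact Nat.le_self_pow D.succ_ne_zero N
        · lia
    _ = _ := by rw [mul_pow]

/-! ### Choice of parameters -/

theorem one_le_log_natCast_add_two {N : ℕ} (hN : 1 ≤ N) : 1 ≤ Real.log (N + 2) := by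
  have : (1 : ℝ) ≤ N := by exact_mod_cast hN
  exact (Real.le_log_iff_exp_le (by linarith)).2 (by linarith [Real.exp_one_lt_three])

theorem exists_natLog_le (c e : ℕ) {δ : ℝ} (hδ : 0 < δ) :
    ∃ K > (0 : ℝ), ∀ {N W : ℕ} {B : ℝ}, 1 ≤ N → 1 ≤ W → W ≤ B →
      Nat.log 2 (c * (N * W) ^ e) ≤ K * (Real.log (N + 2) * B ^ δ) := by
  refine ⟨2 * (c + e * (1 + 1 / δ)) + 1, by positivity, fun {N W B} hN hW hWB => ?_⟩
  have hN' : (1 : ℝ) ≤ N := by exact_mod_cast hN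
  have hW' : (1 : ℝ) ≤ W := by exact_mod_cast hW
  have hB : 1 ≤ B := hW'.trans hWB
  have hlogN : 1 ≤ Real.log (N + 2) := one_le_log_natCast_add_two hN
  have hBδ : 1 ≤ B ^ δ := Real.one_le_rpow hB hδ.le
  set t := Real.log (N + 2) * B ^ δ
  have ht : 1 ≤ t := one_le_mul_of_one_le_of_one_le hlogN hBδ
  rcases c.eq_zero_or_pos with rfl | hc
  · rw [zero_mul, Nat.log_zero_right, Nat.cast_zero]
    positivity
  have hlogc : Real.log c ≤ c * t :=
    (Real.log_le_self c.cast_nonneg).trans (le_mul_of_one_le_right c.cast_nonneg ht)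
  have hlogN' : Real.log N ≤ t :=
    (Real.log_le_log (by linarith) (by linarith)).trans (le_mul_of_one_le_right (by linarith) hBδ)
  have hlogW : Real.log W ≤ 1 / δ * t := by
    calc Real.log W ≤ Real.log B := Real.log_le_log (by linarith) hWB
      _ ≤ B ^ δ / δ := Real.log_le_rpow_div (by linarith) hδ
      _ = 1 / δ * B ^ δ := by ring
      _ ≤ 1 / δ * t := by
          gcongr
          exact le_mul_of_one_le_left (by linarith) hlogN
  have hlog2 : 1 ≤ 2 * Real.log 2 := by linarith [Real.log_two_gt_d9]
  have hlog : Real.log (c * (N * W) ^ e) ≤ (c + e * (1 + 1 / δ)) * t := by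
    rw [Real.log_mul (by positivity) (by positivity), Real.log_pow,
      Real.log_mul (by positivity) (by positivity)]
    calc _ ≤ c * t + e * (t + 1 / δ * t) := by gcongr
      _ = _ := by ring
  have hnatLog : (Nat.log 2 (c * (N * W) ^ e) : ℝ) * Real.log 2 ≤ Real.log (c * (N * W) ^ e) := by
    rw [← le_div_iff₀ (by linarith)]
    exact_mod_cast Real.natLog_le_logb (c * (N * W) ^ e) 2
  nlinarith [(Nat.log 2 (c * (N * W) ^ e)).cast_nonneg (α := ℝ)]

theorem exists_mul_le_floor_and_rpow_le (n : ℕ) {B : ℝ} (hB : 1 ≤ B) :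
    ∃ Z : ℕ, 1 ≤ Z ∧ ⌊B ^ (n / (n + 1) : ℝ)⌋₊ * Z ≤ ⌊B⌋₊ ∧
      B ^ (n / (n + 1) : ℝ) ≤ (4 * Z) ^ n := by
  set θ : ℝ := n / (n + 1) with hθ
  have hθ0 : 0 ≤ θ := by positivity
  have hθ1 : θ ≤ 1 := (div_le_one (by positivity)).2 (by linarith)
  have hB0 : 0 < B := by linarith
  have hPB : ⌊B ^ θ⌋₊ ≤ ⌊B⌋₊ := Nat.floor_mono (Real.rpow_le_self_of_one_le hB hθ1)
  have hP : 0 < ⌊B ^ θ⌋₊ := Nat.floor_pos.2 (Real.one_le_rpow hB hθ0)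
  have hZ : 1 ≤ ⌊B⌋₊ / ⌊B ^ θ⌋₊ := (Nat.one_le_div_iff hP).2 hPB
  refine ⟨⌊B⌋₊ / ⌊B ^ θ⌋₊, hZ, Nat.mul_div_le _ _, ?_⟩
  set Z := ⌊B⌋₊ / ⌊B ^ θ⌋₊
  have hfloor : (⌊B⌋₊ + 1 : ℝ) ≤ 4 * Z * ⌊B ^ θ⌋₊ := by
    have : ⌊B⌋₊ < ⌊B ^ θ⌋₊ * (Z + 1) := Nat.lt_mul_div_succ ⌊B⌋₊ hP
    exact_mod_cast (by nlinarith : ⌊B⌋₊ + 1 ≤ 4 * Z * ⌊B ^ θ⌋₊)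
  have hBZ : B ^ (1 - θ) ≤ 4 * Z := by
    rw [Real.rpow_sub hB0, Real.rpow_one, div_le_iff₀ (by positivity)]
    calc B ≤ ⌊B⌋₊ + 1 := (Nat.lt_floor_add_one B).le
      _ ≤ 4 * Z * ⌊B ^ θ⌋₊ := hfloor
      _ ≤ _ := by
          gcongr
          exact Nat.floor_le (by positivity)
  calc B ^ θ = (B ^ (1 - θ)) ^ n := by
        rw [← Real.rpow_natCast, ← Real.rpow_mul hB0.le, hθ]
        congr 1
        field_simp
        ring
    _ ≤ _ := by gcongr

theorem mul_sq_le_of_sieve_le {a C E P Q T W Y k : ℝ} (hC : 0 ≤ C) (hE : 1 ≤ E) (hW : 0 < W)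
    (hY : 0 < Y) (hYP : Y ≤ P) (hYQ : Y ≤ Q) (hPW : P ≤ k * W) (ha : 0 ≤ a) (haT : a ≤ T)
    (h : a * Q ^ 2 ≤ C * (T * P * (Q / Y + Q / W + E)) + 4 * E * Q * a) :
    a * Y ^ 2 ≤ (C * (2 + k) + 4) * (E * (T * P)) := by
  have hQ : 0 < Q := hY.trans_le hYQ
  have hP : 0 < P := hY.trans_le hYP
  have hT : 0 ≤ T := ha.trans haT
  set r := Y / Q with hr
  have hr0 : 0 < r := by positivity
  have hr1 : r ≤ 1 := (div_le_one hQ).2 hYQ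
  have hr2 : r ^ 2 ≤ 1 := pow_le_one₀ hr0.le hr1
  have hYW : Y / W ≤ k := (div_le_iff₀ hW).2 (hYP.trans hPW)
  have hk : 0 ≤ k := (by positivity : 0 ≤ Y / W).trans hYW
  calc a * Y ^ 2 = a * Q ^ 2 * r ^ 2 := by rw [hr]; field_simp
    _ ≤ (C * (T * P * (Q / Y + Q / W + E)) + 4 * E * Q * a) * r ^ 2 := by gcongr
    _ = C * (T * P * (r + Y / W * r + E * r ^ 2)) + 4 * E * (a * (Y * r)) := by
        rw [hr]
        field_simp
    _ ≤ C * (T * P * (1 + k * 1 + E * 1)) + 4 * E * (T * (P * 1)) := by gcongr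
    _ ≤ C * (T * P * (E + k * E + E * 1)) + 4 * E * (T * (P * 1)) := by
        gcongr
    _ = _ := by ring

theorem card_intBox_floor_le (n : ℕ) {B : ℝ} (hB : 1 ≤ B) :
    (#(intBox n ⌊B⌋₊) : ℝ) ≤ (3 * B) ^ n := by
  rw [card_intBox]
  push_cast
  gcongr
  linarith [Nat.floor_le (by linarith : 0 ≤ B)]

theorem exists_card_mul_sq_le (n D : ℕ) {l : ℕ} (hl : l.Prime) :
    ∃ G > (0 : ℝ), ∃ c e : ℕ, ∀ {H : MvPolynomial (Fin n) ℤ},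
      Irreducible (MvPolynomial.map (Int.castRingHom ℚ) H) → H.totalDegree ≤ D →
      (∀ w : Fin n → ℤ, w ≠ 0 → 1 ≤ (genericLine H w).natDegree) →
      ∀ {N : ℕ}, 1 ≤ N → (∀ m, |H.coeff m| ≤ N) → ∀ {B Y E : ℝ}, 1 ≤ B → 0 < Y → 1 ≤ E →
      (∀ {W : ℕ}, 1 ≤ W → W ≤ B → Nat.log 2 (c * (N * W) ^ e) ≤ E) →
      ∀ {S : Finset ℕ},
        (∀ p ∈ S, p.Prime ∧ l ∣ p - 1 ∧ Y ≤ p ∧ p ≤ B ^ (n / (n + 1) : ℝ)) → Y ≤ #S →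
      ∀ {A : Finset (Fin n → ℤ)}, A ⊆ intBox n ⌊B⌋₊ →
        (∀ x ∈ A, ∃ y : ℤ, y ≠ 0 ∧ MvPolynomial.eval x H = y ^ l) →
      #A * Y ^ 2 ≤ G * (E * ((3 * B) ^ n * B ^ (n / (n + 1) : ℝ))) := by
  obtain ⟨C, hC, c, e, hsum⟩ := exists_sum_sq_sum_powerDetector_le n D hl
  refine ⟨C * (2 + 4 ^ n) + 4, by positivity, c + (D + 1) ^ n, e + D + 1, ?_⟩
  intro H hH hD hline N hN hcoeff B Y E hB hY hE hlog S hS hYS A hA hAy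
  obtain ⟨Z, hZ, hPZ, hBZ⟩ := exists_mul_le_floor_and_rpow_le n hB
  set P : ℝ := B ^ (n / (n + 1) : ℝ)
  set X := ⌊B⌋₊
  have hP : 1 ≤ ⌊P⌋₊ := Nat.floor_pos.2 (Real.one_le_rpow hB (by positivity))
  have hX : 1 ≤ X := Nat.floor_pos.2 hB
  have hXB : (X : ℝ) ≤ B := Nat.floor_le (by linarith)
  have hZX : Z ≤ X := (Nat.le_mul_of_pos_left Z hP).trans hPZ
  have hlogZ : (Nat.log 2 (c * (N * Z) ^ e) : ℝ) ≤ E := by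
    refine le_trans ?_ (hlog hZ ((Nat.cast_le.2 hZX).trans hXB))
    gcongr
    exacts [Nat.le_add_right _ _, Nat.mul_pos hN hZ, Nat.le_add_right e (D + 1)]
  have hlogX : (Nat.log 2 ((D + 1) ^ n * (N * X) ^ (D + 1)) : ℝ) ≤ E := by
    refine le_trans ?_ (hlog hX hXB)
    gcongr
    exacts [Nat.le_add_left _ _, Nat.mul_pos hN hX, Nat.le_add_left _ _]
  have hupper := hsum hH hD hline hN hcoeff hZ hP hPZ hY (S := S) fun p hp =>
    ⟨(hS p hp).1, (hS p hp).2.1, (hS p hp).2.2.1, Nat.le_floor (hS p hp).2.2.2⟩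
  have hlower := card_mul_sq_card_le hl.two_le (fun p hp => ⟨(hS p hp).1, (hS p hp).2.1⟩) hA hAy
    fun x hx => Nat.log_mono_right (natAbs_eval_le hD hcoeff hX (hA hx))
  have hYP : Y ≤ P := by
    obtain ⟨p, hp⟩ := Finset.card_pos.1 (Nat.cast_pos.1 (hY.trans_le hYS))
    exact (hS p hp).2.2.1.trans (hS p hp).2.2.2
  refine mul_sq_le_of_sieve_le (W := Z ^ n) hC.le hE (by positivity) hY hYP hYS
    (by rwa [← mul_pow]) (#A).cast_nonneg
    ((Nat.cast_le.2 (Finset.card_le_card hA)).trans (card_intBox_floor_le n hB)) ?_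
  have hXT : (X : ℝ) ^ n ≤ (3 * B) ^ n := by gcongr; linarith
  have hPP : (⌊P⌋₊ : ℝ) ≤ P := Nat.floor_le (by positivity)
  calc _ ≤ _ := hlower
    _ ≤ _ := add_le_add_left hupper _
    _ ≤ _ := by gcongr

theorem exists_card_mul_rpow_sq_le (n D : ℕ) {l : ℕ} (hl : l.Prime) {δ : ℝ} (hδ : 0 < δ)
    (hδ1 : δ < 1) :
    ∃ G > (0 : ℝ), ∀ {H : MvPolynomial (Fin n) ℤ},
      Irreducible (MvPolynomial.map (Int.castRingHom ℚ) H) → H.totalDegree ≤ D →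
      (∀ w : Fin n → ℤ, w ≠ 0 → 1 ≤ (genericLine H w).natDegree) →
      ∀ {N : ℕ}, 1 ≤ N → (∀ m, |H.coeff m| ≤ N) → ∀ {B : ℝ}, 1 ≤ B →
      ∀ {A : Finset (Fin n → ℤ)}, A ⊆ intBox n ⌊B⌋₊ →
        (∀ x ∈ A, ∃ y : ℤ, y ≠ 0 ∧ MvPolynomial.eval x H = y ^ l) →
      #A * ((B ^ (n / (n + 1) : ℝ)) ^ (1 - δ)) ^ 2 ≤
        G * (Real.log (N + 2) * B ^ δ * (B ^ n * B ^ (n / (n + 1) : ℝ))) := by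
  have : NeZero l := ⟨hl.ne_zero⟩
  obtain ⟨G, hG, c, e, hsieve⟩ := exists_card_mul_sq_le n D hl
  obtain ⟨K, hK, hlog⟩ := exists_natLog_le c e hδ
  obtain ⟨P₀, hP₀⟩ := Filter.eventually_atTop.1
    (eventually_rpow_le_card_primesIcc (isUnit_one (M := ZMod l)) hδ hδ1)
  refine ⟨3 ^ n * (G * (K + 1) + |P₀|), by positivity, ?_⟩
  intro H hH hD hline N hN hcoeff B hB A hA hAy
  set P : ℝ := B ^ (n / (n + 1) : ℝ)
  set t := Real.log (N + 2) * B ^ δ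
  have ht : 1 ≤ t := one_le_mul_of_one_le_of_one_le (one_le_log_natCast_add_two hN)
    (Real.one_le_rpow hB hδ.le)
  have hP : 1 ≤ P := Real.one_le_rpow hB (by positivity)
  rcases le_total P₀ P with hPP₀ | hPP₀
  · have hprimes : ∀ p ∈ primesIcc (1 : ZMod l) (P ^ (1 - δ)) P,
        p.Prime ∧ l ∣ p - 1 ∧ P ^ (1 - δ) ≤ p ∧ p ≤ P := fun p hp => by
      obtain ⟨⟨hYp, hpP⟩, hp, hpl⟩ := (mem_primesIcc (by linarith)).1 hp
      refine ⟨hp, (ZMod.natCast_eq_zero_iff _ _).1 ?_, hYp, hpP⟩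
      rw [Nat.cast_sub hp.one_le, hpl, Nat.cast_one, sub_self]
    have hE : 1 ≤ (K + 1) * t := one_le_mul_of_one_le_of_one_le (by linarith) ht
    have := hsieve hH hD hline hN hcoeff hB (by positivity) hE
      (fun {W} hW hWB => (hlog hN hW hWB).trans (by gcongr; linarith)) hprimes (hP₀ P hPP₀) hA hAy
    calc _ ≤ _ := this
      _ = 3 ^ n * (G * (K + 1) + 0) * (t * (B ^ n * P)) := by ring
      _ ≤ _ := by gcongr; positivity
  · have hPδ : P ^ (1 - δ) ≤ P := Real.rpow_le_self_of_one_le hP (by linarith)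
    calc #A * (P ^ (1 - δ)) ^ 2 ≤ (3 * B) ^ n * P ^ 2 := by
          gcongr
          exact (Nat.cast_le.2 (Finset.card_le_card hA)).trans (card_intBox_floor_le n hB)
      _ = 3 ^ n * P * (1 * (B ^ n * P)) := by ring
      _ ≤ 3 ^ n * (G * (K + 1) + |P₀|) * (t * (B ^ n * P)) := by
          gcongr
          exact (hPP₀.trans (le_abs_self _)).trans (le_add_of_nonneg_left (by positivity))

theorem exists_card_le_of_eval_eq_pow_ne_zero (n D : ℕ) {l : ℕ} (hl : l.Prime) {ε : ℝ}
    (hε : 0 < ε) :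
    ∃ C > (0 : ℝ), ∀ {H : MvPolynomial (Fin n) ℤ},
      Irreducible (MvPolynomial.map (Int.castRingHom ℚ) H) → H.totalDegree ≤ D →
      (∀ w : Fin n → ℤ, w ≠ 0 → 1 ≤ (genericLine H w).natDegree) →
      ∀ {N : ℕ}, 1 ≤ N → (∀ m, |H.coeff m| ≤ N) → ∀ {B : ℝ}, 1 ≤ B →
      ∀ {A : Finset (Fin n → ℤ)}, A ⊆ intBox n ⌊B⌋₊ →
        (∀ x ∈ A, ∃ y : ℤ, y ≠ 0 ∧ MvPolynomial.eval x H = y ^ l) →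
      #A ≤ C * Real.log (N + 2) * B ^ ((n : ℝ) - 1 + 1 / (n + 1) + ε) := by
  set δ := min (ε / 3) (1 / 2)
  have hδ : 0 < δ := by positivity
  obtain ⟨G, hG, hcount⟩ := exists_card_mul_rpow_sq_le n D hl hδ
    ((min_le_right _ _).trans_lt (by norm_num))
  refine ⟨G, hG, ?_⟩
  intro H hH hD hline N hN hcoeff B hB A hA hAy
  have hB0 : 0 < B := by linarith
  set θ : ℝ := n / (n + 1) with hθ
  have hθ1 : θ ≤ 1 := (div_le_one (by positivity)).2 (by linarith)
  have hexp : (n : ℝ) - 1 + 1 / (n + 1) = n - θ := by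
    rw [hθ]
    field_simp
    ring
  have hsq : ((B ^ θ) ^ (1 - δ)) ^ 2 = B ^ (2 * θ * (1 - δ)) := by
    rw [← Real.rpow_mul hB0.le, ← Real.rpow_mul_natCast hB0.le]
    ring_nf
  have hrpow : B ^ δ * (B ^ n * B ^ θ) ≤ B ^ (n - θ + ε) * B ^ (2 * θ * (1 - δ)) := by
    rw [← Real.rpow_natCast, ← Real.rpow_add hB0, ← Real.rpow_add hB0, ← Real.rpow_add hB0]
    refine Real.rpow_le_rpow_of_exponent_le hB ?_
    nlinarith [min_le_left (ε / 3) (1 / 2), mul_le_of_le_one_left hδ.le hθ1]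
  have hlog := one_le_log_natCast_add_two hN
  rw [hexp]
  refine le_of_mul_le_mul_right ?_ (by positivity : 0 < ((B ^ θ) ^ (1 - δ)) ^ 2)
  calc _ ≤ _ := hcount hH hD hline hN hcoeff hB hA hAy
    _ = G * Real.log (N + 2) * (B ^ δ * (B ^ n * B ^ θ)) := by ring
    _ ≤ G * Real.log (N + 2) * (B ^ (n - θ + ε) * B ^ (2 * θ * (1 - δ))) := by gcongr
    _ = _ := by rw [hsq, ← mul_assoc]

theorem card_filter_intBox_eval_eq_zero_le {n : ℕ} {H : MvPolynomial (Fin n) ℤ} (hH : H ≠ 0)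
    {B : ℝ} (hB : 1 ≤ B) :
    B * #((intBox n ⌊B⌋₊).filter fun x => MvPolynomial.eval x H = 0) ≤
      H.totalDegree * (3 * B) ^ n := by
  have hzeros := card_mul_card_eval_eq_zero_le hH (Finset.Icc (-(⌊B⌋₊ : ℤ)) ⌊B⌋₊)
  have hcard : #(Finset.Icc (-(⌊B⌋₊ : ℤ)) ⌊B⌋₊) = 2 * ⌊B⌋₊ + 1 := by
    rw [Int.card_Icc]
    lia
  rw [hcard, ← card_intBox] at hzeros
  calc _ ≤ ((2 * ⌊B⌋₊ + 1 : ℕ) : ℝ) *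
        #((intBox n ⌊B⌋₊).filter fun x => MvPolynomial.eval x H = 0) := by
        gcongr
        push_cast
        linarith [Nat.lt_floor_add_one B]
    _ ≤ H.totalDegree * #(intBox n ⌊B⌋₊) := by exact_mod_cast hzeros
    _ ≤ _ := by
        gcongr
        exact card_intBox_floor_le n hB

theorem exists_card_le_of_eval_eq_pow (n D : ℕ) {l : ℕ} (hl : l.Prime) {ε : ℝ} (hε : 0 < ε) :
    ∃ C > (0 : ℝ), ∀ {H : MvPolynomial (Fin n) ℤ},
      Irreducible (MvPolynomial.map (Int.castRingHom ℚ) H) → H.totalDegree ≤ D →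
      (∀ w : Fin n → ℤ, w ≠ 0 → 1 ≤ (genericLine H w).natDegree) →
      ∀ {N : ℕ}, 1 ≤ N → (∀ m, |H.coeff m| ≤ N) → ∀ {B : ℝ}, 1 ≤ B →
      ∀ {A : Finset (Fin n → ℤ)}, A ⊆ intBox n ⌊B⌋₊ →
        (∀ x ∈ A, ∃ y : ℤ, MvPolynomial.eval x H = y ^ l) →
      #A ≤ C * Real.log (N + 2) * B ^ ((n : ℝ) - 1 + 1 / (n + 1) + ε) := by
  obtain ⟨C, hC, hcount⟩ := exists_card_le_of_eval_eq_pow_ne_zero n D hl hε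
  refine ⟨C + D * 3 ^ n, by positivity, ?_⟩
  intro H hH hD hline N hN hcoeff B hB A hA hAy
  have hB0 : 0 < B := by linarith
  have hH0 : H ≠ 0 := by
    rintro rfl
    exact hH.ne_zero (map_zero _)
  set R := B ^ ((n : ℝ) - 1 + 1 / (n + 1) + ε)
  have hlog := one_le_log_natCast_add_two hN
  have hzeros : (#(A.filter fun x => MvPolynomial.eval x H = 0) : ℝ) ≤ D * 3 ^ n * R := by
    have hpow : B ^ n ≤ R * B := by
      rw [← Real.rpow_natCast, ← Real.rpow_add_one hB0.ne']
      refine Real.rpow_le_rpow_of_exponent_le hB ?_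
      linarith [(by positivity : (0 : ℝ) ≤ 1 / (n + 1))]
    refine le_of_mul_le_mul_left ?_ hB0
    calc _ ≤ B * #((intBox n ⌊B⌋₊).filter fun x => MvPolynomial.eval x H = 0) := by gcongr
      _ ≤ H.totalDegree * (3 * B) ^ n := card_filter_intBox_eval_eq_zero_le hH0 hB
      _ ≤ D * (3 ^ n * (R * B)) := by rw [mul_pow]; gcongr
      _ = _ := by ring
  have hnonzeros := hcount hH hD hline hN hcoeff hB ((A.filter_subset _).trans hA)
    (A := A.filter fun x => MvPolynomial.eval x H ≠ 0) fun x hx => by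
      obtain ⟨hxA, hx0⟩ := Finset.mem_filter.1 hx
      obtain ⟨y, hy⟩ := hAy x hxA
      exact ⟨y, fun h => hx0 (by rw [hy, h, zero_pow hl.ne_zero]), hy⟩
  calc (#A : ℝ) = #(A.filter fun x => MvPolynomial.eval x H = 0) +
        #(A.filter fun x => MvPolynomial.eval x H ≠ 0) := by
        exact_mod_cast (Finset.card_filter_add_card_filter_not _).symm
    _ ≤ D * 3 ^ n * R + C * Real.log (N + 2) * R := add_le_add hzeros hnonzeros
    _ ≤ D * 3 ^ n * (Real.log (N + 2) * R) + C * Real.log (N + 2) * R := by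
        gcongr
        exact le_mul_of_one_le_left (by positivity) hlog
    _ = _ := by ring

theorem add_totalDegree_coeff_le_totalDeg {n : ℕ} {R : Type*} [CommSemiring R]
    {F : (MvPolynomial (Fin n) R)[X]} {k : ℕ} (hk : F.coeff k ≠ 0) :
    k + (F.coeff k).totalDegree ≤ totalDeg F :=
  Finset.le_sup (f := fun k => k + (F.coeff k).totalDegree) (mem_support_iff.2 hk)

theorem natAbs_coeff_coeff_le_polyNorm {n : ℕ} (F : (MvPolynomial (Fin n) ℤ)[X]) (k : ℕ)
    (m : Fin n →₀ ℕ) : ((F.coeff k).coeff m).natAbs ≤ polyNorm F := by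
  rcases eq_or_ne ((F.coeff k).coeff m) 0 with h | h
  · simp [h]
  have hk : F.coeff k ≠ 0 := fun hk => h (by rw [hk, MvPolynomial.coeff_zero])
  calc _ ≤ mvNorm (F.coeff k) := Finset.le_sup (f := fun m => ((F.coeff k).coeff m).natAbs)
        (MvPolynomial.mem_support_iff.2 h)
    _ ≤ _ := Finset.le_sup (f := fun k => mvNorm (F.coeff k)) (mem_support_iff.2 hk)

section Superelliptic

variable {n d : ℕ}

theorem coeff_zero_X_pow_sub_C (hd : d ≠ 0) (H : MvPolynomial (Fin n) ℤ) :
    (X ^ d - C H).coeff 0 = -H := by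
  rw [coeff_sub, coeff_X_pow, coeff_C_zero, if_neg hd.symm, zero_sub]

theorem coeff_self_X_pow_sub_C (hd : d ≠ 0) (H : MvPolynomial (Fin n) ℤ) :
    (X ^ d - C H).coeff d = 1 := by
  rw [coeff_sub, coeff_X_pow_self, coeff_C_of_ne_zero hd, sub_zero]

theorem le_totalDeg_X_pow_sub_C (hd : d ≠ 0) (H : MvPolynomial (Fin n) ℤ) :
    d ≤ totalDeg (X ^ d - C H) := by
  have hcoeff := coeff_self_X_pow_sub_C hd H
  exact (Nat.le_add_right _ _).trans
    (add_totalDegree_coeff_le_totalDeg (k := d) (by rw [hcoeff]; exact one_ne_zero))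

theorem totalDegree_le_totalDeg_X_pow_sub_C (hd : d ≠ 0) (H : MvPolynomial (Fin n) ℤ) :
    H.totalDegree ≤ totalDeg (X ^ d - C H) := by
  rcases eq_or_ne H 0 with rfl | hH
  · simp
  have hcoeff := coeff_zero_X_pow_sub_C hd H
  have := add_totalDegree_coeff_le_totalDeg (F := X ^ d - C H) (k := 0)
    (by rw [hcoeff]; exact neg_ne_zero.2 hH)
  rwa [hcoeff, MvPolynomial.totalDegree_neg, zero_add] at this

theorem abs_coeff_le_polyNorm_X_pow_sub_C (hd : d ≠ 0) (H : MvPolynomial (Fin n) ℤ)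
    (m : Fin n →₀ ℕ) : |H.coeff m| ≤ polyNorm (X ^ d - C H) := by
  have := natAbs_coeff_coeff_le_polyNorm (X ^ d - C H) 0 m
  rw [coeff_zero_X_pow_sub_C hd, MvPolynomial.coeff_neg, Int.natAbs_neg] at this
  rw [Int.abs_eq_natAbs]
  exact_mod_cast this

theorem one_le_polyNorm_X_pow_sub_C (hd : d ≠ 0) (H : MvPolynomial (Fin n) ℤ) :
    1 ≤ polyNorm (X ^ d - C H) := by
  have := natAbs_coeff_coeff_le_polyNorm (X ^ d - C H) d 0
  rwa [coeff_self_X_pow_sub_C hd, MvPolynomial.coeff_zero_one] at this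

open scoped Classical in
theorem NFB_X_pow_sub_C (d : ℕ) (H : MvPolynomial (Fin n) ℤ) {B : ℝ} (hB : 0 ≤ B) :
    NFB (X ^ d - C H) B =
      #((intBox n ⌊B⌋₊).filter fun x => ∃ y : ℤ, MvPolynomial.eval x H = y ^ d) := by
  rw [NFB, ← Set.ncard_coe_finset]
  congr 1
  ext x
  have hbox : (∀ i, |(x i : ℝ)| ≤ B) ↔ x ∈ intBox n ⌊B⌋₊ := by
    rw [mem_intBox]
    refine forall_congr' fun i => ?_
    rw [Int.abs_eq_natAbs, Nat.cast_le, Nat.le_floor_iff hB, Nat.cast_natAbs, Int.cast_abs]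
  simp [hbox, sub_eq_zero, eq_comm (b := MvPolynomial.eval x H)]

end Superelliptic

theorem statement0_general (n D : ℕ) {ε : ℝ} (hε : 0 < ε) :
    ∃ C > (0 : ℝ), ∀ (d : ℕ) (H : MvPolynomial (Fin n) ℤ), 2 ≤ d →
      Irreducible (MvPolynomial.map (Int.castRingHom ℚ) H) →
      (¬ ∃ (σ : Matrix (Fin n) (Fin n) ℚ) (I : Set (Fin n)), IsUnit σ.det ∧ I ≠ Set.univ ∧
        ∀ j ∉ I,
          MvPolynomial.degreeOf j (lsubMv σ (MvPolynomial.map (Int.castRingHom ℚ) H)) = 0) →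
      totalDeg (X ^ d - Polynomial.C H) ≤ D → ∀ B : ℝ, 1 ≤ B →
        (NFB (X ^ d - Polynomial.C H) B : ℝ) ≤
          C * Real.log (polyNorm (X ^ d - Polynomial.C H) + 2) *
            B ^ ((n : ℝ) - 1 + 1 / (n + 1) + ε) := by
  classical
  choose! K hK hcount using fun (l : ℕ) (hl : l.Prime) => exists_card_le_of_eval_eq_pow n D hl hε
  set primes := (Finset.range (D + 1)).filter Nat.Prime
  have hKpos {l : ℕ} (hl : l ∈ primes) : 0 < K l := hK l (Finset.mem_filter.1 hl).2
  refine ⟨1 + ∑ l ∈ primes, K l, by linarith [Finset.sum_nonneg fun l hl => (hKpos hl).le], ?_⟩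
  intro d H hd hH hgen hD B hB
  have hd0 : d ≠ 0 := by lia
  have hl := Nat.minFac_prime (n := d) (by lia)
  have hlD : d.minFac ∈ primes := Finset.mem_filter.2 ⟨Finset.mem_range_succ_iff.2
    ((Nat.minFac_le (by lia)).trans ((le_totalDeg_X_pow_sub_C hd0 H).trans hD)), hl⟩
  have hN := one_le_polyNorm_X_pow_sub_C hd0 H
  have hlog := one_le_log_natCast_add_two hN
  have hKsum : K d.minFac ≤ 1 + ∑ l ∈ primes, K l := by
    linarith [Finset.single_le_sum (fun l hl => (hKpos hl).le) hlD]
  rw [NFB_X_pow_sub_C d H (by linarith)]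
  refine (hcount _ hl hH ((totalDegree_le_totalDeg_X_pow_sub_C hd0 H).trans hD)
    (fun w hw => one_le_natDegree_genericLine hgen hw) hN
    (abs_coeff_le_polyNorm_X_pow_sub_C hd0 H) hB (Finset.filter_subset _ _)
    fun x hx => ?_).trans (by gcongr)
  obtain ⟨y, hy⟩ := (Finset.mem_filter.1 hx).2
  exact ⟨y ^ (d / d.minFac), by rw [hy, ← pow_mul, Nat.div_mul_cancel d.minFac_dvd]⟩

theorem statement0 (n : ℕ) (hn : 2 ≤ n) :
    ∃ e : ℕ, 1 ≤ e ∧ ∀ D : ℕ, ∀ ε : ℝ, 0 < ε → ∃ C : ℝ, 0 < C ∧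
      ∀ (d : ℕ) (H : MvPolynomial (Fin n) ℤ), 2 ≤ d →
        Irreducible (MvPolynomial.map (Int.castRingHom ℚ) H) →
        (¬ ∃ (σ : Matrix (Fin n) (Fin n) ℚ) (I : Set (Fin n)), IsUnit σ.det ∧
            I ≠ Set.univ ∧
            ∀ j ∉ I,
              MvPolynomial.degreeOf j (lsubMv σ (MvPolynomial.map (Int.castRingHom ℚ) H)) = 0) →
        totalDeg (Polynomial.X ^ d - Polynomial.C H) = D →
        ∀ B : ℝ, 1 ≤ B →
          (NFB (Polynomial.X ^ d - Polynomial.C H) B : ℝ) ≤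
            C * Real.log ((polyNorm (Polynomial.X ^ d - Polynomial.C H) : ℝ) + 2) ^ e *
              B ^ ((n : ℝ) - 1 + 1 / ((n : ℝ) + 1) + ε) := by
  refine ⟨1, le_rfl, fun D ε hε => ?_⟩
  obtain ⟨C, hC, hbound⟩ := statement0_general n D hε
  exact ⟨C, hC, fun d H hd hH hgen hD B hB => by
    simpa only [pow_one] using hbound d H hd hH hgen hD.le B hB⟩
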